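/- Let R = k[x₁, …, x_d] localized at the maximal ideal (x₁, …, x_d), where k is an infinite field, and let 𝔪 denote the maximal ideal of R. Let I be an R-ideal of height g with minimal number of generators d + 1 ≥ 2, satisfying G_d and depth R/I^j ≥ dim R/I − j + 1 for 1 ≤ j ≤ d − g. Assume I has a presentation matrix whose entries are linear forms in k[x₁, …, x_d]. Then core(I) = 𝔪·I, and if I is integrally closed then so is core(I). -/

import Mathlib

open IsLocalRing

universe u v

namespace CPU

section Defs

variable {R : Type u} [CommRing R]

/-- The minimal number of generators of a submodule, as an extended natural number. -/
noncomputable def muE {M : Type v} [AddCommGroup M] [Module R M] (N : Submodule R M) : ℕ∞ :=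
  sInf {n : ℕ∞ | ∃ s : Finset M, (s.card : ℕ∞) = n ∧ Submodule.span R (s : Set M) = N}

/-- The Krull dimension of a ring, valued in `WithBot ℕ∞`. -/
noncomputable def rDim (S : Type v) [CommRing S] : WithBot ℕ∞ :=
  ringKrullDim S

/-- `J` is a reduction of `I`. -/
def IsReduction (J I : Ideal R) : Prop :=
  J ≤ I ∧ ∃ r : ℕ, I ^ (r + 1) = J * I ^ r

/-- `J` is a minimal reduction of `I`. -/
def IsMinimalReduction (J I : Ideal R) : Prop :=
  IsReduction J I ∧ ∀ J' : Ideal R, IsReduction J' I → J' ≤ J → J' = J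

/-- The core of an ideal: the intersection of all of its minimal reductions. -/
noncomputable def core (I : Ideal R) : Ideal R :=
  sInf {J : Ideal R | IsMinimalReduction J I}

/-- The reduction number of `I`. -/
noncomputable def reductionNumber (I : Ideal R) : ℕ∞ :=
  sInf {n : ℕ∞ | ∃ r : ℕ, (r : ℕ∞) = n ∧ ∃ J : Ideal R,
    IsMinimalReduction J I ∧ I ^ (r + 1) = J * I ^ r}

/-- `γ(I)`: the least number of minimal reductions whose intersection is the core. -/
noncomputable def gamma (I : Ideal R) : ℕ∞ :=
  sInf {n : ℕ∞ | ∃ t : ℕ, (t : ℕ∞) = n ∧ ∃ Js : Fin t → Ideal R,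
    (∀ i, IsMinimalReduction (Js i) I) ∧ core I = ⨅ i, Js i}

/-- The height of an ideal. -/
noncomputable def ht (I : Ideal R) : WithBot ℕ∞ :=
  ⨅ (p : PrimeSpectrum R) (_ : I ≤ p.asIdeal),
    rDim (Localization.AtPrime p.asIdeal)

/-- The Krull dimension of the special fiber ring of `I`,
i.e. the analytic spread of `I`. -/
noncomputable def fiberDim [IsLocalRing R] (I : Ideal R) : WithBot ℕ∞ :=
  rDim (↥(reesAlgebra I) ⧸
    (Ideal.map (algebraMap R ↥(reesAlgebra I)) (maximalIdeal R)))

/-- The condition `G_s`. -/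
def Gcond (I : Ideal R) (s : ℕ) : Prop :=
  ∀ p : PrimeSpectrum R, I ≤ p.asIdeal →
    rDim (Localization.AtPrime p.asIdeal) < (s : WithBot ℕ∞) →
    (muE (Ideal.map (algebraMap R (Localization.AtPrime p.asIdeal)) I) : WithBot ℕ∞) ≤
      rDim (Localization.AtPrime p.asIdeal)

/-- Depth of a module over a local ring, via lengths of regular sequences in the
maximal ideal. -/
noncomputable def mDepth (R : Type u) [CommRing R] [IsLocalRing R]
    (M : Type v) [AddCommGroup M] [Module R M] : ℕ∞ :=
  sSup {n : ℕ∞ | ∃ rs : List R, (∀ x ∈ rs, x ∈ maximalIdeal R) ∧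
    RingTheory.Sequence.IsRegular M rs ∧ (rs.length : ℕ∞) = n}

/-- Depth of the quotient `R/K` of a local ring `R`. -/
noncomputable def qDepth (R : Type u) [CommRing R] [IsLocalRing R] (K : Ideal R) : ℕ∞ :=
  mDepth R (R ⧸ K)

/-- The socle of `R/K`, for `R` local. -/
noncomputable def socle (R : Type u) [CommRing R] [IsLocalRing R] (K : Ideal R) :
    Ideal (R ⧸ K) :=
  Submodule.colon (⊥ : Ideal (R ⧸ K)) (Ideal.map (Ideal.Quotient.mk K) (maximalIdeal R))

/-- The Cohen–Macaulay type of the quotient `R/K` of a local ring `R`. -/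
noncomputable def qType (R : Type u) [CommRing R] [IsLocalRing R] (K : Ideal R) : ℕ∞ :=
  sInf {n : ℕ∞ | ∃ rs : List R, (∀ x ∈ rs, x ∈ maximalIdeal R) ∧
    RingTheory.Sequence.IsRegular (R ⧸ K) rs ∧ (rs.length : ℕ∞) = qDepth R K ∧
    muE (socle R (K ⊔ Ideal.ofList rs)) = n}

/-- Cohen–Macaulayness for a quotient `R/K` of a local ring `R`. -/
def IsCMQuot (R : Type u) [CommRing R] [IsLocalRing R] (K : Ideal R) : Prop :=
  rDim (R ⧸ K) = (qDepth R K : WithBot ℕ∞)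

/-- A Cohen–Macaulay local ring: depth equals Krull dimension. -/
def IsCMLocalRing (R : Type u) [CommRing R] [IsLocalRing R] : Prop :=
  rDim R = (qDepth R (⊥ : Ideal R) : WithBot ℕ∞)

/-- A Gorenstein local ring: Cohen–Macaulay of type one. -/
def IsGorensteinLocalRing (R : Type u) [CommRing R] [IsLocalRing R] : Prop :=
  IsCMLocalRing R ∧ qType R (⊥ : Ideal R) = 1

/-- Gorensteinness of the quotient ring `R/K` of a local ring. -/
def IsGorQuot (R : Type u) [CommRing R] [IsLocalRing R] (K : Ideal R) : Prop :=
  IsCMQuot R K ∧ qType R K = 1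

/-- A regular local ring: the maximal ideal is generated by `dim R` elements. -/
def IsRegularLocal (R : Type u) [CommRing R] [IsLocalRing R] : Prop :=
  IsNoetherianRing R ∧ (muE (maximalIdeal R) : WithBot ℕ∞) = rDim R

/-- Serre's condition `S₂` for the quotient ring `R/K`. -/
def QuotS2 (K : Ideal R) : Prop :=
  ∀ (q : Ideal R) (hq : q.IsPrime), K ≤ q →
    letI := hq
    min 2 (rDim ((Localization.AtPrime q) ⧸
        (Ideal.map (algebraMap R (Localization.AtPrime q)) K)))
      ≤ (qDepth (Localization.AtPrime q)
          (Ideal.map (algebraMap R (Localization.AtPrime q)) K) : WithBot ℕ∞)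

/-- `K` is an `s`-residual intersection of `I`. -/
def IsResidualIntersection (I K : Ideal R) (s : ℕ) : Prop :=
  K ≠ ⊤ ∧ ht I ≤ (s : WithBot ℕ∞) ∧ (s : WithBot ℕ∞) ≤ ht K ∧
    ∃ a : Ideal R, a ≤ I ∧ (∃ f : Finset R, f.card ≤ s ∧ Ideal.span (f : Set R) = a) ∧
      K = Submodule.colon a I

/-- `K` is a geometric `s`-residual intersection of `I`. -/
def IsGeometricRI (I K : Ideal R) (s : ℕ) : Prop :=
  IsResidualIntersection I K s ∧ (s : WithBot ℕ∞) + 1 ≤ ht (I ⊔ K)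

/-- `I` is weakly `s`-residually `S₂`. -/
def WeaklyResS2 (I : Ideal R) (s : ℕ) : Prop :=
  ∀ i ≤ s, ∀ K : Ideal R, IsGeometricRI I K i → QuotS2 K

/-- The condition `AN_s` for `I`. -/
def ANcond [IsLocalRing R] (I : Ideal R) (s : ℕ) : Prop :=
  ∀ i ≤ s, ∀ K : Ideal R, IsResidualIntersection I K i → IsCMQuot R K

/-- The condition `AN_s⁻` for `I`. -/
def ANminus [IsLocalRing R] (I : Ideal R) (s : ℕ) : Prop :=
  ∀ i ≤ s, ∀ K : Ideal R, IsGeometricRI I K i → IsCMQuot R K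

/-- `I` is universally weakly `s`-residually `S₂`: for every finite set of
variables, the extension of `I` to `R(x₁, …, x_n)` is weakly `s`-residually `S₂`. -/
def UnivWeaklyResS2 [IsLocalRing R] (I : Ideal R) (s : ℕ) : Prop :=
  ∀ (n : ℕ)
    (hP : (Ideal.map (MvPolynomial.C (σ := Fin n)) (maximalIdeal R)).IsPrime),
    letI := hP
    WeaklyResS2 (Ideal.map
      ((algebraMap (MvPolynomial (Fin n) R)
        (Localization.AtPrime
          (Ideal.map (MvPolynomial.C (σ := Fin n)) (maximalIdeal R)))).comp
        (MvPolynomial.C)) I) s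

/-- The `j`-th Fitting ideal of (the module) `I`. -/
noncomputable def fittingIdeal (I : Ideal R) (j : ℕ) : Ideal R :=
  ⨆ (n : ℕ) (π : (Fin n → R) →ₗ[R] R) (_ : LinearMap.range π = I),
    Ideal.span {d : R | ∃ (v : Fin (n - j) → (Fin n → R)) (r : Fin (n - j) → Fin n),
      (∀ k, π (v k) = 0) ∧ d = Matrix.det (Matrix.of fun i k => v k (r i))}

/-- The set `Q(I)` of primes containing `Fitt_ℓ(I)` at which `R` has dimension `ℓ`
and `I` has analytic spread `ℓ`. -/
def QSet [IsLocalRing R] (I : Ideal R) (l : ℕ) : Set (PrimeSpectrum R) :=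
  {p | fittingIdeal I l ≤ p.asIdeal ∧
    rDim (Localization.AtPrime p.asIdeal) = (l : WithBot ℕ∞) ∧
    fiberDim (Ideal.map (algebraMap R (Localization.AtPrime p.asIdeal)) I)
      = (l : WithBot ℕ∞)}

/-- An ideal is integrally closed if it admits no larger ideal of which it is a
reduction. -/
def IsIntClosedIdeal (I : Ideal R) : Prop :=
  ∀ J : Ideal R, IsReduction I J → J = I

/-- A normal ideal: all powers are integrally closed. -/
def IsNormalIdeal (I : Ideal R) : Prop :=
  ∀ j : ℕ, IsIntClosedIdeal (I ^ j)

/-- `φ` is a presentation matrix of the ideal `I` (with `n = μ(I)` rows). -/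
def Presents {n m : ℕ} (φ : Matrix (Fin n) (Fin m) R) (I : Ideal R) : Prop :=
  muE I = (n : ℕ∞) ∧ ∃ π : (Fin n → R) →ₗ[R] R, LinearMap.range π = I ∧
    LinearMap.range (Matrix.toLin' φ) = LinearMap.ker π

/-- The ideal of `t × t` minors of a matrix. -/
noncomputable def minorsIdeal {n m : ℕ} (t : ℕ) (φ : Matrix (Fin n) (Fin m) R) : Ideal R :=
  Ideal.span {d : R | ∃ (r : Fin t → Fin n) (c : Fin t → Fin m),
    d = (φ.submatrix r c).det}

/-- The grade of an ideal: the supremum of lengths of regular sequences contained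
in it. -/
noncomputable def grade (I : Ideal R) : ℕ∞ :=
  sSup {n : ℕ∞ | ∃ rs : List R, (∀ x ∈ rs, x ∈ I) ∧
    RingTheory.Sequence.IsRegular R rs ∧ (rs.length : ℕ∞) = n}

end Defs

/-- `M` has projective dimension at most `n` over `R`. -/
def ProjDimLE (R : Type u) [CommRing R] :
    (n : ℕ) → (M : Type u) → [AddCommGroup M] → [Module R M] → Prop
  | 0, M, _, _ => Module.Projective R M
  | n + 1, M, _, _ => ∃ (k : ℕ) (f : (Fin k → R) →ₗ[R] M), Function.Surjective f ∧
      ProjDimLE R n ↥(LinearMap.ker f)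

section Defs2

variable {R : Type u} [CommRing R]

/-- `M` has projective dimension exactly `n` over `R`. -/
def ProjDimEq (R : Type u) [CommRing R] (M : Type u) [AddCommGroup M] [Module R M]
    (n : ℕ) : Prop :=
  ProjDimLE R n M ∧ ∀ m : ℕ, ProjDimLE R m M → n ≤ m

/-- A perfect ideal: the projective dimension of `R/I` equals the grade of `I`. -/
def IsPerfectIdeal (I : Ideal R) : Prop :=
  ∃ g : ℕ, grade I = (g : ℕ∞) ∧ ProjDimEq R (R ⧸ I) g

/-- The multiplicative set which is the complement of the union of the associated
primes of `R/H`. -/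
def assComplement (H : Ideal R) : Submonoid R where
  carrier := {r : R | ∀ p ∈ associatedPrimes R (R ⧸ H), r ∉ p}
  one_mem' := fun p hp => (Ideal.ne_top_iff_one p).mp hp.1.ne_top
  mul_mem' := fun {a b} ha hb p hp hab =>
    (hp.1.mem_or_mem hab).elim (ha p hp) (hb p hp)

/-- The `j`-th symbolic power of `H`. -/
noncomputable def symbolicPower (H : Ideal R) (j : ℕ) : Ideal R :=
  Ideal.comap (algebraMap R (Localization (assComplement H)))
    (Ideal.map (algebraMap R (Localization (assComplement H))) (H ^ j))

/-- Serre's condition `S₂` for a module. -/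
def ModuleS2 (S : Type u) [CommRing S] (M : Type v) [AddCommGroup M] [Module S M] : Prop :=
  ∀ (q : Ideal S) (hq : q.IsPrime),
    letI := hq
    min 2 (rDim ((Localization.AtPrime q) ⧸
        (Module.annihilator (Localization.AtPrime q) (LocalizedModule q.primeCompl M))))
      ≤ (mDepth (Localization.AtPrime q) (LocalizedModule q.primeCompl M) : WithBot ℕ∞)

/-- `M` is a maximal Cohen–Macaulay `S`-module. -/
def IsMCM (S : Type u) [CommRing S] (M : Type v) [AddCommGroup M] [Module S M] : Prop :=
  ∀ (q : Ideal S) (hq : q.IsMaximal),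
    letI := hq.isPrime
    (mDepth (Localization.AtPrime q) (LocalizedModule q.primeCompl M) : WithBot ℕ∞) =
      rDim (Localization.AtPrime q)

end Defs2


section Reg
open scoped Pointwise

/-- exchange: an element outside `𝔪²` can be part of a minimal generating set. -/
lemma exists_gens_of_notMem_sq {A : Type u} [CommRing A] [IsLocalRing A] {x : A} {n : ℕ}
    (y : Fin (n + 1) → A) (hy : Ideal.span (Set.range y) = maximalIdeal A)
    (hx : x ∈ maximalIdeal A) (hx2 : x ∉ maximalIdeal A ^ 2) :
    ∃ z : Fin n → A, Ideal.span (insert x (Set.range z)) = maximalIdeal A := by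
  rw [← hy] at hx
  obtain ⟨c, hc⟩ := (Submodule.mem_span_range_iff_exists_fun A).1 hx
  have : ∃ i, c i ∉ maximalIdeal A := by
    by_contra h
    push Not at h
    apply hx2
    rw [← hc, pow_two]
    refine Ideal.sum_mem _ fun i _ => ?_
    refine Ideal.mul_mem_mul (h i) ?_
    rw [← hy]; exact Ideal.subset_span ⟨i, rfl⟩
  obtain ⟨i, hi⟩ := this
  have hu : IsUnit (c i) := by simpa using hi
  refine ⟨fun l => y (i.succAbove l), le_antisymm ?_ ?_⟩
  · rw [Ideal.span_le]
    rintro w (rfl | ⟨l, rfl⟩)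
    · rw [← hy]; exact hx
    · rw [← hy]; exact Ideal.subset_span ⟨_, rfl⟩
  · rw [← hy, Ideal.span_le]
    rintro _ ⟨j, rfl⟩
    rcases Fin.eq_self_or_eq_succAbove i j with rfl | ⟨l, rfl⟩
    · obtain ⟨u, hu⟩ := hu
      have h1 : y j = ↑u⁻¹ * (x - ∑ l, c (j.succAbove l) * y (j.succAbove l)) := by
        rw [← hc, Fin.sum_univ_succAbove _ j]
        simp [← hu]
      rw [h1]
      refine Ideal.mul_mem_left _ _ (Ideal.sub_mem _ (Ideal.subset_span (Set.mem_insert _ _)) ?_)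
      exact Ideal.sum_mem _ fun l _ => Ideal.mul_mem_left _ _
        (Ideal.subset_span (Set.mem_insert_of_mem _ ⟨l, rfl⟩))
    · exact Ideal.subset_span (Set.mem_insert_of_mem _ ⟨l, rfl⟩)

lemma regular_quot {A : Type u} [CommRing A] [IsRegularLocalRing A] {n : ℕ}
    (hn : ringKrullDim A = (n + 1 : ℕ)) {x : A} (hx : x ∈ maximalIdeal A)
    (hx2 : x ∉ maximalIdeal A ^ 2) :
    IsRegularLocalRing (A ⧸ Ideal.span {x}) ∧ ringKrullDim (A ⧸ Ideal.span {x}) = n := by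
  have hxt : Ideal.span {x} ≠ ⊤ := by
    intro h
    exact Ideal.span_singleton_ne_top (by simpa using hx) h
  have : Nontrivial (A ⧸ Ideal.span {x}) := Ideal.Quotient.nontrivial_iff.mpr hxt
  have : IsLocalRing (A ⧸ Ideal.span {x}) :=
    IsLocalRing.of_surjective' _ Ideal.Quotient.mk_surjective
  have hfr : (maximalIdeal A).spanFinrank = n + 1 := by
    have := IsRegularLocalRing.spanFinrank_maximalIdeal (R := A)
    rw [hn] at this
    exact_mod_cast this
  obtain ⟨s, hs, hs2⟩ := Submodule.FG.exists_span_finset_card_eq_spanFinrank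
    (IsNoetherian.noetherian (maximalIdeal A))
  rw [hfr] at hs
  let e := (s.equivFinOfCardEq hs).symm
  obtain ⟨z, hz⟩ := exists_gens_of_notMem_sq (x := x) (fun i => (e i : A)) (by
    rw [← hs2]
    congr 1
    ext w
    simp only [Set.mem_range]
    constructor
    · rintro ⟨i, rfl⟩; exact (e i).2
    · intro hw; exact ⟨e.symm ⟨w, hw⟩, by simp⟩) hx hx2
  have hmax : maximalIdeal (A ⧸ Ideal.span {x}) = Ideal.span
      (Set.range fun i => Ideal.Quotient.mk (Ideal.span {x}) (z i)) := by
    have h1 : maximalIdeal (A ⧸ Ideal.span {x}) =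
        (maximalIdeal A).map (Ideal.Quotient.mk (Ideal.span {x})) := by
      have := (IsLocalRing.local_hom_TFAE (Ideal.Quotient.mk (Ideal.span {x}))).out 0 4
      have h2 : (maximalIdeal (A ⧸ Ideal.span {x})).comap (Ideal.Quotient.mk (Ideal.span {x})) =
          maximalIdeal A := by
        apply IsLocalRing.eq_maximalIdeal
        exact Ideal.comap_isMaximal_of_surjective _ Ideal.Quotient.mk_surjective
      rw [← h2, Ideal.map_comap_of_surjective _ Ideal.Quotient.mk_surjective]
    rw [h1, ← hz, Ideal.map_span]
    apply le_antisymm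
    · rw [Ideal.span_le]
      rintro _ ⟨w, (rfl | ⟨i, rfl⟩), rfl⟩
      · have : Ideal.Quotient.mk (Ideal.span {w}) w = 0 :=
          Ideal.Quotient.eq_zero_iff_mem.2 (Ideal.mem_span_singleton_self w)
        rw [this]; exact zero_mem _
      · exact Ideal.subset_span ⟨i, rfl⟩
    · apply Ideal.span_mono
      rintro _ ⟨i, rfl⟩
      exact ⟨z i, Or.inr ⟨i, rfl⟩, rfl⟩
  have hle : (maximalIdeal (A ⧸ Ideal.span {x})).spanFinrank ≤ n := by
    rw [hmax]
    refine (Submodule.spanFinrank_span_le_ncard_of_finite (Set.finite_range _)).trans ?_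
    rw [← Set.image_univ]
    refine (Set.ncard_image_le (Set.toFinite _)).trans ?_
    simp
  have hdim : (n : WithBot ℕ∞) ≤ ringKrullDim (A ⧸ Ideal.span {x}) := by
    have h1 := ringKrullDim_le_ringKrullDim_quotSMulTop_succ hx
    have h2 : x • (⊤ : Ideal A) = Ideal.span {x} := by
      rw [← Submodule.ideal_span_singleton_smul]; simp
    rw [h2, hn] at h1
    push_cast at h1
    exact ENat.WithBot.add_le_add_natCast_right_iff.mp h1
  have hreg : IsRegularLocalRing (A ⧸ Ideal.span {x}) := by
    apply IsRegularLocalRing.of_spanFinrank_maximalIdeal_le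
    refine le_trans ?_ hdim
    exact_mod_cast hle
  refine ⟨hreg, le_antisymm ?_ hdim⟩
  rw [← IsRegularLocalRing.spanFinrank_maximalIdeal]
  exact_mod_cast hle

lemma maximalIdeal_not_le_sq {A : Type u} [CommRing A] [IsRegularLocalRing A] {n : ℕ}
    (hn : ringKrullDim A = (n + 1 : ℕ)) : ¬ maximalIdeal A ≤ maximalIdeal A ^ 2 := by
  intro h
  have h0 : maximalIdeal A = ⊥ := by
    apply Submodule.eq_bot_of_le_smul_of_le_jacobson_bot (maximalIdeal A) _
      (IsNoetherian.noetherian _) (by rwa [smul_eq_mul, ← pow_two])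
    exact (IsLocalRing.maximalIdeal_le_jacobson _)
  have := IsRegularLocalRing.spanFinrank_maximalIdeal (R := A)
  rw [h0, hn] at this
  simp at this
  have h' : ((0:ℕ) : WithBot ℕ∞) = ((n+1 : ℕ): WithBot ℕ∞) := by exact_mod_cast this
  have := Nat.cast_injective (R := WithBot ℕ∞) h'
  omega

theorem isDomain_of_regular (n : ℕ) : ∀ (A : Type u) [CommRing A] [IsRegularLocalRing A],
    ringKrullDim A = n → IsDomain A := by
  induction n with
  | zero =>
    intro A _ _ h
    have := IsRegularLocalRing.spanFinrank_maximalIdeal (R := A)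
    rw [h] at this
    have h1 : (maximalIdeal A).spanFinrank = 0 := by exact_mod_cast this
    rw [Submodule.spanFinrank_eq_zero_iff_eq_bot (IsNoetherian.noetherian _)] at h1
    exact (IsLocalRing.isField_iff_maximalIdeal_eq.2 h1).isDomain
  | succ n ih =>
    intro A _ _ h
    have hfin := minimalPrimes.finite_of_isNoetherianRing A
    have : ∃ x ∈ maximalIdeal A, x ∉ maximalIdeal A ^ 2 ∧ ∀ p ∈ minimalPrimes A, x ∉ p := by
      classical
      by_contra hcon
      push Not at hcon
      have hsub : ((maximalIdeal A : Ideal A) : Set A) ⊆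
          ⋃ i ∈ (↑(insert (maximalIdeal A ^ 2) hfin.toFinset) : Set (Ideal A)), (i : Set A) := by
        intro x hx
        simp only [Set.mem_iUnion]
        by_cases h2 : x ∈ maximalIdeal A ^ 2
        · exact ⟨_, by simp, h2⟩
        · obtain ⟨p, hp, hxp⟩ := hcon x hx h2
          exact ⟨p, by simp [hp], hxp⟩
      have hsub := (Ideal.subset_union_prime (f := id) (maximalIdeal A ^ 2) (maximalIdeal A ^ 2)
        ?_).1 hsub
      · obtain ⟨p, hp, hle⟩ := hsub
        rcases Finset.mem_insert.1 hp with rfl | hp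
        · exact maximalIdeal_not_le_sq h hle
        · have hp' : p ∈ minimalPrimes A := by simpa using hp
          have hpp : p.IsPrime := Ideal.IsMinimalPrime.isPrime hp'
          have : p = maximalIdeal A := le_antisymm (IsLocalRing.le_maximalIdeal hpp.ne_top) hle
          have h0 : p.height = 0 := by
            rwa [Ideal.height_eq_zero_iff]
          rw [this] at h0
          have := IsLocalRing.maximalIdeal_height_eq_ringKrullDim (R := A)
          rw [h0, h] at this
          have h' : ((0:ℕ) : WithBot ℕ∞) = ((n+1 : ℕ): WithBot ℕ∞) := by exact_mod_cast this
          have := Nat.cast_injective (R := WithBot ℕ∞) h'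
          omega
      · intro i hi h1 _
        have : i ∈ minimalPrimes A := by simpa [h1] using hi
        exact Ideal.IsMinimalPrime.isPrime this
    obtain ⟨x, hx, hx2, hxp⟩ := this
    obtain ⟨hr, hd⟩ := regular_quot h hx hx2
    have hdom := ih _ hd
    have hpr : (Ideal.span {x}).IsPrime := (Ideal.Quotient.isDomain_iff_prime _).1 hdom
    obtain ⟨Q, hQ, hQx⟩ := Ideal.exists_minimalPrimes_le (I := (⊥ : Ideal A)) (J := Ideal.span {x}) bot_le
    have hQp : Q.IsPrime := Ideal.IsMinimalPrime.isPrime hQ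
    have hxQ := hxp Q hQ
    have hQ0 : Q = ⊥ := by
      apply Submodule.eq_bot_of_le_smul_of_le_jacobson_bot (Ideal.span {x}) _
        (IsNoetherian.noetherian _)
      · intro z hz
        obtain ⟨w, rfl⟩ := Ideal.mem_span_singleton'.1 (hQx hz)
        have : w ∈ Q := (hQp.mem_or_mem hz).resolve_right hxQ
        rw [mul_comm]
        exact Ideal.mul_mem_mul (Ideal.mem_span_singleton_self x) this
      · refine le_trans ?_ (IsLocalRing.maximalIdeal_le_jacobson _)
        rwa [Ideal.span_singleton_le_iff_mem]
    rw [hQ0] at hQp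
    exact IsDomain.of_bot_isPrime A

theorem exists_regular_seq (n : ℕ) : ∀ (A : Type u) [CommRing A] [IsRegularLocalRing A],
    ringKrullDim A = n → ∃ rs : List A, RingTheory.Sequence.IsWeaklyRegular A rs ∧
      Ideal.ofList rs = maximalIdeal A ∧ rs.length = n := by
  induction n with
  | zero =>
    intro A _ _ h
    have := IsRegularLocalRing.spanFinrank_maximalIdeal (R := A)
    rw [h] at this
    have h1 : (maximalIdeal A).spanFinrank = 0 := by exact_mod_cast this
    rw [Submodule.spanFinrank_eq_zero_iff_eq_bot (IsNoetherian.noetherian _)] at h1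
    exact ⟨[], by simp, by simp [h1], rfl⟩
  | succ n ih =>
    intro A _ _ h
    have := isDomain_of_regular _ A h
    obtain ⟨x, hx, hx2⟩ := SetLike.not_le_iff_exists.1 (maximalIdeal_not_le_sq h)
    obtain ⟨hr, hd⟩ := regular_quot h hx hx2
    obtain ⟨rs, hrs, hmax, hlen⟩ := ih _ hd
    obtain ⟨rs', rfl⟩ := List.map_surjective_iff.2
      (Ideal.Quotient.mk_surjective (I := Ideal.span {x})) rs
    refine ⟨x :: rs', ?_, ?_, by simpa using hlen⟩
    · apply RingTheory.Sequence.IsWeaklyRegular.cons'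
      · intro a b hab
        have hx0 : x ≠ 0 := by rintro rfl; exact hx2 (zero_mem _)
        simpa [hx0] using hab
      · have e : (A ⧸ Ideal.span {x}) ≃ₗ[A ⧸ Ideal.span {x}] QuotSMulTop x A := by
          have h2 : x • (⊤ : Ideal A) = Ideal.span {x} := by
            rw [← Submodule.ideal_span_singleton_smul]; simp
          let f := (Submodule.quotEquivOfEq _ _ h2).symm
          exact LinearEquiv.ofBijective
            { toFun := f
              map_add' := f.map_add
              map_smul' := fun a b => by
                obtain ⟨a, rfl⟩ := Ideal.Quotient.mk_surjective a
                exact f.map_smul a b } f.bijective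
        exact (e.isWeaklyRegular_congr _).1 hrs
    · rw [Ideal.ofList_cons]
      apply le_antisymm
      · rw [sup_le_iff, Ideal.span_singleton_le_iff_mem]
        refine ⟨hx, ?_⟩
        have : (Ideal.ofList rs').map (Ideal.Quotient.mk (Ideal.span {x})) ≠ ⊤ := by
          rw [Ideal.map_ofList, hmax]; exact (IsLocalRing.maximalIdeal.isMaximal _).ne_top
        apply IsLocalRing.le_maximalIdeal
        intro h; rw [h, Ideal.map_top] at this; exact this rfl
      · have h2 : (maximalIdeal (A ⧸ Ideal.span {x})).comap (Ideal.Quotient.mk (Ideal.span {x})) =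
          maximalIdeal A := by
          apply IsLocalRing.eq_maximalIdeal
          exact Ideal.comap_isMaximal_of_surjective _ Ideal.Quotient.mk_surjective
        rw [← h2, ← hmax, ← Ideal.map_ofList, Ideal.comap_map_of_surjective' _ Ideal.Quotient.mk_surjective,
          Ideal.mk_ker, sup_comm]

end Reg


section PdBasic
open CategoryTheory

/-- `M` has projective dimension `< n`. -/
def PdLT (A : Type u) [CommRing A] (M : Type u) [AddCommGroup M] [Module A M] (n : ℕ) : Prop :=
  HasProjectiveDimensionLT (ModuleCat.of A M) n

variable {A : Type u} [CommRing A]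

lemma PdLT.equiv {M N : Type u} [AddCommGroup M] [Module A M] [AddCommGroup N] [Module A N]
    (e : M ≃ₗ[A] N) {n : ℕ} (h : PdLT A M n) : PdLT A N n := by
  unfold PdLT at *
  exact hasProjectiveDimensionLT_of_iso e.toModuleIso n

lemma PdLT.mono {M : Type u} [AddCommGroup M] [Module A M] {n m : ℕ} (hnm : n ≤ m)
    (h : PdLT A M n) : PdLT A M m := by
  unfold PdLT at *
  exact hasProjectiveDimensionLT_of_ge _ n m hnm

lemma PdLT.of_projective (M : Type u) [AddCommGroup M] [Module A M] [Module.Projective A M] :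
    PdLT A M 1 := by
  unfold PdLT
  rw [← projective_iff_hasProjectiveDimensionLT_one, ← IsProjective.iff_projective]
  infer_instance

lemma PdLT.projective {M : Type u} [AddCommGroup M] [Module A M] (h : PdLT A M 1) :
    Module.Projective A M := by
  unfold PdLT at h
  rw [← projective_iff_hasProjectiveDimensionLT_one, ← IsProjective.iff_projective] at h
  exact h

lemma PdLT.of_subsingleton (M : Type u) [AddCommGroup M] [Module A M] [Subsingleton M] (n : ℕ) :
    PdLT A M n := by
  have : PdLT A M 0 := by
    unfold PdLT
    rw [hasProjectiveDimensionLT_zero_iff_isZero, ModuleCat.isZero_iff_subsingleton]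
    infer_instance
  exact this.mono (Nat.zero_le _)

lemma pdLT_zero_iff (M : Type u) [AddCommGroup M] [Module A M] :
    PdLT A M 0 ↔ Subsingleton M := by
  unfold PdLT
  rw [hasProjectiveDimensionLT_zero_iff_isZero, ModuleCat.isZero_iff_subsingleton]

variable {M N P : Type u} [AddCommGroup M] [Module A M] [AddCommGroup N] [Module A N]
  [AddCommGroup P] [Module A P]

/-- The short complex of module maps. -/
abbrev mkSC (f : M →ₗ[A] N) (g : N →ₗ[A] P) (h : Function.Exact f g) :
    ShortComplex (ModuleCat.{u} A) where
  f := ModuleCat.ofHom f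
  g := ModuleCat.ofHom g
  zero := by ext x; exact h.apply_apply_eq_zero x

lemma mkSC_shortExact {f : M →ₗ[A] N} {g : N →ₗ[A] P} (hf : Function.Injective f)
    (hg : Function.Surjective g) (h : Function.Exact f g) : (mkSC f g h).ShortExact where
  exact := (ShortComplex.ShortExact.moduleCat_exact_iff_function_exact _).mpr h
  mono_f := (ModuleCat.mono_iff_injective _).mpr hf
  epi_g := (ModuleCat.epi_iff_surjective _).mpr hg

variable {f : M →ₗ[A] N} {g : N →ₗ[A] P} 

lemma PdLT.X1 (hf : Function.Injective f)
    (hg : Function.Surjective g) (h : Function.Exact f g) {n : ℕ} (h2 : PdLT A N n)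
    (h3 : PdLT A P (n+1)) : PdLT A M n :=
  (mkSC_shortExact hf hg h).hasProjectiveDimensionLT_X₁ n h2 h3

lemma PdLT.X2 (hf : Function.Injective f)
    (hg : Function.Surjective g) (h : Function.Exact f g) {n : ℕ} (h2 : PdLT A M n)
    (h3 : PdLT A P n) : PdLT A N n :=
  (mkSC_shortExact hf hg h).hasProjectiveDimensionLT_X₂ n h2 h3

lemma PdLT.X3 (hf : Function.Injective f)
    (hg : Function.Surjective g) (h : Function.Exact f g) {n : ℕ} (h1 : PdLT A M n)
    (h2 : PdLT A N (n+1)) : PdLT A P (n+1) :=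
  (mkSC_shortExact hf hg h).hasProjectiveDimensionLT_X₃ n h1 h2

end PdBasic

section Syz
open RingTheory.Sequence
open scoped Pointwise

variable {A : Type u} [CommRing A]

lemma syz_regular (x : A) (rs : List A) : ∀ {N F M : Type u} [AddCommGroup M] [Module A M]
    [AddCommGroup N] [Module A N] [AddCommGroup F] [Module A F]
    (f : N →ₗ[A] F) (g : F →ₗ[A] M), Function.Injective f → Function.Surjective g →
    Function.Exact f g → IsWeaklyRegular F (rs ++ [x]) → IsWeaklyRegular M rs →
    IsWeaklyRegular N (rs ++ [x]) := by
  induction rs with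
  | nil =>
    intro N F M _ _ _ _ _ _ f g hf hg hfg h1 h2
    simp only [List.nil_append, isWeaklyRegular_cons_iff, ] at h1 ⊢
    refine ⟨h1.1.of_injective f hf, IsWeaklyRegular.nil _ _⟩
  | cons r rs ih =>
    intro N F M _ _ _ _ _ _ f g hf hg hfg h1 h2
    simp only [List.cons_append, isWeaklyRegular_cons_iff] at h1 h2 ⊢
    refine ⟨h1.1.of_injective f hf, ?_⟩
    refine ih (QuotSMulTop.map r f) (QuotSMulTop.map r g) ?_ (QuotSMulTop.map_surjective r hg)
      (QuotSMulTop.map_exact r hfg hg) h1.2 h2.2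
    have h0 : Function.Exact (0 : PUnit.{u+1} →ₗ[A] N) f := by
      rw [LinearMap.exact_zero_iff_injective]; exact hf
    have := QuotSMulTop.map_first_exact_on_four_term_exact_of_isSMulRegular_last h0 hfg h2.1
    rw [injective_iff_map_eq_zero]
    intro a ha
    obtain ⟨b, hb⟩ := (this a).1 ha
    rw [← hb]
    obtain ⟨b', rfl⟩ := Submodule.Quotient.mk_surjective _ b
    rw [QuotSMulTop.map_apply_mk]; simp

end Syz

section GlDim
open CategoryTheory RingTheory.Sequence
variable {A : Type u} [CommRing A] [IsLocalRing A] [IsNoetherianRing A]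

lemma pdLT_of_quot {M : Type u} [AddCommGroup M] [Module A M] [Module.Finite A M]
    (rs : List A) (reg : IsWeaklyRegular M rs) (mem : ∀ r ∈ rs, r ∈ maximalIdeal A) (n : ℕ)
    (h : PdLT A (M ⧸ Ideal.ofList rs • (⊤ : Submodule A M)) (rs.length + n)) : PdLT A M n := by
  rcases subsingleton_or_nontrivial M with hM | hM
  · exact PdLT.of_subsingleton M n
  have h1 := ModuleCat.projectiveDimension_quotient_eq_add_length_of_isWeaklyRegular
    (ModuleCat.of A M) rs reg mem
  unfold PdLT at *
  rw [← projectiveDimension_lt_iff] at *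
  have h2 := h1.symm.trans_lt h
  by_contra hc
  push Not at hc
  have : ((rs.length + n : ℕ) : WithBot ℕ∞) ≤ projectiveDimension (ModuleCat.of A M) + rs.length := by
    rw [Nat.cast_add, add_comm]
    gcongr
  exact absurd h2 (not_lt.2 this)

lemma not_pdLT_quot {M : Type u} [AddCommGroup M] [Module A M] [Module.Finite A M] [Nontrivial M]
    (rs : List A) (reg : IsWeaklyRegular M rs) (mem : ∀ r ∈ rs, r ∈ maximalIdeal A)  :
    ¬ PdLT A (M ⧸ Ideal.ofList rs • (⊤ : Submodule A M)) (rs.length) := by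
  intro h
  have := pdLT_of_quot rs reg mem 0 h
  rw [pdLT_zero_iff] at this
  exact not_subsingleton M this

lemma pdLT_quot {M : Type u} [AddCommGroup M] [Module A M] [Module.Finite A M]
    (rs : List A) (reg : IsWeaklyRegular M rs) (mem : ∀ r ∈ rs, r ∈ maximalIdeal A) (n : ℕ)
    (h : PdLT A M (n+1)) :
    PdLT A (M ⧸ Ideal.ofList rs • (⊤ : Submodule A M)) (rs.length + n + 1) := by
  rcases subsingleton_or_nontrivial M with hM | hM
  · exact PdLT.of_subsingleton _ _
  have h1 := ModuleCat.projectiveDimension_quotient_eq_add_length_of_isWeaklyRegular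
    (ModuleCat.of A M) rs reg mem
  unfold PdLT at *
  change HasProjectiveDimensionLE _ _
  rw [← projectiveDimension_le_iff] at *
  rw [h1]
  have : HasProjectiveDimensionLE (ModuleCat.of A M) n := h
  rw [← projectiveDimension_le_iff] at this
  push_cast
  rw [add_comm (rs.length : WithBot ℕ∞)]
  gcongr

/-- residue field has pd exactly s. -/
lemma pd_residue (X : List A) (reg : IsWeaklyRegular A X) (hX : Ideal.ofList X = maximalIdeal A) :
    PdLT A (A ⧸ maximalIdeal A) (X.length + 1) ∧ ¬ PdLT A (A ⧸ maximalIdeal A) X.length := by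
  have mem : ∀ r ∈ X, r ∈ maximalIdeal A := by
    intro r hr; rw [← hX]; exact Ideal.subset_span hr
  have e : (A ⧸ Ideal.ofList X • (⊤ : Submodule A A)) ≃ₗ[A] (A ⧸ maximalIdeal A) :=
    Submodule.quotEquivOfEq _ _ (by rw [hX]; simp)
  refine ⟨(pdLT_quot (M := A) X reg mem 0 (PdLT.of_projective A)).equiv e, fun h => ?_⟩
  exact not_pdLT_quot (M := A) X reg mem (h.equiv e.symm)

lemma pdLT_of_killed (X : List A) (reg : IsWeaklyRegular A X)
    (hX : Ideal.ofList X = maximalIdeal A) {M : Type u} [AddCommGroup M] [Module A M]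
    [hM : Module.Finite A M] (hk : ∀ x ∈ maximalIdeal A, ∀ m : M, x • m = 0) :
    PdLT A M (X.length + 1) := by
  revert hk
  induction hM using IsNoetherianRing.induction_on_isQuotientEquivQuotientPrime A with
  | subsingleton N => intro _; exact PdLT.of_subsingleton _ _
  | quotient N p e =>
    intro hk
    have : p.1 = maximalIdeal A := by
      apply le_antisymm (IsLocalRing.le_maximalIdeal p.2.ne_top)
      intro x hx
      have := congrArg e (hk x hx (e.symm 1))
      rw [map_smul, e.apply_symm_apply, map_zero] at this
      rw [← Ideal.Quotient.eq_zero_iff_mem]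
      rw [Algebra.smul_def, mul_one] at this
      exact this
    refine (pd_residue X reg hX).1.equiv (?_ : _ ≃ₗ[A] N)
    exact (Submodule.quotEquivOfEq _ _ this.symm).trans e.symm
  | exact N₁ N₂ N₃ f g hf hg hfg h1 h3 =>
    intro hk
    refine PdLT.X2 hf hg hfg (h1 fun x hx m => hf ?_) (h3 fun x hx m => ?_)
    · rw [map_smul, hk x hx, map_zero]
    · obtain ⟨m, rfl⟩ := hg m
      rw [← map_smul, hk x hx, map_zero]

lemma weaklyRegular_pi {n : ℕ} (X : List A) (reg : IsWeaklyRegular A X) :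
    IsWeaklyRegular (Fin n → A) X := by
  have := IsWeaklyRegular.of_flat (S := Fin n → A) reg
  rwa [isWeaklyRegular_map_algebraMap_iff] at this

lemma pdLT_of_weaklyRegular_take (X : List A) (reg : IsWeaklyRegular A X)
    (hX : Ideal.ofList X = maximalIdeal A) (c : ℕ) (hc : c ≤ X.length) :
    ∀ (M : Type u) [AddCommGroup M] [Module A M]
    [Module.Finite A M], IsWeaklyRegular M (X.take (X.length - c)) → PdLT A M (c + 1) := by
  have mem : ∀ r ∈ X, r ∈ maximalIdeal A := by
    intro r hr; rw [← hX]; exact Ideal.subset_span hr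
  induction c with
  | zero =>
    intro M _ _ _ h
    simp only [Nat.sub_zero, List.take_length] at h
    refine pdLT_of_quot X h mem 1 (pdLT_of_killed X reg hX ?_)
    intro x hx m
    obtain ⟨m, rfl⟩ := Submodule.Quotient.mk_surjective _ m
    rw [← Submodule.Quotient.mk_smul, Submodule.Quotient.mk_eq_zero, hX]
    exact Submodule.smul_mem_smul hx trivial
  | succ c ih =>
    intro M _ _ _ h
    obtain ⟨n, f, hf⟩ := Module.Finite.exists_fin' A M
    have hex : Function.Exact (LinearMap.ker f).subtype f := LinearMap.exact_subtype_ker_map f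
    refine PdLT.X3 (Submodule.injective_subtype _) hf hex (ih (by omega) _ ?_)
      ((PdLT.of_projective _).mono (by omega))
    have e : X.take (X.length - c) = X.take (X.length - (c+1)) ++ [X[X.length - (c+1)]'(by omega)] := by
      have := List.take_append_getElem (l := X) (i := X.length - (c+1)) (by omega)
      rw [this]; congr 1; omega
    rw [e]
    refine syz_regular _ _ _ f (Submodule.injective_subtype _) hf hex ?_ h
    rw [← e]
    have := weaklyRegular_pi (n := n) X reg
    rw [← List.take_append_drop (X.length - c) X, isWeaklyRegular_append_iff] at this
    exact this.1

lemma glDim (X : List A) (reg : IsWeaklyRegular A X)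
    (hX : Ideal.ofList X = maximalIdeal A) (M : Type u) [AddCommGroup M] [Module A M]
    [Module.Finite A M] : PdLT A M (X.length + 1) := by
  refine pdLT_of_weaklyRegular_take X reg hX X.length le_rfl M ?_
  simp

/-- Auslander–Buchsbaum inequality -/
lemma pdLT_of_regular (X : List A) (reg : IsWeaklyRegular A X)
    (hX : Ideal.ofList X = maximalIdeal A) (M : Type u) [AddCommGroup M] [Module A M]
    [Module.Finite A M] (rs : List A) (hrs : IsWeaklyRegular M rs)
    (mem : ∀ r ∈ rs, r ∈ maximalIdeal A) (n : ℕ) (hn : X.length + 1 ≤ rs.length + n) :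
    PdLT A M n :=
  pdLT_of_quot rs hrs mem n ((glDim X reg hX _).mono hn)

end GlDim


section F1
open CategoryTheory RingTheory.Sequence

lemma F1_local {A : Type u} [CommRing A] [IsRegularLocalRing A] {s : ℕ} (hs : ringKrullDim A = s)
    {M : Type u} [AddCommGroup M] [Module A M] [Module.Finite A M] (h : PdLT A M s) (y : M)
    (hy : ∀ x ∈ maximalIdeal A, x • y = 0) : y = 0 := by
  by_contra hne
  obtain ⟨X, reg, hX, hlen⟩ := exists_regular_seq s A hs
  have h1 := glDim X reg hX (M ⧸ (A ∙ y))
  rw [hlen] at h1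
  have h2 : PdLT A (A ∙ y) s := PdLT.X1 (f := (A ∙ y).subtype) (g := (A ∙ y).mkQ)
    (Submodule.injective_subtype _) (Submodule.mkQ_surjective _)
    (LinearMap.exact_subtype_mkQ _) h h1
  have h3 := (pd_residue X reg hX).2
  rw [hlen] at h3
  apply h3
  have hk : LinearMap.ker (LinearMap.toSpanSingleton A M y) = maximalIdeal A := by
    symm
    refine Ideal.IsMaximal.eq_of_le (maximalIdeal.isMaximal A) ?_ ?_
    · rw [Ideal.ne_top_iff_one]; simpa using hne
    · intro x hx; simpa using hy x hx
  have e1 := (LinearMap.toSpanSingleton A M y).quotKerEquivRange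
  have e2 : (LinearMap.range (LinearMap.toSpanSingleton A M y)) ≃ₗ[A] (A ∙ y) :=
    LinearEquiv.ofEq _ _ (by rw [← LinearMap.span_singleton_eq_range])
  have e3 : (A ⧸ maximalIdeal A) ≃ₗ[A] (A ⧸ LinearMap.ker (LinearMap.toSpanSingleton A M y)) :=
    Submodule.quotEquivOfEq _ _ hk.symm
  exact h2.equiv ((e3.trans e1).trans e2).symm

lemma PdLT.localization {A : Type u} [CommRing A] {M : Type u} [AddCommGroup M] [Module A M]
    (S : Submonoid A) {n : ℕ} (h : PdLT A M (n+1)) :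
    PdLT (Localization S) (LocalizedModule S M) (n+1) := by
  have h' : HasProjectiveDimensionLE (ModuleCat.of A M) n := h
  have := ModuleCat.localizedModule_hasProjectiveDimensionLE n S (ModuleCat.of A M)
  have h2 : PdLT (Localization S) (Shrink.{u} (LocalizedModule S M)) (n+1) := this
  exact h2.equiv (Shrink.linearEquiv _ _)

lemma F1 {A : Type u} [CommRing A] [IsRegularRing A] {n : ℕ}
    {M : Type u} [AddCommGroup M] [Module A M] [Module.Finite A M] (h : PdLT A M n) (y : M)
    (p : Ideal A) [hp : p.IsPrime]
    (hy : ∀ x : A, x • y = 0 ↔ x ∈ p) : p.height < n := by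
  by_contra hc
  push Not at hc
  rcases n with _ | n
  · rw [pdLT_zero_iff] at h
    exact hp.ne_top ((Ideal.eq_top_iff_one _).2 ((hy 1).1 (Subsingleton.elim _ _)))
  have hfin : p.height ≠ ⊤ := Ideal.height_ne_top hp.ne_top
  obtain ⟨s, hs⟩ := ENat.ne_top_iff_exists.1 hfin
  rw [← hs] at hc
  have hc' : n + 1 ≤ s := by exact_mod_cast hc
  have hd : ringKrullDim (Localization.AtPrime p) = s := by
    rw [IsLocalization.AtPrime.ringKrullDim_eq_height p, ← hs]; rfl
  have h2 := (h.localization p.primeCompl).mono hc'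
  have hfinm : Module.Finite (Localization.AtPrime p) (LocalizedModule p.primeCompl M) :=
    Module.Finite.of_isLocalizedModule p.primeCompl (LocalizedModule.mkLinearMap p.primeCompl M)
  have h3 := F1_local hd h2 (LocalizedModule.mk y 1) ?_
  · have : LocalizedModule.mkLinearMap p.primeCompl M y = 0 := h3
    rw [IsLocalizedModule.eq_zero_iff p.primeCompl] at this
    obtain ⟨c, hc⟩ := this
    exact c.2 ((hy c).1 hc)
  · intro x hx
    obtain ⟨r, t, rfl⟩ := IsLocalization.exists_mk'_eq p.primeCompl x
    have hr : r ∈ p := by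
      rw [← IsLocalization.AtPrime.mk'_mem_maximal_iff (Localization.AtPrime p) p r t]; exact hx
    rw [← Localization.mk_eq_mk', LocalizedModule.mk_smul_mk, (hy r).2 hr]
    simp

end F1

section Grade
open CategoryTheory RingTheory.Sequence
variable {A : Type u} [CommRing A] [IsRegularRing A] 

lemma pdLT_ofList [IsLocalRing A] (c : List A) (reg : IsWeaklyRegular A c)
   (hc : ∀ x ∈ c, x ∈ maximalIdeal A) :
    PdLT A (A ⧸ Ideal.ofList c) (c.length + 1) := by
  have e : (A ⧸ Ideal.ofList c • (⊤ : Submodule A A)) ≃ₗ[A] (A ⧸ Ideal.ofList c) :=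
    Submodule.quotEquivOfEq _ _ (by simp)
  exact (pdLT_quot (M := A) c reg hc 0 (PdLT.of_projective A)).equiv e

lemma exists_regular_of_height [IsLocalRing A] (L : Ideal A) (hL : L ≠ ⊤) (i : ℕ)
    (h : ∀ p : Ideal A, p.IsPrime → L ≤ p → (i : ℕ∞) ≤ p.height) :
    ∃ c : List A, (∀ x ∈ c, x ∈ L) ∧ IsWeaklyRegular A c ∧ c.length = i := by
  suffices H : ∀ l ≤ i, ∃ c : List A, (∀ x ∈ c, x ∈ L) ∧ IsWeaklyRegular A c ∧ c.length = l from
    H i le_rfl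
  intro l
  induction l with
  | zero => intro _; exact ⟨[], by simp, IsWeaklyRegular.nil _ _, rfl⟩
  | succ l ih =>
    intro hl
    obtain ⟨c, hcL, reg, hlen⟩ := ih (by omega)
    have hcm : ∀ x ∈ c, x ∈ maximalIdeal A := fun x hx => le_maximalIdeal hL (hcL x hx)
    have key : ∃ x ∈ L, IsSMulRegular (A ⧸ Ideal.ofList c) x := by
      by_contra hno
      push Not at hno
      have hsub : (L : Set A) ⊆ ⋃ p ∈ associatedPrimes A (A ⧸ Ideal.ofList c), (p : Set A) := by
        intro x hx
        rw [biUnion_associatedPrimes_eq_compl_regular]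
        exact hno x hx
      have hfin := associatedPrimes.finite A (A ⧸ Ideal.ofList c)
      have := (Ideal.subset_union_prime_finite hfin (f := id) ⊥ ⊥
        (fun p hp _ _ => (hp : IsAssociatedPrime _ _).1)).1 hsub
      obtain ⟨p, hp, hLp⟩ := this
      obtain ⟨hpp, y, hy⟩ := isAssociatedPrime_iff.1 (hp : IsAssociatedPrime _ _)
      have hh := F1 (pdLT_ofList c reg hcm) y p (fun x => by rw [hy]; simp)
      have h2 := h p hpp hLp
      have h3 := h2.trans_lt hh
      rw [hlen] at h3
      have : i < l + 1 := by exact_mod_cast h3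
      omega
    obtain ⟨x, hx, hxr⟩ := key
    refine ⟨c ++ [x], ?_, ?_, by simp [hlen]⟩
    · intro z hz
      rcases List.mem_append.1 hz with hz | hz
      · exact hcL z hz
      · simp at hz; rwa [hz]
    · rw [isWeaklyRegular_append_iff]
      refine ⟨reg, ?_⟩
      rw [isWeaklyRegular_cons_iff]
      refine ⟨?_, IsWeaklyRegular.nil _ _⟩
      have e : (A ⧸ Ideal.ofList c • (⊤ : Submodule A A)) ≃ₗ[A] (A ⧸ Ideal.ofList c) :=
        Submodule.quotEquivOfEq _ _ (by simp)
      exact (e.isSMulRegular_congr x).2 hxr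

lemma ext_vanish [IsLocalRing A] (L : Ideal A) (i : ℕ)
    (h : ∀ p : Ideal A, p.IsPrime → L ≤ p → (i : ℕ∞) ≤ p.height)
    (N : Type u) [AddCommGroup N] [Module A N] [Module.Finite A N]
    (hN : ∀ x ∈ L, ∀ y : N, x • y = 0) (p : ℕ) (hp : p < i) :
    Subsingleton (Abelian.Ext (ModuleCat.of A N) (ModuleCat.of A A) p) := by
  by_cases hL : L = ⊤
  · have : Subsingleton N := by
      rw [subsingleton_iff_forall_eq 0]
      intro y
      have := hN 1 (by rw [hL]; trivial) y
      simpa using this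
    have h0 : PdLT A N 0 := PdLT.of_subsingleton N 0
    exact HasProjectiveDimensionLT.subsingleton (hX := h0) _ 0 _ (Nat.zero_le _) _
  obtain ⟨c, hcL, reg, hlen⟩ := exists_regular_of_height L hL i h
  refine ModuleCat.subsingleton_ext_of_exists_isRegular L (ModuleCat.of A N) ?_ (ModuleCat.of A A)
    ?_ c hcL ?_ p (by omega)
  · change Module.support A N ⊆ _
    rw [Module.support_eq_zeroLocus]
    apply PrimeSpectrum.zeroLocus_anti_mono
    intro x hx
    exact Module.mem_annihilator.2 (hN x hx)
  · change L • (⊤ : Submodule A A) < ⊤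
    rw [lt_top_iff_ne_top]; simpa using hL
  · exact RingTheory.Sequence.IsRegular.of_isWeaklyRegular_of_mem_maximalIdeal _
      (fun x hx => le_maximalIdeal hL (hcL x hx)) reg

end Grade

section AssQ
variable {A : Type u} [CommRing A] 

/-- `p` is the annihilator of an element of `(X + Y) / X`. -/
def AssQ (X Y : Ideal A) (p : Ideal A) : Prop := ∃ y ∈ Y, ∀ r, r * y ∈ X ↔ r ∈ p

lemma AssQ.mono {X Y Y' p : Ideal A} (h : Y ≤ Y') (hp : AssQ X Y p) : AssQ X Y' p :=
  let ⟨y, hy, h2⟩ := hp; ⟨y, h hy, h2⟩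

lemma exists_assQ_le [IsNoetherianRing A] (X : Ideal A) (w : A) (p : Ideal A)
    [hp : p.IsPrime] (hle : ∀ r, r * w ∈ X → r ∈ p) :
    ∃ p' : Ideal A, p'.IsPrime ∧ p' ≤ p ∧ ∃ t : A, ∀ r, r * (t * w) ∈ X ↔ r ∈ p' := by
  let D : Ideal A := Submodule.colon X {w}
  have hD : ∀ r, r ∈ D ↔ r * w ∈ X := fun r => by simp [D]
  obtain ⟨p', hp', hpp⟩ := Ideal.exists_minimalPrimes_le (I := D) (J := p)
    (fun r hr => hle r ((hD r).1 hr))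
  obtain ⟨t, ht⟩ := Submodule.exists_eq_colon_of_mem_minimalPrimes (N := D) (x := (1:A)) (I := p') (by
    have : Submodule.colon D {(1:A)} = D := by ext; simp
    rw [this]; exact hp')
  refine ⟨p', hp'.1.1, hpp, t, fun r => ?_⟩
  rw [ht]
  simp [hD, mul_assoc]

lemma exists_assQ [IsNoetherianRing A] (X : Ideal A) (w : A) (hw : w ∉ X) :
    ∃ p' : Ideal A, p'.IsPrime ∧ ∃ t : A, ∀ r, r * (t * w) ∈ X ↔ r ∈ p' := by
  have hne : Submodule.colon X {w} ≠ ⊤ := by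
    rw [Ne, Ideal.eq_top_iff_one]; simpa using hw
  obtain ⟨m, hm, hle⟩ := Ideal.exists_le_maximal _ hne
  have := hm.isPrime
  obtain ⟨p', h1, _, h2⟩ := exists_assQ_le X w m (fun r hr => hle (by simpa using hr))
  exact ⟨p', h1, h2⟩

end AssQ


section LemD
open CategoryTheory Abelian

set_option linter.unusedSectionVars false
variable {A : Type u} [CommRing A] [IsNoetherianRing A]

/-- `Ext^i(M, A)` as a type. -/
abbrev ExtA (A : Type u) [CommRing A] (M : Type u) [AddCommGroup M] [Module A M] (i : ℕ) : Type u :=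
  Ext (ModuleCat.of A M) (ModuleCat.of A A) i

lemma ExtA_subsingleton {M : Type u} [AddCommGroup M] [Module A M] {n : ℕ} (h : PdLT A M n)
    (i : ℕ) (hi : n ≤ i) : Subsingleton (ExtA A M i) :=
  HasProjectiveDimensionLT.subsingleton (hX := h) _ n _ hi _

lemma ExtA_zero_projective (M : Type u) [AddCommGroup M] [Module A M] [Module.Projective A M]
    [Module.Finite A M] : Module.Projective A (ExtA A M 0) := by
  have e : (Module.Dual A M) ≃ₗ[A] (ExtA A M 0) :=
    (ModuleCat.homLinearEquiv (S := A) (M := ModuleCat.of A M) (N := ModuleCat.of A A)).symm.trans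
     (Ext.linearEquiv₀ (R := A)).symm
  exact Module.Projective.of_equiv e

section
variable {M N P : Type u} [AddCommGroup M] [Module A M] [AddCommGroup N] [Module A N]
  [AddCommGroup P] [Module A P] {f : M →ₗ[A] N} {g : N →ₗ[A] P} 
  (hf : Function.Injective f) (hg : Function.Surjective g) (h : Function.Exact f g) 

/-- pullback of Ext classes. -/
noncomputable def exPull {M N : Type u} [AddCommGroup M] [Module A M] [AddCommGroup N] [Module A N]
    (f : M →ₗ[A] N) (i : ℕ) : ExtA A N i →ₗ[A] ExtA A M i :=
  (Ext.mk₀ (ModuleCat.ofHom f)).precompOfLinear A _ (zero_add i)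

/-- connecting map. -/
noncomputable def exDelta (i : ℕ) : ExtA A M i →ₗ[A] ExtA A P (i+1) :=
  ((mkSC_shortExact hf hg h).extClass).precompOfLinear A _ (add_comm 1 i)

lemma ex_exact1 (i : ℕ) : Function.Exact (exPull f i) (exDelta hf hg h i) := by
  have := Ext.contravariant_sequence_exact₁' (mkSC_shortExact hf hg h) (ModuleCat.of A A) i (i+1)
    (add_comm 1 i)
  rw [ShortComplex.ab_exact_iff_function_exact] at this
  exact this

include hf hg h in
lemma ex_exact2 (i : ℕ) : Function.Exact (exPull g i) (exPull f i) := by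
  have := Ext.contravariant_sequence_exact₂' (mkSC_shortExact hf hg h) (ModuleCat.of A A) i 
  rw [ShortComplex.ab_exact_iff_function_exact] at this
  exact this

lemma ex_exact3 (i : ℕ) : Function.Exact (exDelta hf hg h i) (exPull g (i+1)) := by
  have := Ext.contravariant_sequence_exact₃' (mkSC_shortExact hf hg h) (ModuleCat.of A A) i (i+1)
    (add_comm 1 i)
  rw [ShortComplex.ab_exact_iff_function_exact] at this
  exact this

include hg in
lemma ex_inj : Function.Injective (exPull g 0) := by
  have : Epi (ModuleCat.ofHom g) := (ModuleCat.epi_iff_surjective _).2 hg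
  exact Ext.precomp_mk₀_injective_of_epi (ModuleCat.of A A) (ModuleCat.ofHom g)

end

lemma exPull_smul {M N : Type u} [AddCommGroup M] [Module A M] [AddCommGroup N] [Module A N]
    (f : M →ₗ[A] N) (c : A) (i : ℕ) (y : ExtA A N i) : exPull (c • f) i y = c • exPull f i y := by
  simp only [exPull, Ext.precompOfLinear, Ext.bilinearCompOfLinear_apply_apply]
  have : ModuleCat.ofHom (c • f) = c • ModuleCat.ofHom f := rfl
  rw [this, Ext.mk₀_smul, Ext.smul_comp]

lemma exPull_id {M : Type u} [AddCommGroup M] [Module A M] 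
    (i : ℕ) (y : ExtA A M i) : exPull (LinearMap.id : M →ₗ[A] M) i y = y := by
  simp only [exPull, Ext.precompOfLinear, Ext.bilinearCompOfLinear_apply_apply]
  have : ModuleCat.ofHom (LinearMap.id : M →ₗ[A] M) = 𝟙 _ := rfl
  rw [this, Ext.mk₀_id_comp]

lemma smul_ext_eq_zero {M : Type u} [AddCommGroup M] [Module A M] (c : A) (hc : ∀ m : M, c • m = 0)
    (i : ℕ) (y : ExtA A M i) : c • y = 0 := by
  have h1 : c • (LinearMap.id : M →ₗ[A] M) = (0 : A) • LinearMap.id := by ext m; simp [hc]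
  have h2 := exPull_smul (LinearMap.id : M →ₗ[A] M) c i y
  have h3 := exPull_smul (LinearMap.id : M →ₗ[A] M) 0 i y
  rw [exPull_id] at h2
  rw [← h2, h1, h3, zero_smul]

theorem lemD (i : ℕ) : ∀ (r : ℕ) (M : Type u) [AddCommGroup M] [Module A M] [Module.Finite A M],
    PdLT A M (i+2) → (∀ p, 1 ≤ p → p < i+1 → Subsingleton (ExtA A M p)) → PdLT A (ExtA A M 0) r →
    PdLT A (ExtA A M (i+1)) (r + i + 2) := by
  induction i with
  | zero =>
    intro r M _ _ _ hM _ hr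
    obtain ⟨n, f, hf⟩ := Module.Finite.exists_fin' A M
    have hi := Submodule.injective_subtype (LinearMap.ker f)
    have hex : Function.Exact (LinearMap.ker f).subtype f := LinearMap.exact_subtype_ker_map f
    have hΩ : PdLT A (LinearMap.ker f) 1 := PdLT.X1 hi hf hex (PdLT.of_projective _) hM
    have := hΩ.projective
    have p1 := ExtA_zero_projective (A := A) (LinearMap.ker f)
    have p2 := ExtA_zero_projective (A := A) (Fin n → A)
    have e1 := ex_exact1 hi hf hex 0
    have e2 := ex_exact2 hi hf hex 0
    have e3 := ex_exact3 hi hf hex 0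
    have hs : Function.Surjective (exDelta hi hf hex 0) := by
      intro y
      have : Subsingleton (ExtA A (Fin n → A) (0+1)) := ExtA_subsingleton (PdLT.of_projective _) 1 le_rfl
      exact (e3 y).1 (Subsingleton.elim _ _)
    let B := LinearMap.range (exPull (LinearMap.ker f).subtype 0)
    have hB : PdLT A B (r+1) := by
      refine PdLT.X3 (f := exPull f 0) (g := (exPull (LinearMap.ker f).subtype 0).rangeRestrict)
        (ex_inj hf) (LinearMap.surjective_rangeRestrict _) ?_ hr ((PdLT.of_projective _).mono (by omega))
      intro y
      rw [← e2 y, ← Subtype.coe_inj]; rfl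
    refine PdLT.X3 (f := B.subtype) (g := exDelta hi hf hex 0) (Submodule.injective_subtype _) hs ?_ hB
      ((PdLT.of_projective _).mono (by omega))
    intro y
    rw [e1 y]; simp [B]
  | succ i ih =>
    intro r M _ _ _ hM hv hr
    obtain ⟨n, f, hf⟩ := Module.Finite.exists_fin' A M
    have hi := Submodule.injective_subtype (LinearMap.ker f)
    have hex : Function.Exact (LinearMap.ker f).subtype f := LinearMap.exact_subtype_ker_map f
    have hΩ : PdLT A (LinearMap.ker f) (i+2) := PdLT.X1 hi hf hex
      ((PdLT.of_projective _).mono (by omega)) hM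
    have p2 := ExtA_zero_projective (A := A) (Fin n → A)
    have e1 := fun i => ex_exact1 hi hf hex i
    have e2 := fun i => ex_exact2 hi hf hex i
    have e3 := fun i => ex_exact3 hi hf hex i
    have hsub : ∀ p, 1 ≤ p → Subsingleton (ExtA A (Fin n → A) p) := fun p hp =>
      ExtA_subsingleton (PdLT.of_projective _) p hp
    have hs : ∀ p, Function.Surjective (exDelta hi hf hex p) := by
      intro p y
      have := hsub (p+1) (by omega)
      exact (e3 p y).1 (Subsingleton.elim _ _)
    have hin : ∀ p, 1 ≤ p → Function.Injective (exDelta hi hf hex p) := by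
      intro p hp
      rw [injective_iff_map_eq_zero]
      intro y hy
      obtain ⟨z, hz⟩ := (e1 p y).1 hy
      have := hsub p hp
      rw [← hz, Subsingleton.elim z 0, map_zero]
    have hΩ0 : PdLT A (ExtA A (LinearMap.ker f) 0) (r+1) := by
      refine PdLT.X3 (f := exPull f 0) (g := (exPull (LinearMap.ker f).subtype 0))
        (ex_inj hf) ?_ (e2 0) hr ((PdLT.of_projective _).mono (by omega))
      intro y
      have : Subsingleton (ExtA A M (0+1)) := hv 1 le_rfl (by omega)
      exact (e1 0 y).1 (Subsingleton.elim _ _)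
    have h1 := ih (r+1) (LinearMap.ker f) hΩ (fun p hp hp2 => by
      have := hv (p+1) (by omega) (by omega)
      exact (hin p hp).subsingleton) hΩ0
    have h2 := h1.equiv (LinearEquiv.ofBijective (exDelta hi hf hex (i+1)) ⟨hin _ (by omega), hs _⟩)
    exact h2.mono (by omega)

end LemD


section QM
variable {A : Type u} [CommRing A]

/-- The module `Y / (X ∩ Y)`. -/
abbrev QM (X Y : Ideal A) : Type u := (↥Y ⧸ (Submodule.comap Y.subtype X))

/-- class of an element. -/
def qmk (X : Ideal A) {Y : Ideal A} (y : A) (hy : y ∈ Y) : QM X Y := Submodule.Quotient.mk ⟨y, hy⟩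

lemma qmk_eq_zero {X Y : Ideal A} (y : A) (hy : y ∈ Y) : qmk X y hy = 0 ↔ y ∈ X := by
  simp [qmk, Submodule.Quotient.mk_eq_zero]

lemma qmk_smul {X Y : Ideal A} (r y : A) (hy : y ∈ Y) :
    r • qmk X y hy = qmk X (r * y) (Y.mul_mem_left r hy) := rfl

lemma qmk_surj {X Y : Ideal A} (z : QM X Y) : ∃ y, ∃ hy : y ∈ Y, z = qmk X y hy := by
  obtain ⟨⟨y, hy⟩, rfl⟩ := Submodule.Quotient.mk_surjective _ z
  exact ⟨y, hy, rfl⟩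

/-- multiplication by `b`. -/
def qmul {X Y X' Y' : Ideal A} (b : A) (hY : ∀ y ∈ Y, b * y ∈ Y') (hX : ∀ y ∈ Y, y ∈ X → b * y ∈ X') :
    QM X Y →ₗ[A] QM X' Y' :=
  Submodule.mapQ _ _ ((LinearMap.lsmul A A b).restrict (p := Y) (q := Y') hY) (by
    rintro ⟨y, hy⟩ h
    exact hX y hy h)

lemma qmul_mk {X Y X' Y' : Ideal A} (b : A) (hY : ∀ y ∈ Y, b * y ∈ Y')
    (hX : ∀ y ∈ Y, y ∈ X → b * y ∈ X') (y : A) (hy : y ∈ Y) :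
    qmul (X' := X') b hY hX (qmk X y hy) = qmk X' (b * y) (hY y hy) := rfl

/-- change of denominators. -/
def qproj {X Y X' : Ideal A} (hX : X ≤ X') : QM X Y →ₗ[A] QM X' Y :=
  Submodule.mapQ _ _ LinearMap.id (by
    rintro ⟨y, hy⟩ h
    exact hX h)

lemma qproj_mk {X Y X' : Ideal A} (hX : X ≤ X') (y : A) (hy : y ∈ Y) :
    qproj hX (qmk X y hy) = qmk X' y hy := rfl

lemma qproj_surj {X Y X' : Ideal A} (hX : X ≤ X') : Function.Surjective (qproj (Y := Y) hX) := by
  intro z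
  obtain ⟨y, hy, rfl⟩ := qmk_surj z
  exact ⟨qmk X y hy, rfl⟩

lemma qmul_inj {X Y X' Y' : Ideal A} (b : A) (hY : ∀ y ∈ Y, b * y ∈ Y')
    (hX : ∀ y ∈ Y, y ∈ X → b * y ∈ X') (h : ∀ y ∈ Y, b * y ∈ X' → y ∈ X) :
    Function.Injective (qmul b hY hX) := by
  rw [injective_iff_map_eq_zero]
  intro z hz
  obtain ⟨y, hy, rfl⟩ := qmk_surj z
  rw [qmul_mk, qmk_eq_zero] at hz
  exact (qmk_eq_zero _ _).2 (h y hy hz)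

lemma qm_exact {X Y X' Y' X3 : Ideal A} (b : A) (hY : ∀ y ∈ Y, b * y ∈ Y')
    (hX : ∀ y ∈ Y, y ∈ X → b * y ∈ X') (h3 : X' ≤ X3)
    (h : ∀ z ∈ Y', z ∈ X3 ↔ ∃ y ∈ Y, z - b * y ∈ X') :
    Function.Exact (qmul b hY hX) (qproj (Y := Y') h3) := by
  intro z
  obtain ⟨y, hy, rfl⟩ := qmk_surj z
  rw [qproj_mk, qmk_eq_zero, h y hy]
  constructor
  · rintro ⟨w, hw, h⟩
    refine ⟨qmk X w hw, ?_⟩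
    rw [qmul_mk]
    refine ((Submodule.Quotient.eq _).2 ?_).symm
    exact h
  · rintro ⟨w, hw⟩
    obtain ⟨v, hv, rfl⟩ := qmk_surj w
    refine ⟨v, hv, ?_⟩
    rw [qmul_mk] at hw
    exact (Submodule.Quotient.eq (Submodule.comap Y'.subtype X')).1 hw.symm

lemma F1_qm [IsRegularRing A] {X Y : Ideal A} {n : ℕ} (h : PdLT A (QM X Y) n) (p : Ideal A)
    [p.IsPrime] (hp : AssQ X Y p) : p.height < n := by
  obtain ⟨y, hy, h2⟩ := hp
  refine F1 h (qmk X y hy) p fun x => ?_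
  rw [qmk_smul, qmk_eq_zero]; exact h2 x

lemma F1_quot [IsRegularRing A] {X : Ideal A} {n : ℕ} (h : PdLT A (A ⧸ X) n) (p : Ideal A)
    [p.IsPrime] (hp : AssQ X ⊤ p) : p.height < n := by
  obtain ⟨y, hy, h2⟩ := hp
  refine F1 h (Ideal.Quotient.mk X y) p fun x => ?_
  rw [← h2, ← Ideal.Quotient.eq_zero_iff_mem, map_mul]; rfl

/-- partial ideals. -/
def aI (b : ℕ → A) : ℕ → Ideal A
  | 0 => ⊥
  | i+1 => aI b i ⊔ Ideal.span {b i}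

/-- residual intersections. -/
def KI (b : ℕ → A) (I : Ideal A) (i : ℕ) : Ideal A := (aI b i).colon (I : Set A)

lemma mem_KI {b : ℕ → A} {I : Ideal A} {i : ℕ} {x : A} : x ∈ KI b I i ↔ ∀ u ∈ I, x * u ∈ aI b i := by
  simp [KI, Submodule.mem_colon]

lemma aI_le_succ (b : ℕ → A) (i : ℕ) : aI b i ≤ aI b (i+1) := le_sup_left
lemma b_mem_aI (b : ℕ → A) (i : ℕ) : b i ∈ aI b (i+1) :=
  (le_sup_right : _ ≤ aI b i ⊔ Ideal.span {b i}) (Ideal.mem_span_singleton_self _)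

lemma aI_mono (b : ℕ → A) {i j : ℕ} (h : i ≤ j) : aI b i ≤ aI b j :=
  monotone_nat_of_le_succ (aI_le_succ b) h

lemma aI_le {b : ℕ → A} {I : Ideal A} (hb : ∀ i, b i ∈ I) (i : ℕ) : aI b i ≤ I := by
  induction i with
  | zero => exact bot_le
  | succ i ih => exact sup_le ih ((Ideal.span_singleton_le_iff_mem _).2 (hb i))

lemma mem_aI_succ_mul {b : ℕ → A} {F : Ideal A} {i : ℕ} {x : A} :
    x ∈ aI b (i+1) * F ↔ ∃ y ∈ F, x - b i * y ∈ aI b i * F := by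
  rw [aI, Ideal.sup_mul, Submodule.mem_sup]
  constructor
  · rintro ⟨z, hz, w, hw, rfl⟩
    obtain ⟨y, hy, rfl⟩ := Ideal.mem_span_singleton_mul.1 hw
    exact ⟨y, hy, by simpa using hz⟩
  · rintro ⟨y, hy, h⟩
    exact ⟨_, h, b i * y, Ideal.mem_span_singleton_mul.2 ⟨y, hy, rfl⟩, by ring⟩

lemma mem_aI_succ {b : ℕ → A} {i : ℕ} {x : A} :
    x ∈ aI b (i+1) ↔ ∃ y, x - b i * y ∈ aI b i := by
  have := mem_aI_succ_mul (b := b) (F := ⊤) (i := i) (x := x)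
  simpa using this

lemma KI_mul {b : ℕ → A} {I : Ideal A} {i : ℕ} {c y : A} (hc : c ∈ KI b I i) (e : ℕ)
    (hy : y ∈ I^(e+1)) : c * y ∈ aI b i * I^e := by
  rw [pow_succ'] at hy
  refine Submodule.mul_induction_on hy ?_ ?_
  · intro m hm n hn
    rw [← mul_assoc]
    exact Ideal.mul_mem_mul (mem_KI.1 hc m hm) hn
  · intro x y hx hy
    rw [mul_add]; exact add_mem hx hy

lemma assq_notI {b : ℕ → A} {I : Ideal A} {e i : ℕ} {p : Ideal A} (hp : p.IsPrime) {w : A}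
    (h : ∀ r, r * w ∈ aI b i * I^e ↔ r ∈ p) (hI : ¬ I ≤ p) : AssQ (aI b i) ⊤ p := by
  obtain ⟨u, hu, hup⟩ := SetLike.not_le_iff_exists.1 hI
  refine ⟨w, Submodule.mem_top, fun r => ⟨fun hr => ?_, fun hr => (Ideal.mul_le_left : aI b i * I^e ≤ aI b i) ((h r).2 hr)⟩⟩
  have h1 : (r * w) * u^e ∈ aI b i * I^e := Ideal.mul_mem_mul hr (Ideal.pow_mem_pow hu e)
  have h2 : u^e * r ∈ p := (h _).1 (by rw [mul_assoc, mul_comm (u^e)]; exact h1)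
  rcases hp.mem_or_mem h2 with h3 | h3
  · exact absurd (hp.mem_of_pow_mem _ h3) hup
  · exact h3

/-- The data for the residual intersection argument. -/
structure Setup (A : Type u) [CommRing A] (I : Ideal A) (g : ℕ) (b : ℕ → A) (N : ℕ) : Prop where
  hg : 1 ≤ g
  hI : ∀ p : Ideal A, p.IsPrime → I ≤ p → (g : ℕ∞) ≤ p.height
  hb : ∀ i, b i ∈ I
  hF : ∀ j ≤ N+1, PdLT A (↥(I^(j-g))) (max (j-1) 1)
  h1 : ∀ i ≤ N, ∀ p : Ideal A, p.IsPrime → I ≤ p → p.height ≤ i → ¬ KI b I i ≤ p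
  h2 : ∀ i < N, ∀ p : Ideal A, p.IsPrime → AssQ (aI b i) ⊤ p → b i ∈ p → I ≤ p

end QM

section C3
set_option linter.unusedSectionVars false
variable {A : Type u} [CommRing A] [IsRegularRing A] {I : Ideal A} {g : ℕ} {b : ℕ → A} {N : ℕ}
   {n : ℕ} 

lemma htle (H : ∀ i ≤ n, PdLT A (A ⧸ aI b i) (i+1)) {i : ℕ} (hi : i ≤ n) (p : Ideal A)
    (hp : p.IsPrime) (h : AssQ (aI b i) ⊤ p) : p.height ≤ i := by
  have := F1_quot (H i hi) p h
  exact_mod_cast (ENat.lt_natCast_add_one_iff).1 (by exact_mod_cast this)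

lemma K_lt (S : Setup A I g b N) (H : ∀ i ≤ n, PdLT A (A ⧸ aI b i) (i+1)) {i : ℕ} (hi : i ≤ n)
    (hig : i < g) {x : A} (hx : x ∈ KI b I i) : x ∈ aI b i := by
  by_contra hc
  obtain ⟨p, hp, t, ht⟩ := exists_assQ _ _ hc
  have h1 := htle H hi p hp ⟨_, trivial, ht⟩
  have h2 := S.hI p hp fun u hu => (ht u).1 (by
    rw [show u * (t * x) = t * (x * u) by ring]
    exact Ideal.mul_mem_left _ _ (mem_KI.1 hx u hu))
  have := h2.trans h1
  norm_cast at this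
  omega

lemma kill_I (S : Setup A I g b N) (H : ∀ i ≤ n, PdLT A (A ⧸ aI b i) (i+1)) {i : ℕ} (hi : i ≤ n)
    (hN : i ≤ N) {x : A} (hxI : x ∈ I)
    (h : ∀ p : Ideal A, p.IsPrime → ∀ t, (∀ r, r * (t * x) ∈ aI b i ↔ r ∈ p) → I ≤ p) :
    x ∈ aI b i := by
  by_contra hc
  obtain ⟨p, hp, t, ht⟩ := exists_assQ _ _ hc
  have h1 := htle H hi p hp ⟨_, trivial, ht⟩
  refine S.h1 i hN p hp (h p hp t ht) h1 fun c hc => (ht c).1 ?_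
  rw [show c * (t * x) = t * (c * x) by ring]
  exact Ideal.mul_mem_left _ _ (mem_KI.1 hc x hxI)

lemma K_inf (S : Setup A I g b N) (H : ∀ i ≤ n, PdLT A (A ⧸ aI b i) (i+1)) {i : ℕ} (hi : i ≤ n)
    (hN : i ≤ N) {x : A} (hx : x ∈ KI b I i) (hxI : x ∈ I) : x ∈ aI b i := by
  refine kill_I S H hi hN hxI fun p hp t ht u hu => (ht u).1 ?_
  rw [show u * (t * x) = t * (x * u) by ring]
  exact Ideal.mul_mem_left _ _ (mem_KI.1 hx u hu)

lemma colon_b (S : Setup A I g b N) (H : ∀ i ≤ n, PdLT A (A ⧸ aI b i) (i+1)) {i : ℕ} (hi : i ≤ n)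
    (hN : i < N) {x : A} (hx : b i * x ∈ aI b i) : x ∈ KI b I i := by
  rw [mem_KI]
  intro u hu
  refine kill_I S H hi hN.le (I.mul_mem_left _ hu) fun p hp t ht => ?_
  refine S.h2 i hN p hp ⟨_, trivial, ht⟩ ((ht _).1 ?_)
  rw [show b i * (t * (x * u)) = t * u * (b i * x) by ring]
  exact Ideal.mul_mem_left _ _ hx

lemma nat_of_height_le {p : Ideal A} {n : ℕ} (h : p.height ≤ n) : ∃ s : ℕ, p.height = s ∧ s ≤ n := by
  obtain ⟨s, hs⟩ := ENat.ne_top_iff_exists.1 (ne_top_of_le_ne_top (ENat.natCast_ne_top n) h)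
  refine ⟨s, hs.symm, ?_⟩
  rw [← hs] at h; exact_mod_cast h

theorem Tclaim (S : Setup A I g b N) (H : ∀ i ≤ n, PdLT A (A ⧸ aI b i) (i+1)) (hnN : n ≤ N)
    (e : ℕ) : ∀ p : Ideal A, p.IsPrime → I ≤ p → ∀ σ : ℕ, p.height = σ → σ ≤ n → ∀ i < σ,
      ¬ AssQ (aI b i * I^e) (I^(e+1)) p := by
  induction e with
  | zero =>
    intro p hp hIp σ hσ hσn i hi ⟨y, hy, h⟩
    have := htle H (by omega : i ≤ n) p hp ⟨y, trivial, by simpa using h⟩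
    rw [hσ] at this; norm_cast at this; omega
  | succ e ih =>
    intro p hp hIp σ hσ hσn i hi
    -- local injectivity
    have inj : ∀ i < σ, ∀ w ∈ I^(e+1), b i * w ∈ aI b i * I^(e+1) → ∃ h ∉ p, h * w ∈ aI b i * I^e := by
      intro i hi w hw hbw
      by_contra hc
      push Not at hc
      obtain ⟨p', hp', hle, t, ht⟩ := exists_assQ_le (aI b i * I^e) w p
        (fun r hr => by by_contra hr'; exact hc r hr' hr)
      have hbp : b i ∈ p' := by
        rw [← ht, show b i * (t * w) = t * (b i * w) by ring]
        exact Ideal.mul_mem_left _ _ (Ideal.mul_mono_right (Ideal.pow_le_pow_right (Nat.le_succ e)) hbw)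
      have hIp' : I ≤ p' := by
        by_contra hI
        exact hI (S.h2 i (by omega) p' hp' (assq_notI hp' ht hI) hbp)
      obtain ⟨s, hs, hsn⟩ := nat_of_height_le (p := p') (n := σ) (hσ ▸ Ideal.height_mono hle)
      rcases le_or_gt s i with hsi | hsi
      · refine S.h1 i (by omega) p' hp' hIp' (by rw [hs]; exact_mod_cast hsi) fun c hc => (ht c).1 ?_
        exact KI_mul hc e (Ideal.mul_mem_left _ _ hw)
      · exact ih p' hp' hIp' s hs (by omega) i hsi ⟨t * w, Ideal.mul_mem_left _ _ hw, ht⟩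
    suffices hh : ∀ m i, i + m = σ → ¬ AssQ (aI b i * I^(e+1)) (I^(e+1+1)) p from
      hh (σ - i) i (by omega)
    intro m
    induction m with
    | zero =>
      intro i hi ⟨y, hy, h⟩
      obtain rfl : i = σ := by omega
      exact S.h1 i (by omega) p hp hIp hσ.le fun c hc => (h c).1 (KI_mul hc _ hy)
    | succ m ihm =>
      rintro i hi ⟨x, hx, h⟩
      obtain ⟨c, hcp, hc⟩ : ∃ c ∉ p, c * x ∈ aI b (i+1) * I^(e+1) := by
        by_contra hno
        push Not at hno
        refine ihm (i+1) (by omega) ⟨x, hx, fun r => ⟨fun hr => ?_, fun hr => ?_⟩⟩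
        · by_contra hr'; exact hno r hr' hr
        · exact Ideal.mul_mono_left (aI_le_succ b i) ((h r).2 hr)
      obtain ⟨y, hy, hz⟩ := mem_aI_succ_mul.1 hc
      have key : ∀ r, b i * (r * y) ∈ aI b i * I^(e+1) ↔ r ∈ p := by
        intro r
        have h1 : r * c * x - r * (c * x - b i * y) = b i * (r * y) := by ring
        rw [← h1, Submodule.sub_mem_iff_left _ (Ideal.mul_mem_left _ _ hz), h]
        exact ⟨fun h => (hp.mem_or_mem h).resolve_right hcp, fun h => Ideal.mul_mem_right _ _ h⟩
      -- common multiplier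
      obtain ⟨h0, hh0, hh⟩ : ∃ h0 ∉ p, ∀ r ∈ p, r * (h0 * y) ∈ aI b i * I^e := by
        obtain ⟨s, hs⟩ := (isNoetherianRing_iff_ideal_fg A).1 inferInstance p
        have : ∀ T : Finset A, (T : Set A) ⊆ p → ∃ h0 ∉ p, ∀ r ∈ T, r * (h0 * y) ∈ aI b i * I^e := by
          classical
          intro T
          induction T using Finset.induction_on with
          | empty => exact fun _ => ⟨1, (Ideal.ne_top_iff_one _).1 hp.ne_top, by simp⟩
          | insert a T ha ihT =>
            intro hT
            rw [Finset.coe_insert, Set.insert_subset_iff] at hT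
            obtain ⟨h0, hh0, hh⟩ := ihT hT.2
            obtain ⟨h1, hh1, hh'⟩ := inj i (by omega) (a * y) (Ideal.mul_mem_left _ _ hy) ((key a).2 hT.1)
            refine ⟨h0 * h1, fun h => (hp.mem_or_mem h).elim hh0 hh1, fun r hr => ?_⟩
            rcases Finset.mem_insert.1 hr with rfl | hr
            · rw [show r * (h0 * h1 * y) = h0 * (h1 * (r * y)) by ring]
              exact Ideal.mul_mem_left _ _ hh'
            · rw [show r * (h0 * h1 * y) = h1 * (r * (h0 * y)) by ring]
              exact Ideal.mul_mem_left _ _ (hh r hr)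
        obtain ⟨h0, hh0, hh⟩ := this s (hs ▸ Ideal.subset_span)
        refine ⟨h0, hh0, fun r hr => ?_⟩
        rw [← hs] at hr
        refine Submodule.span_induction (p := fun r _ => r * (h0 * y) ∈ aI b i * I^e) hh ?_ ?_ ?_ hr
        · simp
        · intro x y _ _ hx hy; rw [add_mul]; exact add_mem hx hy
        · intro a x _ hx; rw [smul_eq_mul, mul_assoc]; exact Ideal.mul_mem_left _ _ hx
      refine ih p hp hIp σ hσ hσn i (by omega) ⟨h0 * y, Ideal.mul_mem_left _ _ hy, fun r => ⟨fun hr => ?_, hh r⟩⟩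
      have h3 : r * h0 ∈ p := by
        rw [← key, show b i * (r * h0 * y) = (r * (h0 * y)) * b i by ring, pow_succ, ← mul_assoc]
        exact Ideal.mul_mem_mul hr (S.hb i)
      exact (hp.mem_or_mem h3).resolve_right hh0

end C3


section C3b
set_option linter.unusedSectionVars false
set_option linter.unusedVariables false
variable {A : Type u} [CommRing A] [IsRegularRing A] {I : Ideal A} {g : ℕ} {b : ℕ → A} {N : ℕ}
   {n : ℕ} 

/-- The modules `M_{i,j}`. -/
abbrev MM (I : Ideal A) (g : ℕ) (b : ℕ → A) (i j : ℕ) : Type u := QM (aI b i * I^(j-1-g)) (I^(j-g))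

lemma Inj3 (S : Setup A I g b N) (H : ∀ i ≤ n, PdLT A (A ⧸ aI b i) (i+1)) (hnN : n ≤ N)
    {i j : ℕ} (hiN : i < N) (hij : i ≤ j) (hj : j + 1 ≤ n) 
    (hP : PdLT A (MM I g b i (j+1)) (max j (i+1))) {x : A} (hx : x ∈ I^(j+1-g))
    (hbx : b i * x ∈ aI b i * I^(j+1-g)) : x ∈ aI b i * I^(j-g) := by
  by_contra hc
  obtain ⟨p, hp, t, ht⟩ := exists_assQ _ _ hc
  have hbp : b i ∈ p := by
    rw [← ht, show b i * (t * x) = t * (b i * x) by ring]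
    exact Ideal.mul_mem_left _ _ (Ideal.mul_mono_right (Ideal.pow_le_pow_right (by omega)) hbx)
  have hIp : I ≤ p := by
    by_contra hI
    exact hI (S.h2 i hiN p hp (assq_notI hp ht hI) hbp)
  have hgp := S.hI p hp hIp
  have hpd : p.height < (max j (i+1) : ℕ) := F1_qm hP p ⟨t * x, Ideal.mul_mem_left _ _ hx, ht⟩
  obtain ⟨s, hs, hsn⟩ := nat_of_height_le hpd.le
  rw [hs] at hgp hpd
  norm_cast at hgp hpd
  have hmax : s < max j (i+1) := hpd
  rcases le_or_gt s i with hsi | hsi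
  · have e : j + 1 - g = (j - g) + 1 := by omega
    rw [e] at hx
    refine S.h1 i (by omega) p hp hIp (by rw [hs]; exact_mod_cast hsi) fun c hc => (ht c).1 ?_
    exact KI_mul hc _ (Ideal.mul_mem_left _ _ hx)
  · have e : j + 1 - g = (j - g) + 1 := by omega
    rw [e] at hx
    exact Tclaim S H hnN (j - g) p hp hIp s hs (by omega) i hsi ⟨t * x, Ideal.mul_mem_left _ _ hx, ht⟩

/-- the SES data -/
lemma mm_Y (S : Setup A I g b N) {u : A} (hu : u ∈ I) (j : ℕ) : ∀ y ∈ I^(j+1-g), u * y ∈ I^(j+2-g) := by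
  intro y hy
  rcases lt_or_ge (j+1) g with h | h
  · rw [show j + 2 - g = 0 by omega]; simp
  · rw [show j + 2 - g = (j+1-g)+1 by omega, pow_succ']
    exact Ideal.mul_mem_mul hu hy

lemma mm_X (S : Setup A I g b N) {u : A} (hu : u ∈ I) (i j : ℕ) :
    ∀ y ∈ I^(j+1-g), y ∈ aI b i * I^(j+1-1-g) → u * y ∈ aI b i * I^(j+2-1-g) := by
  intro y _ hy
  rw [show j + 1 - 1 - g = j - g by omega] at hy
  rw [show j + 2 - 1 - g = j + 1 - g by omega]
  rcases lt_or_ge j g with h | h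
  · rw [show j + 1 - g = 0 by omega]; rw [show j - g = 0 by omega] at hy
    exact Ideal.mul_mem_left _ _ hy
  · rw [show j + 1 - g = (j-g)+1 by omega, pow_succ, ← mul_assoc, mul_comm u]
    exact Ideal.mul_mem_mul hy hu

/-- multiplication by `u ∈ I` -/
def mmMul (S : Setup A I g b N) {u : A} (hu : u ∈ I) (i j : ℕ) :
    MM I g b i (j+1) →ₗ[A] MM I g b i (j+2) := qmul u (mm_Y S hu j) (mm_X S hu i j)

/-- projection -/
def mmProj (I : Ideal A) (g : ℕ) (b : ℕ → A) (i j : ℕ) : MM I g b i j →ₗ[A] MM I g b (i+1) j :=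
  qproj (Ideal.mul_mono_left (aI_le_succ b i))

lemma mm_inj (S : Setup A I g b N) (H : ∀ i ≤ n, PdLT A (A ⧸ aI b i) (i+1)) (hnN : n ≤ N)
    {i j : ℕ} (hiN : i < N) (hij : i ≤ j) (hj : j + 1 ≤ n) 
    (hP : PdLT A (MM I g b i (j+1)) (max j (i+1))) : Function.Injective (mmMul S (S.hb i) i j) := by
  apply qmul_inj
  intro y hy h
  exact Inj3 S H hnN hiN hij hj hP hy h

lemma mm_exact (S : Setup A I g b N) (i j : ℕ) :
    Function.Exact (mmMul S (S.hb i) i j) (mmProj I g b i (j+2)) := by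
  apply qm_exact
  intro z hz
  exact mem_aI_succ_mul

theorem Pclaim (S : Setup A I g b N) (H : ∀ i ≤ n, PdLT A (A ⧸ aI b i) (i+1)) (hnN : n ≤ N)
    (i : ℕ) : ∀ j, i + 1 ≤ j → j ≤ n + 1 → PdLT A (MM I g b i j) (max (j-1) (i+1)) := by
  induction i with
  | zero =>
    intro j h1 h2
    refine (S.hF j (by omega)).equiv (Submodule.quotEquivOfEqBot _ ?_).symm
    rw [aI, Submodule.bot_mul, ← LinearMap.ker, Submodule.ker_subtype]
  | succ i ih =>
    intro j h1 h2
    obtain ⟨j, rfl⟩ : ∃ j', j = j' + 2 := ⟨j - 2, by omega⟩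
    have hP1 := ih (j+1) (by omega) (by omega)
    have hP2 := ih (j+2) (by omega) (by omega)
    have h3 := PdLT.X3 (mm_inj S H hnN (by omega) (by omega) (by omega) hP1)
      (qproj_surj _) (mm_exact S i j) hP1 (hP2.mono (by omega))
    exact h3.mono (by omega)

theorem Qclaim (S : Setup A I g b N) (H : ∀ i ≤ n, PdLT A (A ⧸ aI b i) (i+1)) (hnN : n ≤ N)
    (i : ℕ) : i ≤ n → ∃ e : ExtA A (MM I g b i (i+1)) i, (∀ y, ∃ c : A, y = c • e) ∧
      ∀ c : A, c • e = 0 ↔ c ∈ KI b I i := by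
  have hg := S.hg
  induction i with
  | zero =>
    intro _
    let M := MM I g b 0 (0+1)
    have e1 : M ≃ₗ[A] A := by
      have f1 : M ≃ₗ[A] ↥(I^(0+1-g)) := Submodule.quotEquivOfEqBot _ (by
        rw [aI, Submodule.bot_mul, ← LinearMap.ker, Submodule.ker_subtype])
      have f2 : I^(0+1-g) = ⊤ := by rw [show 0 + 1 - g = 0 by omega, pow_zero, Ideal.one_eq_top]
      exact f1.trans ((LinearEquiv.ofEq _ _ f2).trans Submodule.topEquiv)
    have e2 : (Module.Dual A M) ≃ₗ[A] (ExtA A M 0) :=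
      (ModuleCat.homLinearEquiv (S := A) (M := ModuleCat.of A M) (N := ModuleCat.of A A)).symm.trans
       (CategoryTheory.Abelian.Ext.linearEquiv₀ (R := A)).symm
    have e : A ≃ₗ[A] (ExtA A M 0) :=
      ((LinearMap.ringLmapEquivSelf A A A).symm.trans e1.dualMap).trans e2
    refine ⟨e 1, fun y => ⟨e.symm y, ?_⟩, fun c => ?_⟩
    · rw [← map_smul]; simp
    · rw [← map_smul]
      simp only [smul_eq_mul, mul_one, map_eq_zero_iff e e.injective]
      constructor
      · rintro rfl; exact zero_mem _
      · intro h
        exact (K_lt S H (Nat.zero_le _) (by omega) h)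
  | succ i ih =>
    intro hi
    obtain ⟨e, he1, he2⟩ := ih (by omega)
    have hP1 := Pclaim S H hnN i (i+1) (by omega) (by omega)
    have hP2 := Pclaim S H hnN i (i+2) (by omega) (by omega)
    have hf := (mm_inj S H hnN (by omega) le_rfl (by omega) hP1)
    have hs : Function.Surjective (mmProj I g b i (i+2)) := qproj_surj _
    have hx := mm_exact S i i
    refine ⟨exDelta hf hs hx i e, fun y => ?_, fun c => ⟨fun hc => ?_, fun hc => ?_⟩⟩
    · have : Subsingleton (ExtA A (MM I g b i (i+2)) (i+1)) := ExtA_subsingleton hP2 _ (by omega)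
      obtain ⟨z, rfl⟩ := (ex_exact3 hf hs hx i y).1 (Subsingleton.elim _ _)
      obtain ⟨c, rfl⟩ := he1 z
      exact ⟨c, map_smul _ _ _⟩
    · rw [← map_smul] at hc
      obtain ⟨y, hy⟩ := (ex_exact1 hf hs hx i _).1 hc
      rw [mem_KI]
      intro u hu
      obtain ⟨v, hv⟩ := he1 (exPull (mmMul S hu i i) i y)
      have hmap : u • mmMul S (S.hb i) i i = b i • mmMul S hu i i := by
        ext z
        obtain ⟨w, hw, hzw⟩ := qmk_surj (Submodule.Quotient.mk z)
        have hzw' : ((Submodule.mkQ _) z : MM I g b i (i+1)) = qmk _ w hw := hzw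
        simp only [LinearMap.coe_comp, Function.comp_apply, LinearMap.smul_apply]
        rw [hzw', mmMul, mmMul, qmul_mk, qmul_mk, qmk_smul, qmk_smul]
        congr 1; ring
      have h1 : (u * c - b i * v) • e = 0 := by
        rw [sub_smul, mul_smul, mul_smul, ← hv, ← hy, ← exPull_smul, ← exPull_smul, hmap, sub_self]
      have h2 := K_inf S H (by omega) (by omega) ((he2 _).1 h1)
        (sub_mem (I.mul_mem_right _ hu) (I.mul_mem_right _ (S.hb i)))
      rw [mem_aI_succ]
      exact ⟨v, by rwa [mul_comm c]⟩
    · refine smul_ext_eq_zero c (fun m => ?_) _ _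
      obtain ⟨y, hy, rfl⟩ := qmk_surj m
      rw [qmk_smul, qmk_eq_zero]
      rcases lt_or_ge (i+1) g with h | h
      · have := K_lt S H hi h hc
        rw [show i + 1 + 1 - 1 - g = 0 by omega, pow_zero, mul_one]
        exact Ideal.mul_mem_right _ _ this
      · rw [show i + 1 + 1 - g = (i+1+1-1-g) + 1 by omega] at hy
        exact KI_mul hc _ hy

lemma assQ_of_minimal {X p : Ideal A} (h : p ∈ X.minimalPrimes) : AssQ X ⊤ p := by
  have hp := h.1.1
  obtain ⟨p', hp', hle, t, ht⟩ := exists_assQ_le X 1 p (fun r hr => h.1.2 (by simpa using hr))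
  have h2 : X ≤ p' := fun r hr => (ht r).1 (Ideal.mul_mem_right _ _ hr)
  obtain rfl : p' = p := le_antisymm hle (h.2 ⟨hp', h2⟩ hle)
  exact ⟨_, trivial, ht⟩

lemma chain_ht (S : Setup A I g b N) (i : ℕ) : i ≤ N → ∀ p : Ideal A, p.IsPrime → aI b i ≤ p → ¬ I ≤ p →
    (i : ℕ∞) ≤ p.height := by
  induction i with
  | zero => intros; simp
  | succ i ih =>
    intro hi p hp hle hI
    obtain ⟨p', hp', hpp⟩ := Ideal.exists_minimalPrimes_le (I := aI b i) (J := p) ((aI_le_succ b i).trans hle)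
    have hp'p := hp'.1.1
    have hI' : ¬ I ≤ p' := fun h => hI (h.trans hpp)
    have h1 := ih (by omega) p' hp'p hp'.1.2 hI'
    have hass : AssQ (aI b i) ⊤ p' := assQ_of_minimal hp'
    have hb : b i ∉ p' := fun h => hI' (S.h2 i (by omega) p' hp'p hass h)
    have hlt : p' < p := lt_of_le_of_ne hpp fun h => hb (h ▸ hle (b_mem_aI b i))
    have := Ideal.height_add_one_le_of_lt_of_isPrime hlt
    push_cast
    exact (add_le_add_left h1 1).trans this

lemma K_ht (S : Setup A I g b N) (i : ℕ) (hi : i ≤ N) (p : Ideal A) (hp : p.IsPrime) (hK : KI b I i ≤ p) :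
    (i : ℕ∞) ≤ p.height := by
  by_cases hI : I ≤ p
  · by_contra hc
    push Not at hc
    exact S.h1 i hi p hp hI hc.le hK
  · refine chain_ht S i hi p hp (le_trans ?_ hK) hI
    intro x hx
    exact mem_KI.2 fun u _ => Ideal.mul_mem_right _ _ hx

theorem Main3 [IsLocalRing A] (S : Setup A I g b N) (H : ∀ i ≤ n, PdLT A (A ⧸ aI b i) (i+1)) (hnN : n ≤ N) :
    PdLT A (A ⧸ KI b I n) (n+1) := by
  rcases n with _ | n
  · have h0 : KI b I 0 = ⊥ := eq_bot_iff.2 fun x hx => K_lt S H le_rfl S.hg hx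
    rw [h0]
    exact (PdLT.of_projective A).equiv (Submodule.quotEquivOfEqBot _ rfl).symm
  · have hP := Pclaim S H hnN (n+1) (n+2) (by omega) (by omega)
    obtain ⟨e, he1, he2⟩ := Qclaim S H hnN (n+1) le_rfl
    have hv : ∀ p, p < n+1 → Subsingleton (ExtA A (MM I g b (n+1) (n+2)) p) := by
      refine ext_vanish (KI b I (n+1)) (n+1) (fun p hp h => ?_) _ ?_
      · exact_mod_cast K_ht S (n+1) hnN p hp h
      · intro c hc m
        obtain ⟨y, hy, rfl⟩ := qmk_surj m
        rw [qmk_smul, qmk_eq_zero]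
        rcases lt_or_ge (n+1) g with h | h
        · have := K_lt S H le_rfl h hc
          rw [show n + 2 - 1 - g = 0 by omega, pow_zero, mul_one]
          exact Ideal.mul_mem_right _ _ this
        · rw [show n + 2 - g = (n+2-1-g) + 1 by omega] at hy
          exact KI_mul hc _ hy
    have h0 : PdLT A (ExtA A (MM I g b (n+1) (n+2)) 0) 0 := by
      have := hv 0 (by omega)
      exact PdLT.of_subsingleton _ _
    have hD := lemD n 0 (MM I g b (n+1) (n+2)) (hP.mono (by omega)) (fun p _ hp => hv p hp) h0
    let f : A →ₗ[A] ExtA A (MM I g b (n+1) (n+2)) (n+1) := LinearMap.toSpanSingleton A _ e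
    have hf : Function.Surjective f := fun y => by
      obtain ⟨c, rfl⟩ := he1 y
      exact ⟨c, rfl⟩
    have hk : LinearMap.ker f = KI b I (n+1) := by
      ext c
      rw [LinearMap.mem_ker]; exact he2 c
    have e3 := (Submodule.quotEquivOfEq _ _ hk).symm.trans (f.quotKerEquivOfSurjective hf)
    exact (hD.equiv e3.symm).mono (by omega)

theorem aI_pd [IsLocalRing A] (S : Setup A I g b N) (n : ℕ) : n ≤ N → ∀ i ≤ n, PdLT A (A ⧸ aI b i) (i+1) := by
  induction n with
  | zero =>
    intro _ i hi
    obtain rfl : i = 0 := by omega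
    exact (PdLT.of_projective A).equiv (Submodule.quotEquivOfEqBot _ rfl).symm
  | succ n ih =>
    intro hn i hi
    have H := ih (by omega)
    rcases Nat.lt_or_ge i (n+1) with h | h
    · exact H i (by omega)
    obtain rfl : i = n+1 := by omega
    have hK := Main3 S H (by omega)
    let f : (A ⧸ KI b I n) →ₗ[A] (A ⧸ aI b n) := Submodule.mapQ _ _ (LinearMap.lsmul A A (b n)) (by
      intro x hx
      exact (by simpa [mul_comm] using mem_KI.1 hx _ (S.hb n)))
    let q : (A ⧸ aI b n) →ₗ[A] (A ⧸ aI b (n+1)) := Submodule.mapQ _ _ LinearMap.id (aI_le_succ b n)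
    refine PdLT.X3 (f := f) (g := q) ?_ ?_ ?_ hK ((H n le_rfl).mono (by omega))
    · rw [injective_iff_map_eq_zero]
      intro z hz
      obtain ⟨x, rfl⟩ := Submodule.Quotient.mk_surjective _ z
      have : b n * x ∈ aI b n := (Submodule.Quotient.mk_eq_zero _).1 hz
      exact (Submodule.Quotient.mk_eq_zero _).2 (colon_b S H le_rfl (by omega) this)
    · intro z
      obtain ⟨x, rfl⟩ := Submodule.Quotient.mk_surjective _ z
      exact ⟨Submodule.Quotient.mk x, rfl⟩
    · intro z
      obtain ⟨x, rfl⟩ := Submodule.Quotient.mk_surjective _ z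
      have h1 : q (Submodule.Quotient.mk x) = 0 ↔ x ∈ aI b (n+1) := Submodule.Quotient.mk_eq_zero _
      rw [h1, mem_aI_succ]
      constructor
      · rintro ⟨y, hy⟩
        exact ⟨Submodule.Quotient.mk y, ((Submodule.Quotient.eq _).2 hy).symm⟩
      · rintro ⟨w, hw⟩
        obtain ⟨y, rfl⟩ := Submodule.Quotient.mk_surjective _ w
        exact ⟨y, (Submodule.Quotient.eq _).1 hw.symm⟩

/-- Conclusion of the residual intersection argument. -/
theorem C3main [IsLocalRing A] (S : Setup A I g b N) (q : Ideal A) (hq : q.IsPrime)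
    (hass : AssQ (KI b I N) ⊤ q) : q.height ≤ N := by
  have := F1_quot (Main3 S (aI_pd S N le_rfl) le_rfl) q hass
  exact_mod_cast (ENat.lt_natCast_add_one_iff).1 (by exact_mod_cast this)

end C3b


section B1
variable {A : Type u} [CommRing A] [IsNoetherianRing A]
set_option linter.unusedSectionVars false

lemma unif {q : Ideal A} (hq : q.IsPrime) (T Z : Ideal A) (h : ∀ z ∈ T, ∃ h ∉ q, h * z ∈ Z) :
    ∃ h ∉ q, ∀ z ∈ T, h * z ∈ Z := by
  obtain ⟨s, hs⟩ := (isNoetherianRing_iff_ideal_fg A).1 inferInstance T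
  have : ∀ U : Finset A, (U : Set A) ⊆ T → ∃ h0 ∉ q, ∀ r ∈ U, h0 * r ∈ Z := by
    classical
    intro U
    induction U using Finset.induction_on with
    | empty => exact fun _ => ⟨1, (Ideal.ne_top_iff_one _).1 hq.ne_top, by simp⟩
    | insert a U ha ih =>
      intro hT
      rw [Finset.coe_insert, Set.insert_subset_iff] at hT
      obtain ⟨h0, hh0, hh⟩ := ih hT.2
      obtain ⟨h1, hh1, hh'⟩ := h a hT.1
      refine ⟨h0 * h1, fun h => (hq.mem_or_mem h).elim hh0 hh1, fun r hr => ?_⟩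
      rcases Finset.mem_insert.1 hr with rfl | hr
      · rw [mul_assoc]; exact Ideal.mul_mem_left _ _ hh'
      · rw [mul_comm h0, mul_assoc]; exact Ideal.mul_mem_left _ _ (hh r hr)
  obtain ⟨h0, hh0, hh⟩ := this s (hs ▸ Ideal.subset_span)
  refine ⟨h0, hh0, fun r hr => ?_⟩
  rw [← hs] at hr
  refine Submodule.span_induction (p := fun r _ => h0 * r ∈ Z) hh ?_ ?_ ?_ hr
  · simp
  · intro x y _ _ hx hy; rw [mul_add]; exact add_mem hx hy
  · intro a x _ hx; rw [smul_eq_mul, mul_left_comm]; exact Ideal.mul_mem_left _ _ hx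

lemma nak {q : Ideal A} (hq : q.IsPrime) (X Y : Ideal A) (h0 : A) (hh0 : h0 ∉ q)
    (h : ∀ y ∈ Y, h0 * y ∈ X ⊔ q * Y) : ∃ h ∉ q, ∀ y ∈ Y, h * y ∈ X := by
  obtain ⟨p, hm, -, hc, hp⟩ := LinearMap.exists_monic_and_natDegree_eq_and_coeff_mem_pow_and_aeval_eq_zero A
    (algebraMap A (Module.End A (QM X Y)) h0) q (by
      rintro _ ⟨z, rfl⟩
      obtain ⟨y, hy, rfl⟩ := qmk_surj z
      rw [Module.algebraMap_end_apply, qmk_smul]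
      obtain ⟨x, hx, w, hw, he⟩ := Submodule.mem_sup.1 (h y hy)
      have hwY : w ∈ Y := Ideal.mul_le_left (I := Y) (J := q) (by rwa [mul_comm])
      have e1 : qmk X (h0 * y) (Y.mul_mem_left h0 hy) = qmk X w hwY := by
        refine (Submodule.Quotient.eq (Submodule.comap Y.subtype X)).2 ?_
        change h0 * y - w ∈ X
        rw [← he]; simpa using hx
      rw [e1]
      have : ∀ w (hw : w ∈ q * Y), ∃ hwY : w ∈ Y, qmk X w hwY ∈ q • (⊤ : Submodule A (QM X Y)) := by
        intro w hw
        refine Submodule.mul_induction_on hw ?_ ?_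
        · intro m hm n hn
          refine ⟨Y.mul_mem_left _ hn, ?_⟩
          rw [← qmk_smul m n hn]
          exact Submodule.smul_mem_smul hm trivial
        · rintro x y ⟨h1, h2⟩ ⟨h3, h4⟩
          exact ⟨add_mem h1 h3, add_mem h2 h4⟩
      exact (this w hw).2)
  rw [Polynomial.aeval_algebraMap_apply] at hp
  refine ⟨Polynomial.aeval h0 p, fun hmem => ?_, fun y hy => ?_⟩
  · rw [Polynomial.coe_aeval_eq_eval, Polynomial.eval_eq_sum_range, Finset.sum_range_succ,
      hm.coeff_natDegree, one_mul] at hmem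
    have h2 : ∑ i ∈ Finset.range p.natDegree, p.coeff i * h0 ^ i ∈ q := by
      refine Ideal.sum_mem _ fun i hi => Ideal.mul_mem_right _ _ ?_
      have := Finset.mem_range.1 hi
      exact Ideal.pow_le_self (by omega) (hc i)
    exact hh0 (hq.mem_of_pow_mem _ ((Submodule.add_mem_iff_right _ h2).1 hmem))
  · have := LinearMap.congr_fun hp (qmk X y hy)
    rw [Module.algebraMap_end_apply, qmk_smul, LinearMap.zero_apply, qmk_eq_zero] at this
    exact this

lemma avoid (k : Type u) [Field k] [Infinite k] [Algebra k A] (J : Ideal A) (F : Set (Ideal A))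
    (hF : F.Finite) (h : ∀ P ∈ F, ¬ J ≤ P) : ∃ x ∈ J, ∀ P ∈ F, x ∉ P := by
  classical
  let φ : Ideal A → Subspace k J := fun P => (Submodule.comap J.subtype P).restrictScalars k
  have := Subspace.biUnion_ne_univ_of_top_notMem (k := k) (E := J) (s := hF.toFinset.image φ) (by
    intro ht
    obtain ⟨P, hP, he⟩ := Finset.mem_image.1 ht
    refine h P ((Set.Finite.mem_toFinset hF).1 hP) fun x hx => ?_
    have h3 : (⟨x, hx⟩ : J) ∈ φ P := he ▸ Submodule.mem_top
    exact h3)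
  rw [Set.ne_univ_iff_exists_notMem] at this
  obtain ⟨x, hx⟩ := this
  refine ⟨x, x.2, fun P hP hxP => hx ?_⟩
  refine Set.mem_iUnion₂.2 ⟨φ P, Finset.mem_image_of_mem _ ((Set.Finite.mem_toFinset hF).2 hP), hxP⟩

/-- Locally at `q`, `T` is generated by `X`, `Q` and `c` further elements. -/
def Cov (T X Q q : Ideal A) (c : ℕ) : Prop :=
  ∃ s : Finset A, s.card ≤ c ∧ (s : Set A) ⊆ T ∧ ∃ h ∉ q, ∀ z ∈ T, h * z ∈ X ⊔ Ideal.span (s : Set A) ⊔ Q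

lemma Cov.mono {T X X' Q q : Ideal A} {c c' : ℕ} (h : Cov T X Q q c) (hX : X ≤ X') (hc : c ≤ c') :
    Cov T X' Q q c' := by
  obtain ⟨s, h1, h2, h0, h3, h4⟩ := h
  exact ⟨s, h1.trans hc, h2, h0, h3, fun z hz => sup_le_sup_right (sup_le_sup_right hX _) _ (h4 z hz)⟩

lemma Cov.zero {T X q : Ideal A} (h : Cov T X ⊥ q 0) : ∃ h ∉ q, ∀ z ∈ T, h * z ∈ X := by
  obtain ⟨s, h1, h2, h0, h3, h4⟩ := h
  obtain rfl : s = ∅ := Finset.card_eq_zero.1 (by omega)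
  exact ⟨h0, h3, fun z hz => by simpa using h4 z hz⟩

/-- The degenerate elements. -/
def DD (X I q : Ideal A) (hq : q.IsPrime) : Ideal A where
  carrier := {z | ∃ h ∉ q, h * z ∈ X ⊔ q * I}
  zero_mem' := ⟨1, (Ideal.ne_top_iff_one _).1 hq.ne_top, by simp⟩
  add_mem' := by
    rintro x y ⟨h1, h2, h3⟩ ⟨h4, h5, h6⟩
    refine ⟨h1 * h4, fun h => (hq.mem_or_mem h).elim h2 h5, ?_⟩
    rw [show h1 * h4 * (x + y) = h4 * (h1 * x) + h1 * (h4 * y) by ring]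
    exact add_mem (Ideal.mul_mem_left _ _ h3) (Ideal.mul_mem_left _ _ h6)
  smul_mem' := by
    rintro c x ⟨h1, h2, h3⟩
    refine ⟨h1, h2, ?_⟩
    rw [smul_eq_mul, mul_left_comm]; exact Ideal.mul_mem_left _ _ h3

lemma mem_DD {X I q : Ideal A} {hq : q.IsPrime} {z : A} :
    z ∈ DD X I q hq ↔ ∃ h ∉ q, h * z ∈ X ⊔ q * I := Iff.rfl

lemma DD_mono {X X' I q : Ideal A} (hq : q.IsPrime) (h : X ≤ X') : DD X I q hq ≤ DD X' I q hq := by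
  rintro z ⟨h1, h2, h3⟩
  exact ⟨h1, h2, sup_le_sup_right h _ h3⟩

lemma Cov.drop {T X Q I q : Ideal A} (hq : q.IsPrime) {c : ℕ} (h : Cov T X Q q c) (hQ : Q ≤ q * I)
    (hTI : T ≤ I) {b : A} (hb : b ∈ T) (hbD : b ∉ DD X I q hq) :
    Cov T (X ⊔ Ideal.span {b}) Q q (c-1) := by
  classical
  obtain ⟨s, h1, h2, h0, h3, h4⟩ := h
  obtain ⟨z, hz, w, hw, e1⟩ := Submodule.mem_sup.1 (h4 b hb)
  obtain ⟨x, hx, v, hv, rfl⟩ := Submodule.mem_sup.1 hz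
  obtain ⟨f, -, rfl⟩ := Submodule.mem_span_finset.1 hv
  have : ∃ a ∈ s, f a ∉ q := by
    by_contra hc
    push Not at hc
    refine hbD ⟨h0, h3, ?_⟩
    rw [← e1, add_assoc]
    refine Submodule.add_mem_sup hx (add_mem ?_ (hQ hw))
    exact Submodule.sum_mem _ fun a ha => Ideal.mul_mem_mul (hc a ha) (hTI (h2 ha))
  obtain ⟨a, ha, hfa⟩ := this
  refine ⟨s.erase a, by rw [Finset.card_erase_of_mem ha]; omega,
    fun y hy => h2 (Finset.mem_of_mem_erase hy), f a * h0, 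
    fun h => (hq.mem_or_mem h).elim hfa h3, fun z hz => ?_⟩
  set Z := X ⊔ Ideal.span {b} ⊔ Ideal.span ((s.erase a : Finset A) : Set A) ⊔ Q with hZ
  have hXZ : X ≤ Z := le_sup_left.trans (le_sup_left.trans le_sup_left)
  have hbZ : b ∈ Z := (le_sup_right.trans (le_sup_left.trans le_sup_left) : Ideal.span {b} ≤ Z)
    (Ideal.mem_span_singleton_self b)
  have hsZ : ∀ y ∈ s.erase a, y ∈ Z := fun y hy =>
    (le_sup_right.trans le_sup_left : Ideal.span ((s.erase a : Finset A) : Set A) ≤ Z) (Ideal.subset_span hy)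
  have hQZ : Q ≤ Z := le_sup_right
  have haZ : f a * a ∈ Z := by
    rw [← Finset.add_sum_erase s _ ha] at e1
    have : f a * a = h0 * b - x - ∑ y ∈ s.erase a, f y • y - w := by
      rw [← e1]; simp only [smul_eq_mul]; ring
    rw [this]
    refine sub_mem (sub_mem (sub_mem (Ideal.mul_mem_left _ _ hbZ) (hXZ hx)) ?_) (hQZ hw)
    exact Submodule.sum_mem _ fun y hy => Ideal.mul_mem_left _ _ (hsZ y hy)
  obtain ⟨z', hz', w', hw', e2⟩ := Submodule.mem_sup.1 (h4 z hz)
  obtain ⟨x', hx', v', hv', rfl⟩ := Submodule.mem_sup.1 hz'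
  obtain ⟨f', -, rfl⟩ := Submodule.mem_span_finset.1 hv'
  rw [← Finset.add_sum_erase s _ ha] at e2
  rw [mul_assoc, ← e2, mul_add, mul_add, mul_add]
  refine add_mem (add_mem (Ideal.mul_mem_left _ _ (hXZ hx')) (add_mem ?_ ?_)) (Ideal.mul_mem_left _ _ (hQZ hw'))
  · rw [smul_eq_mul, mul_left_comm]; exact Ideal.mul_mem_left _ _ haZ
  · exact Ideal.mul_mem_left _ _ (Submodule.sum_mem _ fun y hy => Ideal.mul_mem_left _ _ (hsZ y hy))

lemma ass_finite (X : Ideal A) : {p : Ideal A | p.IsPrime ∧ AssQ X ⊤ p}.Finite := by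
  refine (associatedPrimes.finite A (A ⧸ X)).subset ?_
  rintro p ⟨hp, y, -, hy⟩
  refine isAssociatedPrime_iff.2 ⟨hp, Ideal.Quotient.mk X y, ?_⟩
  ext r
  rw [← hy, Submodule.mem_colon_singleton, ← Ideal.Quotient.eq_zero_iff_mem, map_mul]
  rfl

end B1


section B2
variable {A : Type u} [CommRing A] [IsNoetherianRing A]
set_option linter.unusedSectionVars false

lemma red_pow {I J : Ideal A} (h : IsReduction J I) {p : Ideal A} (hp : p.IsPrime) (hJ : J ≤ p) : I ≤ p := by
  obtain ⟨-, r, hr⟩ := h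
  have : I^(r+1) ≤ p := hr ▸ (Ideal.mul_le_left : J * I^r ≤ J).trans hJ
  exact hp.le_of_pow_le this

/-- `J : I`. -/
def JI (J I : Ideal A) : Ideal A := J.colon (I : Set A)

lemma mem_JI {J I : Ideal A} {x : A} : x ∈ JI J I ↔ ∀ u ∈ I, x * u ∈ J := by
  simp [JI, Submodule.mem_colon]

lemma aI_congr {b b' : ℕ → A} {i : ℕ} (h : ∀ l < i, b l = b' l) : aI b i = aI b' i := by
  induction i with
  | zero => rfl
  | succ i ih => rw [aI, aI, ih fun l hl => h l (by omega), h i (by omega)]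

lemma nat_of_height_le' {p : Ideal A} {n : ℕ} (h : p.height ≤ n) : ∃ s : ℕ, p.height = s ∧ s ≤ n := by
  obtain ⟨s, hs⟩ := ENat.ne_top_iff_exists.1 (ne_top_of_le_ne_top (ENat.natCast_ne_top n) h)
  refine ⟨s, hs.symm, ?_⟩
  rw [← hs] at h; exact_mod_cast h

/-- The counting invariant. -/
def Inv1 (I a : Ideal A) (N i : ℕ) : Prop :=
  ∀ p : Ideal A, p.IsPrime → I ≤ p → ∀ t : ℕ, p.height = t → t ≤ N → Cov I a ⊥ p (t - i)

lemma step1 (k : Type u) [Field k] [Infinite k] [Algebra k A] {I J : Ideal A} (hJ : IsReduction J I)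
    {N i : ℕ} {a : Ideal A} (ha : a ≤ I) (hinv : Inv1 I a N i)
    (hgood : ∀ p : Ideal A, p.IsPrime → I ≤ p → p.height ≤ N → ¬ JI J I ≤ p)
    {q : Ideal A} (hq : q.IsPrime) :
    ∃ x ∈ J, Inv1 I (a ⊔ Ideal.span {x}) N (i+1) ∧
      (∀ p : Ideal A, p.IsPrime → AssQ a ⊤ p → x ∈ p → I ≤ p) ∧
      (J ≤ DD a I q hq ∨ x ∉ DD a I q hq) := by
  classical
  let L : ℕ → Ideal A := fun c => Ideal.span {h | ∃ s : Finset A, s.card ≤ c ∧ (s : Set A) ⊆ I ∧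
    ∀ z ∈ I, h * z ∈ a ⊔ Ideal.span (s : Set A) ⊔ ⊥}
  have hL : ∀ c (p : Ideal A), Cov I a ⊥ p c ↔ ¬ L c ≤ p := by
    intro c p
    rw [Ideal.span_le, Set.not_subset]
    constructor
    · rintro ⟨s, h1, h2, h0, h3, h4⟩
      exact ⟨h0, ⟨s, h1, h2, h4⟩, h3⟩
    · rintro ⟨h0, ⟨s, h1, h2, h4⟩, h3⟩
      exact ⟨s, h1, h2, h0, h3, h4⟩
  let F1 : Set (Ideal A) := {p | p.IsPrime ∧ AssQ a ⊤ p}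
  let F2 : Set (Ideal A) := ⋃ c ∈ Finset.range N, (L c ⊔ I).minimalPrimes
  have hF2 : F2.Finite := Set.Finite.biUnion (Finset.finite_toSet _)
    fun c _ => Ideal.finite_minimalPrimes_of_isNoetherianRing A _
  have hF2p : ∀ p ∈ F2, p.IsPrime := by
    intro p hp
    obtain ⟨c, -, hp⟩ := Set.mem_iUnion₂.1 hp
    exact hp.1.1
  let D : Ideal A → Ideal A := fun p => if h : p.IsPrime then DD a I p h else ⊥
  have hD : ∀ p (hp : p.IsPrime), D p = DD a I p hp := fun p hp => dif_pos hp
  let F : Set (Ideal A) := {P ∈ F1 ∪ D '' F2 ∪ {D q} | ¬ J ≤ P}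
  obtain ⟨x, hxJ, hx⟩ := avoid k J F ((((ass_finite a).union (hF2.image D)).union
    (Set.finite_singleton _)).subset (Set.sep_subset _ _)) (fun P hP => hP.2)
  refine ⟨x, hxJ, ?_, ?_, ?_⟩
  · intro p hp hIp t ht htN
    rcases Nat.lt_or_ge i t with hit | hit
    · by_cases hc : Cov I a ⊥ p (t - (i+1))
      · exact hc.mono le_sup_left le_rfl
      have hc' : L (t - (i+1)) ≤ p := by
        by_contra h; exact hc ((hL _ _).2 h)
      have hmin : p ∈ (L (t - (i+1)) ⊔ I).minimalPrimes := by
        refine ⟨⟨hp, sup_le hc' hIp⟩, ?_⟩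
        rintro p' ⟨hp', hle⟩ hpp
        by_contra hne
        have hlt : p' < p := lt_of_le_not_ge hpp hne
        have h1 := Ideal.height_add_one_le_of_lt_of_isPrime hlt
        obtain ⟨t', ht', -⟩ := nat_of_height_le' (p := p') (n := t) (ht ▸ Ideal.height_mono hpp)
        rw [ht, ht'] at h1
        norm_cast at h1
        have h2 := (hinv p' hp' (le_sup_right.trans hle) t' ht' (by omega)).mono le_rfl
          (show t' - i ≤ t - (i+1) by omega)
        exact (hL _ _).1 h2 (le_sup_left.trans hle)
      have hpF2 : p ∈ F2 := Set.mem_iUnion₂.2 ⟨t - (i+1), by simp; omega, hmin⟩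
      have hnJ : ¬ J ≤ DD a I p hp := by
        intro hJD
        obtain ⟨h0, hh0, hh0p⟩ := SetLike.not_le_iff_exists.1 (hgood p hp hIp (by rw [ht]; exact_mod_cast htN))
        obtain ⟨h1, hh1, hh⟩ := unif hp I (a ⊔ p * I) (fun z hz => by
          obtain ⟨h1, hh1, hh⟩ := hJD (mem_JI.1 hh0 z hz)
          exact ⟨h1 * h0, fun h => (hp.mem_or_mem h).elim hh1 hh0p, by rwa [mul_assoc]⟩)
        obtain ⟨h2, hh2, hh'⟩ := nak hp a I h1 hh1 hh
        exact hc ⟨∅, by simp, by simp, h2, hh2, fun z hz => by simpa using hh' z hz⟩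
      have hxD : x ∉ DD a I p hp := by
        rw [← hD p hp] at hnJ ⊢
        exact hx _ ⟨Or.inl (Or.inr ⟨p, hpF2, rfl⟩), hnJ⟩
      exact ((hinv p hp hIp t ht htN).drop hp bot_le le_rfl (hJ.1 hxJ) hxD).mono le_rfl (by omega)
    · exact (hinv p hp hIp t ht htN).mono le_sup_left (by omega)
  · intro p hp hass hxp
    by_contra hI
    exact hx p ⟨Or.inl (Or.inl ⟨hp, hass⟩), fun h => hI (red_pow hJ hp h)⟩ hxp
  · by_cases h : J ≤ DD a I q hq
    · exact Or.inl h
    · right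
      rw [← hD q hq] at h ⊢
      exact hx _ ⟨Or.inr rfl, h⟩

theorem seqExists (k : Type u) [Field k] [Infinite k] [Algebra k A] {I J : Ideal A} (hJ : IsReduction J I)
    {N : ℕ} (hG : Inv1 I ⊥ N 0)
    (hgood : ∀ p : Ideal A, p.IsPrime → I ≤ p → p.height ≤ N → ¬ JI J I ≤ p)
    {q : Ideal A} (hq : q.IsPrime) (hcov : Cov J ⊥ (q * I) q N ∨ Cov I ⊥ ⊥ q (N+1)) (n : ℕ) :
    n ≤ N → ∃ b : ℕ → A, (∀ i, b i ∈ J) ∧ (∀ i ≤ n, Inv1 I (aI b i) N i) ∧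
      (∀ i < n, ∀ p : Ideal A, p.IsPrime → AssQ (aI b i) ⊤ p → b i ∈ p → I ≤ p) ∧
      (J ≤ DD (aI b n) I q hq ∨ Cov J (aI b n) (q * I) q (N - n) ∨ Cov I (aI b n) ⊥ q (N + 1 - n)) := by
  induction n with
  | zero =>
    intro _
    refine ⟨fun _ => 0, fun _ => zero_mem _, ?_, by simp, Or.inr hcov⟩
    intro i hi
    obtain rfl : i = 0 := by omega
    exact hG
  | succ n ih =>
    intro hn
    obtain ⟨b, hb, h1, h2, h3⟩ := ih (by omega)
    obtain ⟨x, hx, hx1, hx2, hx3⟩ := step1 k hJ (aI_le (fun i => hJ.1 (hb i)) n) (h1 n le_rfl) hgood hq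
    let b' := Function.update b n x
    have hb' : ∀ i ≤ n, aI b' i = aI b i := fun i hi => aI_congr fun l hl =>
      Function.update_of_ne (by omega) _ _
    have hbn : b' n = x := Function.update_self _ _ _
    have hlast : aI b' (n+1) = aI b n ⊔ Ideal.span {x} := by rw [aI, hb' n le_rfl, hbn]
    refine ⟨b', ?_, ?_, ?_, ?_⟩
    · intro i
      by_cases hi : i = n
      · rw [hi, hbn]; exact hx
      · rw [show b' i = b i from Function.update_of_ne hi _ _]; exact hb i
    · intro i hi
      rcases Nat.lt_or_ge i (n+1) with h | h
      · rw [hb' i (by omega)]; exact h1 i (by omega)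
      · obtain rfl : i = n+1 := by omega
        rw [hlast]; exact hx1
    · intro i hi
      rw [hb' i (by omega)]
      rcases Nat.lt_or_ge i n with h | h
      · rw [show b' i = b i from Function.update_of_ne (by omega) _ _]; exact h2 i h
      · obtain rfl : i = n := by omega
        rw [hbn]; exact hx2
    · rw [hlast]
      rcases hx3 with hD | hD
      · exact Or.inl (hD.trans (DD_mono hq le_sup_left))
      rcases h3 with h3 | h3 | h3
      · exact Or.inl (h3.trans (DD_mono hq le_sup_left))
      · exact Or.inr (Or.inl ((h3.drop hq le_rfl hJ.1 hx hD).mono le_rfl (by omega)))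
      · exact Or.inr (Or.inr ((h3.drop hq bot_le le_rfl (hJ.1 hx) hD).mono le_rfl (by omega)))

end B2

section KeyB

theorem KeyB (k : Type u) [Field k] [Infinite k] {A : Type u} [CommRing A] [IsRegularRing A] [IsLocalRing A]
    [Algebra k A] {I J : Ideal A} (hJ : IsReduction J I)
    {N g : ℕ} (hg : 1 ≤ g) (hI : ∀ p : Ideal A, p.IsPrime → I ≤ p → (g : ℕ∞) ≤ p.height)
    (hF : ∀ j ≤ N+1, PdLT A (↥(I^(j-g))) (max (j-1) 1))
    (hG : Inv1 I ⊥ N 0)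
    (hgood : ∀ p : Ideal A, p.IsPrime → I ≤ p → p.height ≤ N → ¬ JI J I ≤ p)
    {q : Ideal A} (hq : q.IsPrime) (hqN : q.height = (N+1 : ℕ)) (hbad : JI J I ≤ q)
    (hcov : Cov J ⊥ (q * I) q N ∨ Cov I ⊥ ⊥ q (N+1)) : False := by
  obtain ⟨b, hb, h1, h2, h3⟩ := seqExists k hJ hG hgood hq hcov N le_rfl
  have hbI : ∀ i, b i ∈ I := fun i => hJ.1 (hb i)
  have hJD : J ≤ DD (aI b N) I q hq := by
    rcases h3 with h3 | h3 | h3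
    · exact h3
    · obtain ⟨s, e1, e2, h0, e3, e4⟩ := h3
      obtain rfl : s = ∅ := Finset.card_eq_zero.1 (by omega)
      exact fun z hz => ⟨h0, e3, by simpa using e4 z hz⟩
    · by_contra hc
      obtain ⟨x, hx, hxD⟩ := SetLike.not_le_iff_exists.1 hc
      obtain ⟨h0, e1, e2⟩ := ((h3.drop hq bot_le le_rfl (hJ.1 hx) hxD).mono le_rfl
        (show N + 1 - N - 1 ≤ 0 by omega)).zero
      refine e1 (hbad (mem_JI.2 fun u hu => ?_))
      exact sup_le (aI_le hb N) ((Ideal.span_singleton_le_iff_mem _).2 hx) (e2 u hu)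
  have hKJ : KI b I N ≤ q := le_trans (fun x hx => mem_JI.2 fun u hu => aI_le hb N (mem_KI.1 hx u hu)) hbad
  have S : Setup A I g b N := 
    { hg := hg, hI := hI, hb := hbI, hF := hF, h2 := h2
      h1 := by
        intro i hi p hp hIp hpi hK
        obtain ⟨t, ht, hti⟩ := nat_of_height_le hpi
        obtain ⟨h0, e1, e2⟩ := ((h1 i hi p hp hIp t ht (by omega)).mono le_rfl
          (show t - i ≤ 0 by omega)).zero
        exact e1 (hK (mem_KI.2 e2)) }
  obtain ⟨p, hp, hpq⟩ := Ideal.exists_minimalPrimes_le hKJ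
  have hpp := hp.1.1
  have hIp : I ≤ p := by
    obtain ⟨-, r, hr⟩ := id hJ
    obtain ⟨h0, e1, e2⟩ := unif hq J (aI b N ⊔ q * I) hJD
    obtain ⟨h', e3, e4⟩ := nak hq (aI b N * I^r) (I^(r+1)) h0 e1 (by
      intro y hy
      have e5 : aI b N * I^r ⊔ q * I^(r+1) = (aI b N ⊔ q * I) * I^r := by
        rw [Ideal.sup_mul, mul_assoc, pow_succ']
      rw [e5]
      rw [hr] at hy
      refine Submodule.mul_induction_on hy ?_ ?_
      · intro m hm n hn
        rw [← mul_assoc]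
        exact Ideal.mul_mem_mul (e2 m hm) hn
      · intro x y hx hy
        rw [mul_add]; exact add_mem hx hy)
    refine hpp.le_of_pow_le (n := r+1) fun y hy => ?_
    have e6 : h' * y ∈ p := hp.1.2 (mem_KI.2 fun u _ => Ideal.mul_mem_right _ _
      ((Ideal.mul_le_left : aI b N * I^r ≤ aI b N) (e4 y hy)))
    exact (hpp.mem_or_mem e6).resolve_left fun h => e3 (hpq h)
  have hpe : p = q := by
    by_contra hne
    have hlt := lt_of_le_of_ne hpq hne
    have h5 := Ideal.height_add_one_le_of_lt_of_isPrime hlt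
    rw [hqN] at h5
    push_cast at h5
    have h6 : p.height ≤ N := (ENat.add_le_add_iff_right (ENat.natCast_ne_top 1)).1 (by exact_mod_cast h5)
    exact S.h1 N le_rfl p hpp hIp h6 hp.1.2
  subst hpe
  have := C3main S p hpp (assQ_of_minimal hp)
  rw [hqN] at this
  norm_cast at this
  omega

end KeyB


section B3a
open RingTheory.Sequence
variable {A : Type u} [CommRing A] [IsRegularRing A] [IsLocalRing A]
set_option linter.unusedSectionVars false

lemma wr_snoc {c : List A} {x : A} : IsWeaklyRegular A (c ++ [x]) ↔
    IsWeaklyRegular A c ∧ ∀ y, x * y ∈ Ideal.ofList c → y ∈ Ideal.ofList c := by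
  rw [isWeaklyRegular_append_iff]
  refine and_congr_right fun _ => ?_
  have e : (A ⧸ Ideal.ofList c • (⊤ : Submodule A A)) ≃ₗ[A] (A ⧸ Ideal.ofList c) :=
    Submodule.quotEquivOfEq _ _ (by simp)
  rw [isWeaklyRegular_cons_iff, e.isSMulRegular_congr x]
  constructor
  · rintro ⟨h, -⟩ y hy
    rw [← Ideal.Quotient.eq_zero_iff_mem] at hy ⊢
    apply h
    change x • _ = x • _
    rw [smul_zero, ← hy, map_mul]; rfl
  · intro h
    refine ⟨?_, IsWeaklyRegular.nil _ _⟩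
    rw [isSMulRegular_iff_right_eq_zero_of_smul]
    intro y hy
    obtain ⟨y, rfl⟩ := Ideal.Quotient.mk_surjective y
    rw [Ideal.Quotient.eq_zero_iff_mem]
    apply h
    rw [← Ideal.Quotient.eq_zero_iff_mem, map_mul]; exact hy

lemma ofList_snoc (c : List A) (x : A) : Ideal.ofList (c ++ [x]) = Ideal.ofList c ⊔ Ideal.span {x} := by
  rw [Ideal.ofList_append, Ideal.ofList_singleton]

lemma height_ge_of_wr (c : List A) : IsWeaklyRegular A c → ∀ p : Ideal A, p.IsPrime → Ideal.ofList c ≤ p →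
    (c.length : ℕ∞) ≤ p.height := by
  induction c using List.reverseRecOn with
  | nil => intro _ p _ _; simp
  | append_singleton c x ih =>
    intro h p hp hle
    rw [wr_snoc] at h
    rw [ofList_snoc] at hle
    obtain ⟨p', hp', hpp⟩ := Ideal.exists_minimalPrimes_le (le_sup_left.trans hle)
    have hp'p := hp'.1.1
    have h1 := ih h.1 p' hp'.1.1 hp'.1.2
    obtain ⟨y, -, hy⟩ := assQ_of_minimal hp'
    have hx : x ∉ p' := by
      intro hx
      have h2 := h.2 y ((hy x).2 hx)
      exact hp'p.ne_top ((Ideal.eq_top_iff_one _).2 ((hy 1).1 (by simpa using h2)))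
    have hlt : p' < p := lt_of_le_of_ne hpp fun h => hx (h ▸ hle (Ideal.mem_sup_right (Ideal.mem_span_singleton_self x)))
    have := Ideal.height_add_one_le_of_lt_of_isPrime hlt
    refine le_trans ?_ this
    simpa using h1

lemma dim_ass {d : ℕ} (hd : (maximalIdeal A).height = d) (e : ℕ) : ∀ (c : List A), d ≤ c.length + e →
    IsWeaklyRegular A c → (∀ x ∈ c, x ∈ maximalIdeal A) → ∀ p : Ideal A, p.IsPrime → AssQ (Ideal.ofList c) ⊤ p →
    (d : WithBot ℕ∞) ≤ c.length + ringKrullDim (A ⧸ p) := by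
  induction e with
  | zero =>
    intro c hlen _ _ p hp _
    have : 0 ≤ ringKrullDim (A ⧸ p) := by
      have := Ideal.Quotient.nontrivial_iff.2 hp.ne_top
      exact ringKrullDim_nonneg_of_nontrivial
    calc (d : WithBot ℕ∞) ≤ (c.length : WithBot ℕ∞) := by exact_mod_cast hlen
      _ = c.length + 0 := by simp
      _ ≤ _ := by gcongr
  | succ e ih =>
    intro c hlen hreg hc p hp hass
    by_cases hlt : d ≤ c.length
    · exact ih c (by omega) hreg hc p hp hass
    have key : ∃ x ∈ maximalIdeal A, ∀ y, x * y ∈ Ideal.ofList c → y ∈ Ideal.ofList c := by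
      by_contra hno
      push Not at hno
      have hsub : ((maximalIdeal A : Ideal A) : Set A) ⊆
          ⋃ p ∈ {p : Ideal A | p.IsPrime ∧ AssQ (Ideal.ofList c) ⊤ p}, (p : Set A) := by
        intro x hx
        obtain ⟨y, hy1, hy2⟩ := hno x hx
        obtain ⟨p', hp', hle, ht⟩ := exists_assQ (Ideal.ofList c) y hy2
        refine Set.mem_biUnion (x := p') ⟨hp', hle * y, trivial, ht⟩ ((ht x).1 ?_)
        rw [mul_left_comm]; exact Ideal.mul_mem_left _ _ hy1
      obtain ⟨p, ⟨hpp, hp⟩, hLp⟩ := (Ideal.subset_union_prime_finite (ass_finite (Ideal.ofList c)) (f := id) ⊥ ⊥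
        (fun p hp _ _ => hp.1)).1 hsub
      have h1 := F1_quot (pdLT_ofList c hreg hc) p hp
      have h2 := (Ideal.height_mono hLp).trans_lt h1
      rw [hd] at h2
      have : d < c.length + 1 := by exact_mod_cast h2
      omega
    obtain ⟨x, hx, hxr⟩ := key
    obtain ⟨y, -, hy⟩ := hass
    have hyc : y ∉ Ideal.ofList c := fun h => hp.ne_top ((Ideal.eq_top_iff_one _).2 ((hy 1).1 (by simpa using h)))
    have hxp : x ∉ p := fun h => hyc (hxr y ((hy x).2 h))
    let H : Ideal A := 
      { carrier := {z | ∀ r ∈ p, r * z ∈ Ideal.ofList c}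
        zero_mem' := by intro r _; simp
        add_mem' := by intro a b ha hb r hr; rw [mul_add]; exact add_mem (ha r hr) (hb r hr)
        smul_mem' := by
          intro s z hz r hr
          rw [smul_eq_mul, mul_left_comm]; exact Ideal.mul_mem_left _ _ (hz r hr) }
    have hH : ¬ H ≤ Ideal.ofList c ⊔ Ideal.span {x} := by
      intro hle
      refine hyc ?_
      have : H ≤ Ideal.ofList c := by
        refine Submodule.le_of_le_smul_of_le_jacobson_bot (I := maximalIdeal A) (IsNoetherian.noetherian H)
          (by rw [IsLocalRing.jacobson_eq_maximalIdeal _ bot_ne_top]) ?_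
        intro z hz
        obtain ⟨u, hu, v, hv, rfl⟩ := Submodule.mem_sup.1 (hle hz)
        obtain ⟨w, rfl⟩ := Ideal.mem_span_singleton'.1 hv
        refine Submodule.add_mem_sup hu ?_
        rw [mul_comm]
        refine Submodule.smul_mem_smul hx fun r hr => hxr _ ?_
        have h1 := hz r hr
        rw [mul_add] at h1
        have h2 := (Submodule.add_mem_iff_right _ (Ideal.mul_mem_left _ r hu)).1 h1
        convert h2 using 1; ring
      exact this fun r hr => (hy r).2 hr
    obtain ⟨w, hwH, hw⟩ := SetLike.not_le_iff_exists.1 hH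
    obtain ⟨p', hp', t, ht⟩ := exists_assQ _ w hw
    rw [← ofList_snoc] at ht
    have hpp' : p ≤ p' := by
      intro r hr
      refine (ht r).1 ?_
      rw [ofList_snoc, mul_left_comm]
      exact Ideal.mul_mem_left _ _ (Ideal.mem_sup_left (hwH r hr))
    have hxp' : x ∈ p' := by
      refine (ht x).1 ?_
      rw [ofList_snoc]
      exact Ideal.mul_mem_right _ _ (Ideal.mem_sup_right (Ideal.mem_span_singleton_self x))
    have h1 := ih (c ++ [x]) (by simp; omega) (wr_snoc.2 ⟨hreg, hxr⟩) (by
      intro z hz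
      rcases List.mem_append.1 hz with hz | hz
      · exact hc z hz
      · simp at hz; rwa [hz]) p' hp' ⟨t * w, trivial, ht⟩
    have h2 := ringKrullDim_succ_le_of_surjective (Ideal.Quotient.factor hpp') (Ideal.Quotient.factor_surjective hpp')
      (r := Ideal.Quotient.mk p x) (by
        rw [mem_nonZeroDivisors_iff_ne_zero, Ne, Ideal.Quotient.eq_zero_iff_mem]; exact hxp)
      (by rw [Ideal.Quotient.factor_mk, Ideal.Quotient.eq_zero_iff_mem]; exact hxp')
    refine h1.trans ?_
    rw [List.length_append]
    simp only [List.length_singleton]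
    push_cast
    rw [add_assoc, add_comm 1]
    gcongr

lemma dim_quot_prime {d g : ℕ} (hd : (maximalIdeal A).height = d) {p : Ideal A} (hp : p.IsPrime)
    (hg : p.height = g) : (d : WithBot ℕ∞) ≤ g + ringKrullDim (A ⧸ p) := by
  obtain ⟨c, hc, reg, hlen⟩ := exists_regular_of_height p hp.ne_top g
    (fun q hq hle => hg ▸ Ideal.height_mono hle)
  have hcp : Ideal.ofList c ≤ p := Ideal.span_le.2 hc
  obtain ⟨p', hp', hpp⟩ := Ideal.exists_minimalPrimes_le hcp
  have hp'p := hp'.1.1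
  have h1 := height_ge_of_wr c reg p' hp'p hp'.1.2
  have : p' = p := by
    by_contra hne
    have := Ideal.height_add_one_le_of_lt_of_isPrime (lt_of_le_of_ne hpp hne)
    rw [hg] at this
    have h3 := (add_le_add_left h1 1).trans this
    rw [hlen] at h3
    have : g + 1 ≤ g := by exact_mod_cast h3
    omega
  subst this
  have := dim_ass hd d c (by omega) reg (fun x hx => le_maximalIdeal hp.ne_top (hc x hx)) p' hp (assQ_of_minimal hp')
  rwa [hlen] at this

end B3a


section B3b
open RingTheory.Sequence
variable {A : Type u} [CommRing A]
set_option linter.unusedSectionVars false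

lemma rDim_loc (p : PrimeSpectrum A) : rDim (Localization.AtPrime p.asIdeal) = (p.asIdeal.height : WithBot ℕ∞) :=
  IsLocalization.AtPrime.ringKrullDim_eq_height _ _

lemma muE_le_iff {M : Type v} [AddCommGroup M] [Module A M] (N : Submodule A M) (t : ℕ) :
    muE N ≤ t ↔ ∃ s : Finset M, s.card ≤ t ∧ Submodule.span A (s : Set M) = N := by
  constructor
  · intro h
    by_contra hc
    push Not at hc
    have : ((t + 1 : ℕ) : ℕ∞) ≤ muE N := by
      refine le_sInf ?_
      rintro n ⟨s, rfl, hs⟩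
      have : ¬ s.card ≤ t := fun h => hc s h hs
      exact_mod_cast (by omega : t + 1 ≤ s.card)
    have := this.trans h
    norm_cast at this
    omega
  · rintro ⟨s, hs, h⟩
    have h1 : muE N ≤ (s.card : ℕ∞) := sInf_le ⟨s, rfl, h⟩
    exact h1.trans (by exact_mod_cast hs)

lemma gcond_cov [IsNoetherianRing A] {I : Ideal A} {d : ℕ} (hG : Gcond I d) (p : Ideal A) (hp : p.IsPrime) (hIp : I ≤ p)
    (t : ℕ) (ht : p.height = t) (htd : t < d) : Cov I ⊥ ⊥ p t := by
  classical
  have h := hG ⟨p, hp⟩ hIp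
  rw [rDim_loc] at h
  simp only [ht] at h
  have h1 : muE (Ideal.map (algebraMap A (Localization.AtPrime p)) I) ≤ (t : ℕ∞) :=
    WithBot.coe_le_coe.1 (h (by exact_mod_cast htd))
  obtain ⟨s', hs', hspan⟩ := (muE_le_iff _ _).1 h1
  have hch : ∀ y : Localization.AtPrime p, ∃ a ∈ I, y ∈ s' → ∃ v : p.primeCompl,
      y * algebraMap A (Localization.AtPrime p) v = algebraMap A _ a := by
    intro y
    by_cases hy : y ∈ s'
    · have : y ∈ Ideal.map (algebraMap A (Localization.AtPrime p)) I := hspan ▸ Submodule.subset_span hy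
      obtain ⟨⟨a, v⟩, hav⟩ := (IsLocalization.mem_map_algebraMap_iff p.primeCompl _).1 this
      exact ⟨a, a.2, fun _ => ⟨v, hav⟩⟩
    · exact ⟨0, zero_mem _, fun h => absurd h hy⟩
  choose a haI ha using hch
  refine ⟨s'.image a, Finset.card_image_le.trans hs', ?_, ?_⟩
  · intro x hx
    obtain ⟨y, -, rfl⟩ := Finset.mem_image.1 (Finset.mem_coe.1 hx)
    exact haI y
  · refine unif hp I _ fun z hz => ?_
    have hz' : algebraMap A (Localization.AtPrime p) z ∈ Ideal.map (algebraMap A (Localization.AtPrime p))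
        (Ideal.span ((s'.image a : Finset A) : Set A)) := by
      have h2 := Ideal.mem_map_of_mem (algebraMap A (Localization.AtPrime p)) hz
      rw [← hspan] at h2
      refine (Submodule.span_le.2 ?_ : Submodule.span _ (s' : Set (Localization.AtPrime p)) ≤ _) h2
      intro y hy
      obtain ⟨v, hv⟩ := ha y hy
      have h3 : algebraMap A (Localization.AtPrime p) (a y) ∈ Ideal.map (algebraMap A (Localization.AtPrime p))
        (Ideal.span ((s'.image a : Finset A) : Set A)) :=
        Ideal.mem_map_of_mem _ (Ideal.subset_span (Finset.mem_coe.2 (Finset.mem_image_of_mem a hy)))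
      rw [← hv] at h3
      exact (Ideal.mul_unit_mem_iff_mem _ (IsLocalization.map_units _ v)).1 h3
    obtain ⟨m, hm, h4⟩ := (IsLocalization.algebraMap_mem_map_algebraMap_iff p.primeCompl _ _ _).1 hz'
    exact ⟨m, hm, by simpa using h4⟩

lemma ht_spec {I : Ideal A} {g : ℕ} (h : ht I = g) :
    (∀ p : Ideal A, p.IsPrime → I ≤ p → (g : ℕ∞) ≤ p.height) ∧
    ∃ p : Ideal A, p.IsPrime ∧ I ≤ p ∧ p.height = g := by
  have h1 : ∀ p : Ideal A, p.IsPrime → I ≤ p → (g : ℕ∞) ≤ p.height := by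
    intro p hp hle
    have : ht I ≤ rDim (Localization.AtPrime p) := iInf₂_le (⟨p, hp⟩ : PrimeSpectrum A) hle
    rw [h, rDim_loc ⟨p, hp⟩] at this
    exact WithBot.coe_le_coe.1 this
  refine ⟨h1, ?_⟩
  by_contra hc
  push Not at hc
  have : (((g + 1 : ℕ) : ℕ∞) : WithBot ℕ∞) ≤ ht I := by
    refine le_iInf₂ fun p hp => ?_
    rw [rDim_loc]
    refine WithBot.coe_le_coe.2 ?_
    have := lt_of_le_of_ne (h1 _ p.2 hp) (hc _ p.2 hp).symm
    push_cast
    exact Order.add_one_le_of_lt this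
  rw [h] at this
  have := WithBot.coe_le_coe.1 this
  norm_cast at this
  omega

lemma depth_spec [IsLocalRing A] {K : Ideal A} {d c : ℕ} (hcd : c ≤ d) (h : ((d + 1 : ℕ) : WithBot ℕ∞) ≤ (c : WithBot ℕ∞) + (qDepth A K : WithBot ℕ∞)) :
    ∃ rs : List A, (∀ x ∈ rs, x ∈ maximalIdeal A) ∧ IsWeaklyRegular (A ⧸ K) rs ∧ d + 1 ≤ rs.length + c := by
  by_contra hc
  push Not at hc
  have h1 : qDepth A K ≤ ((d - c : ℕ) : ℕ∞) := by
    refine sSup_le ?_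
    rintro n ⟨rs, h1, h2, rfl⟩
    have := hc rs h1 h2.toIsWeaklyRegular
    exact_mod_cast (by omega : rs.length ≤ d - c)
  have h2 : ((d + 1 : ℕ) : WithBot ℕ∞) ≤ (c : WithBot ℕ∞) + (((d - c : ℕ) : ℕ∞) : WithBot ℕ∞) :=
    h.trans (by gcongr; exact WithBot.coe_le_coe.2 h1)
  have h3 : d + 1 ≤ c + (d - c) := by exact_mod_cast h2
  omega

theorem hF_of [IsRegularRing A] [IsLocalRing A] {d g : ℕ} (hd : (maximalIdeal A).height = d)
    {I : Ideal A} (hg1 : 1 ≤ g) (hht : ht I = g)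
    (hdepth : ∀ j : ℕ, 1 ≤ j → j ≤ d - g → rDim (A ⧸ I) + 1 ≤ (qDepth A (I ^ j) : WithBot ℕ∞) + (j : WithBot ℕ∞)) :
    ∀ j ≤ d, PdLT A (↥(I^(j-g))) (max (j-1) 1) := by
  intro j hj
  rcases le_or_gt j g with hjg | hjg
  · rw [Nat.sub_eq_zero_of_le hjg, pow_zero, Ideal.one_eq_top]
    refine PdLT.mono (le_max_right _ _) ?_
    exact (PdLT.of_projective (A := A) A).equiv Submodule.topEquiv.symm
  obtain ⟨t, rfl⟩ : ∃ t, j = g + t := ⟨j - g, by omega⟩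
  have hreg : IsRegularLocalRing A := IsRegularLocalRing.of_isRegularRing_of_isLocalRing A
  have hdim : ringKrullDim A = d := by
    rw [← IsLocalRing.maximalIdeal_height_eq_ringKrullDim, hd]; rfl
  obtain ⟨X, h1, h2, h3⟩ := exists_regular_seq d A hdim
  obtain ⟨p, hp, hIp, hpg⟩ := (ht_spec hht).2
  have h4 := dim_quot_prime hd hp hpg
  have h5 : ringKrullDim (A ⧸ p) ≤ rDim (A ⧸ I) :=
    ringKrullDim_le_of_surjective (Ideal.Quotient.factor hIp) (Ideal.Quotient.factor_surjective hIp)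
  have h6 := hdepth t (by omega) (by omega)
  have h7 : ((d + 1 : ℕ) : WithBot ℕ∞) ≤ ((g + t : ℕ) : WithBot ℕ∞) + (qDepth A (I ^ t) : WithBot ℕ∞) := by
    push_cast
    calc (d : WithBot ℕ∞) + 1 ≤ g + ringKrullDim (A ⧸ p) + 1 := by gcongr
      _ ≤ g + rDim (A ⧸ I) + 1 := by gcongr
      _ = g + (rDim (A ⧸ I) + 1) := by rw [add_assoc]
      _ ≤ g + ((qDepth A (I ^ t) : WithBot ℕ∞) + t) := by gcongr
      _ = _ := by rw [add_comm (qDepth A (I ^ t) : WithBot ℕ∞), add_assoc]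
  obtain ⟨rs, e1, e2, e3⟩ := depth_spec (by omega) h7
  have h8 := pdLT_of_regular X h1 h2 (A ⧸ I^t) rs e2 e1 (g+t) (by omega)
  have h9 : PdLT A (↥(I^t)) (g + t - 1) := by
    refine PdLT.X1 (f := (I^t).subtype) (g := (I^t).mkQ) (Submodule.injective_subtype _) (Submodule.mkQ_surjective _)
      ?_ ((PdLT.of_projective A).mono (by omega)) (h8.mono (by omega))
    exact LinearMap.exact_subtype_mkQ (I^t)
  rw [show g + t - g = t by omega]
  exact h9.mono (le_max_left _ _)

theorem Key (k : Type u) [Field k] [Infinite k] [IsRegularRing A] [IsLocalRing A] [IsDomain A]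
    [Algebra k A] {d g : ℕ} (hd1 : 1 ≤ d) (hd : (maximalIdeal A).height = d)
    {I : Ideal A} (hI0 : I ≠ ⊥) (hht : ht I = g) (hG : Gcond I d)
    (hdepth : ∀ j : ℕ, 1 ≤ j → j ≤ d - g → rDim (A ⧸ I) + 1 ≤ (qDepth A (I ^ j) : WithBot ℕ∞) + (j : WithBot ℕ∞)) :
    (∀ J, IsReduction J I → ∀ q : Ideal A, q.IsPrime → q.height < d → ¬ JI J I ≤ q) ∧
    (∀ J, IsReduction J I → J ≠ I → ¬ Cov J ⊥ (maximalIdeal A * I) (maximalIdeal A) (d-1)) := by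
  have hJJI : ∀ J : Ideal A, J ≤ JI J I := fun J x hx => mem_JI.2 fun u _ => Ideal.mul_mem_right _ _ hx
  have hge := (ht_spec hht).1
  have hg1 : 1 ≤ g := by
    by_contra h
    obtain rfl : g = 0 := by omega
    obtain ⟨p, hp, hIp, hpg⟩ := (ht_spec hht).2
    have : p = ⊥ := Ideal.height_eq_zero_iff_eq_bot.1 (by simpa using hpg)
    exact hI0 (le_bot_iff.1 (this ▸ hIp))
  have hF := hF_of hd hg1 hht hdepth
  have P1 : ∀ J, IsReduction J I → ∀ n < d, ∀ q : Ideal A, q.IsPrime → q.height = n → ¬ JI J I ≤ q := by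
    intro J hJ n
    induction n using Nat.strong_induction_on with
    | _ n ih =>
      intro hn q hq hqn hle
      have hIq := red_pow hJ hq ((hJJI J).trans hle)
      have h1 := hge q hq hIq
      rw [hqn] at h1
      have h2 : g ≤ n := by exact_mod_cast h1
      obtain ⟨N, rfl⟩ : ∃ N, n = N + 1 := ⟨n - 1, by omega⟩
      refine KeyB k hJ hg1 hge (fun j hj => hF j (by omega)) ?_ ?_ hq hqn hle (Or.inr ?_)
      · intro p hp hIp t ht htN
        exact gcond_cov hG p hp hIp t ht (by omega)
      · intro p hp hIp hpN
        obtain ⟨s, hs, hsN⟩ := nat_of_height_le hpN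
        exact ih s (by omega) (by omega) p hp hs
      · exact gcond_cov hG q hq hIq _ hqn hn
  refine ⟨fun J hJ q hq hqd => ?_, fun J hJ hne hcov => ?_⟩
  · obtain ⟨s, hs, hsN⟩ := nat_of_height_le hqd.le
    refine P1 J hJ s ?_ q hq hs
    rw [hs] at hqd
    exact_mod_cast hqd
  · obtain ⟨N, rfl⟩ : ∃ N, d = N + 1 := ⟨d - 1, by omega⟩
    refine KeyB k hJ hg1 hge (fun j hj => hF j hj) ?_ ?_ inferInstance hd (le_maximalIdeal ?_) (Or.inl hcov)
    · intro p hp hIp t ht htN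
      exact gcond_cov hG p hp hIp t ht (by omega)
    · intro p hp hIp hpN
      obtain ⟨s, hs, hsN⟩ := nat_of_height_le hpN
      exact P1 J hJ s (by omega) p hp hs
    · intro h
      have h1 : (1 : A) ∈ JI J I := h ▸ trivial
      exact hne (le_antisymm hJ.1 fun u hu => by simpa using mem_JI.1 h1 u hu)

end B3b


section P1
variable {k : Type u} [Field k] {A : Type u} [CommRing A] [IsLocalRing A] [IsNoetherianRing A] [Algebra k A]
set_option linter.unusedSectionVars false

/-- constant vectors -/
def cl (A : Type u) [CommRing A] [Algebra k A] {n : ℕ} (c : Fin n → k) : Fin n → A := fun i => algebraMap k A (c i)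

lemma const_mem {c : k} (h : algebraMap k A c ∈ maximalIdeal A) : c = 0 := by
  by_contra hc
  exact (mem_maximalIdeal _).1 h ((isUnit_iff_ne_zero.2 hc).map _)

lemma cl_dot {n : ℕ} (c c' : Fin n → k) : dotProduct (cl A c) (cl A c') = algebraMap k A (dotProduct c c') := by
  simp [cl, dotProduct, map_sum]

/-- `J_λ` -/
def Jl {n : ℕ} (a : Fin n → A) (l : Fin n → k) : Ideal A where
  carrier := {y | ∃ w : Fin n → A, dotProduct (cl A l) w = 0 ∧ dotProduct w a = y}
  zero_mem' := ⟨0, by simp, by simp⟩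
  add_mem' := by
    rintro _ _ ⟨w, h1, rfl⟩ ⟨w', h2, rfl⟩
    exact ⟨w + w', by rw [dotProduct_add, h1, h2, add_zero], by rw [add_dotProduct]⟩
  smul_mem' := by
    rintro s _ ⟨w, h1, rfl⟩
    exact ⟨s • w, by rw [dotProduct_smul, h1, smul_zero], by rw [smul_dotProduct]⟩

lemma mem_Jl {n : ℕ} {a : Fin n → A} {l : Fin n → k} {y : A} : y ∈ Jl a l ↔
    ∃ w : Fin n → A, dotProduct (cl A l) w = 0 ∧ dotProduct w a = y := Iff.rfl

/-- the ideal `E_λ` -/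
def El {n m : ℕ} (φ : Matrix (Fin n) (Fin m) A) (l : Fin n → k) : Ideal A :=
  Ideal.span (Set.range (Matrix.vecMul (cl A l) φ))

lemma mem_span_range_dot {m : ℕ} {v : Fin m → A} {y : A} : y ∈ Ideal.span (Set.range v) ↔ ∃ z, dotProduct v z = y := by
  rw [Ideal.mem_span_range_iff_exists_fun]
  simp only [dotProduct, mul_comm]

lemma mem_El {n m : ℕ} {φ : Matrix (Fin n) (Fin m) A} {l : Fin n → k} {y : A} :
    y ∈ El φ l ↔ ∃ z, dotProduct (cl A l) (Matrix.mulVec φ z) = y := by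
  rw [El, mem_span_range_dot]
  simp only [Matrix.dotProduct_mulVec]

/-- The data. -/
structure Dat (k : Type u) [Field k] {A : Type u} [CommRing A] [IsLocalRing A] [Algebra k A] (d m : ℕ) (I : Ideal A)
    (a : Fin (d+1) → A) (φ : Matrix (Fin (d+1)) (Fin m) A) (C : Fin (d+1) → Fin m → Fin d → k) (x : Fin d → A) : Prop where
  hres : ∀ y : A, ∃ c : k, y - algebraMap k A c ∈ maximalIdeal A
  hx : Ideal.span (Set.range x) = maximalIdeal A
  hφ : ∀ i j, φ i j = dotProduct (cl A (C i j)) x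
  hI : I = Ideal.span (Set.range a)
  hker : ∀ w, dotProduct w a = 0 ↔ ∃ z, Matrix.mulVec φ z = w
  hd : (maximalIdeal A).height = d
  hd1 : 1 ≤ d
  H1 : ∀ J, IsReduction J I → ∀ q : Ideal A, q.IsPrime → q.height < d → ¬ JI J I ≤ q
  H2 : ∀ J, IsReduction J I → J ≠ I → ¬ Cov J ⊥ (maximalIdeal A * I) (maximalIdeal A) (d-1)

variable {d m : ℕ} {I : Ideal A} {a : Fin (d+1) → A} {φ : Matrix (Fin (d+1)) (Fin m) A}
  {C : Fin (d+1) → Fin m → Fin d → k} {x : Fin d → A}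

namespace Dat
variable (D : Dat k d m I a φ C x)
include D

lemma resv {n : ℕ} (w : Fin n → A) : ∃ c : Fin n → k, ∀ i, w i - cl A c i ∈ maximalIdeal A := by
  choose c hc using fun i => D.hres (w i)
  exact ⟨c, hc⟩

lemma mem_I {y : A} : y ∈ I ↔ ∃ w, dotProduct w a = y := by
  rw [D.hI, mem_span_range_dot]
  simp only [dotProduct_comm]

lemma φ_mem (i j) : φ i j ∈ maximalIdeal A := by
  rw [D.hφ, ← D.hx, mem_span_range_dot]
  exact ⟨_, dotProduct_comm _ _⟩

lemma mulVec_mem (z i) : Matrix.mulVec φ z i ∈ maximalIdeal A := by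
  rw [Matrix.mulVec, dotProduct]
  exact Ideal.sum_mem _ fun j _ => Ideal.mul_mem_right _ _ (D.φ_mem i j)

lemma dot_mem_mI {w : Fin (d+1) → A} (h : ∀ i, w i ∈ maximalIdeal A) : dotProduct w a ∈ maximalIdeal A * I :=
  Ideal.sum_mem _ fun i _ => Ideal.mul_mem_mul (h i) (D.hI ▸ Ideal.subset_span ⟨i, rfl⟩)

lemma mem_mI {y : A} : y ∈ maximalIdeal A * I ↔ ∃ w, (∀ i, w i ∈ maximalIdeal A) ∧ dotProduct w a = y := by
  constructor
  · intro h
    refine Submodule.mul_induction_on h ?_ ?_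
    · intro s hs y hy
      obtain ⟨w, rfl⟩ := D.mem_I.1 hy
      exact ⟨s • w, fun i => Ideal.mul_mem_right _ _ hs, by rw [smul_dotProduct]; rfl⟩
    · rintro _ _ ⟨w, h1, rfl⟩ ⟨w', h2, rfl⟩
      exact ⟨w + w', fun i => add_mem (h1 i) (h2 i), add_dotProduct _ _ _⟩
  · rintro ⟨w, hw, rfl⟩
    exact D.dot_mem_mI hw

lemma dot_mem_Jl {l : Fin (d+1) → k} {w : Fin (d+1) → A} : dotProduct w a ∈ Jl a l ↔ dotProduct (cl A l) w ∈ El φ l := by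
  rw [mem_Jl, mem_El]
  constructor
  · rintro ⟨w', h1, h2⟩
    obtain ⟨z, hz⟩ := (D.hker (w - w')).1 (by rw [sub_dotProduct, h2, sub_self])
    exact ⟨z, by rw [hz, dotProduct_sub, h1, sub_zero]⟩
  · rintro ⟨z, hz⟩
    refine ⟨w - Matrix.mulVec φ z, by rw [dotProduct_sub, hz, sub_self], ?_⟩
    rw [sub_dotProduct, (D.hker _).2 ⟨z, rfl⟩, sub_zero]

lemma Jl_le (l : Fin (d+1) → k) : Jl a l ≤ I := by
  rintro _ ⟨w, -, rfl⟩
  exact D.mem_I.2 ⟨w, rfl⟩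

lemma El_le (l : Fin (d+1) → k) : El φ l ≤ maximalIdeal A := by
  intro y hy
  obtain ⟨z, rfl⟩ := mem_El.1 hy
  exact Ideal.sum_mem _ fun i _ => Ideal.mul_mem_left _ _ (D.mulVec_mem z i)

lemma JI_Jl {l : Fin (d+1) → k} (hl : l ≠ 0) : JI (Jl a l) I ≤ El φ l := by
  intro y hy
  obtain ⟨i, hi⟩ := Function.ne_iff.1 hl
  have h1 := mem_JI.1 hy (dotProduct (cl A (Pi.single i (l i)⁻¹)) a) (D.mem_I.2 ⟨_, rfl⟩)
  rw [← smul_eq_mul, ← smul_dotProduct, D.dot_mem_Jl, dotProduct_smul, cl_dot] at h1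
  have hi' : l i ≠ 0 := hi
  simpa [hi'] using h1

lemma Jl_ne {l : Fin (d+1) → k} (hl : l ≠ 0) : Jl a l ≠ I := by
  intro h
  have : (1 : A) ∈ JI (Jl a l) I := mem_JI.2 fun u hu => by rw [h]; simpa using hu
  exact (maximalIdeal.isMaximal A).ne_top ((Ideal.eq_top_iff_one _).2 (D.El_le l (D.JI_Jl hl this)))

/-- the coefficient vectors of the linear forms `ℓ_j(λ)`. -/
lemma vecMul_eq (l : Fin (d+1) → k) (j) : Matrix.vecMul (cl A l) φ j =
    dotProduct (cl A (fun t => ∑ i, l i * C i j t)) x := by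
  simp only [Matrix.vecMul, dotProduct, D.hφ, cl, map_sum, map_mul, Finset.mul_sum, Finset.sum_mul, mul_assoc]
  rw [Finset.sum_comm]

lemma spanV {l : Fin (d+1) → k} (hl : l ≠ 0) (hred : IsReduction (Jl a l) I) :
    Submodule.span k (Set.range fun j => (fun t => ∑ i, l i * C i j t : Fin d → k)) = ⊤ := by
  classical
  by_contra hne
  set V := Submodule.span k (Set.range fun j => (fun t => ∑ i, l i * C i j t : Fin d → k)) with hV
  have hlt : Module.finrank k V < d := by
    have := Submodule.finrank_lt hne
    simpa using this
  let b := Module.finBasis k V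
  let s : Finset A := Finset.univ.image fun i => dotProduct (cl A (b i : Fin d → k)) x
  have hs : s.card < d := (Finset.card_image_le.trans_eq (by simp)).trans_lt hlt
  have hsm : Ideal.span (s : Set A) ≤ maximalIdeal A := by
    refine Ideal.span_le.2 fun y hy => ?_
    obtain ⟨i, -, rfl⟩ := Finset.mem_image.1 (Finset.mem_coe.1 hy)
    rw [SetLike.mem_coe, ← D.hx, mem_span_range_dot]
    exact ⟨_, dotProduct_comm _ _⟩
  obtain ⟨q, hq, hqm⟩ := Ideal.exists_minimalPrimes_le hsm
  have hqp := hq.1.1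
  have hh : q.height ≤ s.card := Ideal.height_le_card_of_mem_minimalPrimes_span_finset hq
  have hE : El φ l ≤ Ideal.span (s : Set A) := by
    refine Ideal.span_le.2 ?_
    rintro _ ⟨j, rfl⟩
    have hj : (fun t => ∑ i, l i * C i j t : Fin d → k) ∈ V := Submodule.subset_span ⟨j, rfl⟩
    rw [SetLike.mem_coe, D.vecMul_eq]
    have hb := b.sum_repr ⟨_, hj⟩
    have hb' : (fun t => ∑ i, l i * C i j t : Fin d → k) = ∑ i, b.repr ⟨_, hj⟩ i • (b i : Fin d → k) := by
      have := congrArg Subtype.val hb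
      rw [Submodule.coe_sum] at this
      exact this.symm
    rw [hb']
    have : cl A (∑ i, b.repr ⟨_, hj⟩ i • (b i : Fin d → k)) =
        ∑ i, algebraMap k A (b.repr ⟨_, hj⟩ i) • cl A (b i : Fin d → k) := by
      ext t; simp [cl, map_sum, Algebra.smul_def]
    rw [this, sum_dotProduct]
    refine Ideal.sum_mem _ fun i _ => ?_
    rw [smul_dotProduct]
    exact Ideal.mul_mem_left _ _ (Ideal.subset_span (Finset.mem_coe.2 (Finset.mem_image_of_mem _ (Finset.mem_univ i))))
  exact D.H1 _ hred q hqp (hh.trans_lt (by exact_mod_cast hs)) ((D.JI_Jl hl).trans (hE.trans hq.1.2))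

lemma El_eq {l : Fin (d+1) → k} (hl : l ≠ 0) (hred : IsReduction (Jl a l) I) : El φ l = maximalIdeal A := by
  classical
  refine le_antisymm (D.El_le l) ?_
  have hV := D.spanV hl hred
  have : ∀ c : Fin d → k, dotProduct (cl A c) x ∈ El φ l := by
    intro c
    have hc : c ∈ Submodule.span k (Set.range fun j => (fun t => ∑ i, l i * C i j t : Fin d → k)) := hV ▸ trivial
    induction hc using Submodule.span_induction with
    | mem c hc =>
      obtain ⟨j, rfl⟩ := hc
      dsimp only
      rw [← D.vecMul_eq]
      exact Ideal.subset_span ⟨j, rfl⟩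
    | zero => 
      have : cl A (0 : Fin d → k) = 0 := by ext; simp [cl]
      simp [this]
    | add c c' _ _ h1 h2 =>
      have : cl A (c + c') = cl A c + cl A c' := by ext; simp [cl]
      rw [this, add_dotProduct]; exact add_mem h1 h2
    | smul r c _ h =>
      have : cl A (r • c) = algebraMap k A r • cl A c := by ext; simp [cl]
      rw [this, smul_dotProduct]; exact Ideal.mul_mem_left _ _ h
  rw [← D.hx]
  refine Ideal.span_le.2 ?_
  rintro _ ⟨t, rfl⟩
  have h := this (Pi.single t 1)
  simpa [dotProduct, cl, Pi.single_apply, apply_ite (algebraMap k A)] using h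

end Dat
end P1


section P2
variable {k : Type u} [Field k] {A : Type u} [CommRing A] [IsLocalRing A] [IsNoetherianRing A] [Algebra k A]
set_option linter.unusedSectionVars false

lemma nakm {N N' : Ideal A} (h : N ≤ N' ⊔ maximalIdeal A * N) : N ≤ N' :=
  Submodule.le_of_le_smul_of_le_jacobson_bot (I := maximalIdeal A) (IsNoetherian.noetherian N)
          (by rw [IsLocalRing.jacobson_eq_maximalIdeal _ bot_ne_top]) h

lemma red_of_le {I J : Ideal A} (hJ : J ≤ I) (r : ℕ) (h : I^(r+1) ≤ J * I^r ⊔ maximalIdeal A * I^(r+1)) :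
    IsReduction J I :=
  ⟨hJ, r, le_antisymm (nakm h) (by rw [pow_succ']; exact Ideal.mul_mono_left hJ)⟩

lemma cl_add {n : ℕ} (c c' : Fin n → k) : cl A (c + c') = cl A c + cl A c' := by ext; simp [cl]
lemma cl_smul {n : ℕ} (r : k) (c : Fin n → k) : cl A (r • c) = algebraMap k A r • cl A c := by ext; simp [cl]
lemma cl_zero {n : ℕ} : cl A (0 : Fin n → k) = 0 := by ext; simp [cl]

variable {d m : ℕ} {I : Ideal A} {a : Fin (d+1) → A} {φ : Matrix (Fin (d+1)) (Fin m) A}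
  {C : Fin (d+1) → Fin m → Fin d → k} {x : Fin d → A}

lemma dot_mem_mJl {l : Fin (d+1) → k} (hl : l ≠ 0) {w : Fin (d+1) → A} (hw : ∀ i, w i ∈ maximalIdeal A)
    (hlw : dotProduct (cl A l) w = 0) : dotProduct w a ∈ maximalIdeal A * Jl a l := by
  obtain ⟨i0, hi⟩ := Function.ne_iff.1 hl
  have hi' : l i0 ≠ 0 := hi
  have h1 : ∀ i, a i - algebraMap k A (l i * (l i0)⁻¹) * a i0 ∈ Jl a l := by
    intro i
    refine ⟨Pi.single i 1 - Pi.single i0 (algebraMap k A (l i * (l i0)⁻¹)), ?_, ?_⟩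
    · simp only [dotProduct_sub, dotProduct_single, cl, mul_one]
      rw [← map_mul, mul_comm (l i), mul_inv_cancel_left₀ hi', sub_self]
    · simp [sub_dotProduct, single_dotProduct]
  have h2 : dotProduct w a = ∑ i, w i * (a i - algebraMap k A (l i * (l i0)⁻¹) * a i0) := by
    simp only [mul_sub, Finset.sum_sub_distrib]
    have : ∑ i, w i * (algebraMap k A (l i * (l i0)⁻¹) * a i0) = dotProduct (cl A l) w * (algebraMap k A (l i0)⁻¹ * a i0) := by
      simp only [dotProduct, Finset.sum_mul, cl, map_mul]
      exact Finset.sum_congr rfl fun i _ => by ring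
    rw [this, hlw, zero_mul, sub_zero]; rfl
  rw [h2]
  exact Ideal.sum_mem _ fun i _ => Ideal.mul_mem_mul (hw i) (h1 i)

namespace Dat
variable (D : Dat k d m I a φ C x)
include D

lemma mI_le {l : Fin (d+1) → k} (hl : l ≠ 0) (hE : El φ l = maximalIdeal A) :
    maximalIdeal A * I ≤ maximalIdeal A * Jl a l := by
  intro y hy
  obtain ⟨w, hw, rfl⟩ := D.mem_mI.1 hy
  have h1 : dotProduct (cl A l) w ∈ El φ l := by
    rw [hE]; exact Ideal.sum_mem _ fun i _ => Ideal.mul_mem_left _ _ (hw i)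
  obtain ⟨z, hz⟩ := mem_El.1 h1
  have h2 : dotProduct w a = dotProduct (w - Matrix.mulVec φ z) a := by
    rw [sub_dotProduct, (D.hker _).2 ⟨z, rfl⟩, sub_zero]
  rw [h2]
  exact dot_mem_mJl hl (fun i => sub_mem (hw i) (D.mulVec_mem z i)) (by rw [dotProduct_sub, hz, sub_self])

/-- the space of residues -/
def WW (_ : Dat k d m I a φ C x) (J : Ideal A) : Submodule k (Fin (d+1) → k) where
  carrier := {c | dotProduct (cl A c) a ∈ J ⊔ maximalIdeal A * I}
  zero_mem' := by simp [cl_zero]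
  add_mem' := by
    intro c c' h h'
    simp only [Set.mem_setOf_eq] at *
    rw [cl_add, add_dotProduct]; exact add_mem h h'
  smul_mem' := by
    intro r c h
    simp only [Set.mem_setOf_eq] at *
    rw [cl_smul, smul_dotProduct]; exact Ideal.mul_mem_left _ _ h

lemma mem_WW {J : Ideal A} {c : Fin (d+1) → k} : c ∈ D.WW J ↔ dotProduct (cl A c) a ∈ J ⊔ maximalIdeal A * I := Iff.rfl

lemma res_dot (w : Fin (d+1) → A) : ∃ c : Fin (d+1) → k, (∀ i, w i - cl A c i ∈ maximalIdeal A) ∧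
    dotProduct w a - dotProduct (cl A c) a ∈ maximalIdeal A * I := by
  obtain ⟨c, hc⟩ := D.resv w
  exact ⟨c, hc, by rw [← sub_dotProduct]; exact D.dot_mem_mI hc⟩

lemma finrank_WW {J : Ideal A} (hJ : IsReduction J I) (hne : J ≠ I) : d ≤ Module.finrank k (D.WW J) := by
  classical
  by_contra hlt
  let b := Module.finBasis k (D.WW J)
  have hb : ∀ i, ∃ y ∈ J, dotProduct (cl A (b i : Fin (d+1) → k)) a - y ∈ maximalIdeal A * I := by
    intro i
    obtain ⟨y, hy, z, hz, h⟩ := Submodule.mem_sup.1 (D.mem_WW.1 (b i).2)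
    exact ⟨y, hy, by rw [← h]; simpa using hz⟩
  choose y hyJ hy using hb
  refine D.H2 J hJ hne ⟨Finset.univ.image y, ?_, ?_, 1, ?_, ?_⟩
  · refine Finset.card_image_le.trans ?_
    simp; omega
  · intro z hz
    obtain ⟨i, -, rfl⟩ := Finset.mem_image.1 (Finset.mem_coe.1 hz)
    exact hyJ i
  · exact (Ideal.ne_top_iff_one _).1 (maximalIdeal.isMaximal A).ne_top
  · intro z hz
    obtain ⟨w, rfl⟩ := D.mem_I.1 (hJ.1 hz)
    obtain ⟨c, -, hc⟩ := D.res_dot w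
    have hcW : c ∈ D.WW J := by
      rw [mem_WW]
      have := sub_mem (Ideal.mem_sup_left hz : _ ∈ J ⊔ maximalIdeal A * I) (Ideal.mem_sup_right hc)
      simpa using this
    have key : ∀ c ∈ D.WW J, dotProduct (cl A c) a ∈ Ideal.span ((Finset.univ.image y : Finset A) : Set A) ⊔ maximalIdeal A * I := by
      intro c hc
      have hb := congrArg Subtype.val (b.sum_repr ⟨c, hc⟩)
      rw [Submodule.coe_sum] at hb
      have h1 : cl A c = ∑ i, algebraMap k A (b.repr ⟨c, hc⟩ i) • cl A (b i : Fin (d+1) → k) := by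
        conv_lhs => rw [show c = _ from hb.symm]
        ext t; simp [cl, map_sum, Algebra.smul_def]
      rw [h1, sum_dotProduct]
      refine Ideal.sum_mem _ fun i _ => ?_
      rw [smul_dotProduct]
      refine Ideal.mul_mem_left _ _ ?_
      have h2 := add_mem (Ideal.mem_sup_left (Ideal.subset_span (Finset.mem_coe.2 (Finset.mem_image_of_mem y (Finset.mem_univ i)))) :
        y i ∈ Ideal.span ((Finset.univ.image y : Finset A) : Set A) ⊔ maximalIdeal A * I) (Ideal.mem_sup_right (hy i))
      simpa using h2
    rw [one_mul, bot_sup_eq]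
    have := add_mem (key c hcW) (Ideal.mem_sup_right hc)
    simpa using this

lemma classify {J : Ideal A} (hJ : IsReduction J I) (hne : J ≠ I) :
    ∃ l : Fin (d+1) → k, l ≠ 0 ∧ J = Jl a l ∧ El φ l = maximalIdeal A := by
  classical
  have hW : D.WW J ≠ ⊤ := by
    intro hW
    refine hne (le_antisymm hJ.1 (nakm fun y hy => ?_))
    obtain ⟨w, rfl⟩ := D.mem_I.1 hy
    obtain ⟨c, -, hc⟩ := D.res_dot w
    have h1 : c ∈ D.WW J := hW ▸ trivial
    have := add_mem (D.mem_WW.1 h1) (Ideal.mem_sup_right hc)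
    simpa using this
  obtain ⟨f, hf0, hf⟩ := Submodule.exists_le_ker_of_lt_top _ (lt_top_iff_ne_top.2 hW)
  let l : Fin (d+1) → k := fun i => f (Pi.single i 1)
  have hfl : ∀ c, f c = dotProduct l c := by
    intro c
    conv_lhs => rw [show c = ∑ i, c i • (Pi.single i 1 : Fin (d+1) → k) from (pi_eq_sum_univ' c).trans (by
      refine Finset.sum_congr rfl fun i _ => ?_
      congr 1)]
    simp only [map_sum, map_smul, dotProduct, smul_eq_mul, l]
    exact Finset.sum_congr rfl fun i _ => mul_comm _ _
  have hl : l ≠ 0 := by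
    intro h
    apply hf0
    ext c
    simp [hfl, h]
  have hWe : D.WW J = LinearMap.ker f := by
    refine Submodule.eq_of_le_of_finrank_le hf ?_
    have h1 := D.finrank_WW hJ hne
    have h2 : Module.finrank k (LinearMap.ker f) < d + 1 := by
      have := Submodule.finrank_lt (s := LinearMap.ker f) (by rwa [Ne, LinearMap.ker_eq_top])
      simpa using this
    omega
  have hmW : ∀ c, c ∈ D.WW J ↔ dotProduct l c = 0 := fun c => by rw [hWe, LinearMap.mem_ker, hfl]
  have hsup1 : J ≤ Jl a l ⊔ maximalIdeal A * I := by
    intro y hy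
    obtain ⟨w, rfl⟩ := D.mem_I.1 (hJ.1 hy)
    obtain ⟨c, -, hc⟩ := D.res_dot w
    have hcW : c ∈ D.WW J := by
      rw [mem_WW]
      have := sub_mem (Ideal.mem_sup_left hy : _ ∈ J ⊔ maximalIdeal A * I) (Ideal.mem_sup_right hc)
      simpa using this
    have h1 : dotProduct (cl A c) a ∈ Jl a l := ⟨_, by rw [cl_dot, (hmW c).1 hcW, map_zero], rfl⟩
    have := add_mem (Ideal.mem_sup_left h1 : _ ∈ Jl a l ⊔ maximalIdeal A * I) (Ideal.mem_sup_right hc)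
    simpa using this
  have hsup2 : Jl a l ≤ J ⊔ maximalIdeal A * I := by
    rintro _ ⟨w, hw, rfl⟩
    obtain ⟨c, hc', hc⟩ := D.res_dot w
    have h1 : dotProduct l c = 0 := by
      refine const_mem (A := A) ?_
      rw [← cl_dot]
      have h2 : dotProduct (cl A l) (w - cl A c) ∈ maximalIdeal A :=
        Ideal.sum_mem _ fun i _ => Ideal.mul_mem_left _ _ (hc' i)
      rw [dotProduct_sub, hw, zero_sub, neg_mem_iff] at h2
      exact h2
    have := add_mem (D.mem_WW.1 ((hmW c).2 h1)) (Ideal.mem_sup_right hc)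
    simpa using this
  have hred : IsReduction (Jl a l) I := by
    obtain ⟨-, r, hr⟩ := id hJ
    refine red_of_le (D.Jl_le l) r ?_
    conv_lhs => rw [hr]
    calc J * I^r ≤ (Jl a l ⊔ maximalIdeal A * I) * I^r := Ideal.mul_mono_left hsup1
      _ = _ := by rw [Ideal.sup_mul, mul_assoc, pow_succ']
  have hE := D.El_eq hl hred
  refine ⟨l, hl, le_antisymm ?_ (nakm (hsup2.trans (sup_le_sup_left (D.mI_le hl hE) _))), hE⟩
  exact hsup1.trans (sup_le le_rfl ((D.mI_le hl hE).trans Ideal.mul_le_right))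

end Dat
end P2


section P3
variable {k : Type u} [Field k] {A : Type u} [CommRing A] [IsLocalRing A] [IsNoetherianRing A] [Algebra k A]
set_option linter.unusedSectionVars false

lemma sup_pow_le' (J K : Ideal A) (n : ℕ) : (J ⊔ K)^(n+1) ≤ J * (J ⊔ K)^n ⊔ K^(n+1) := by
  induction n with
  | zero => simp
  | succ n ih =>
    rw [pow_succ' _ (n+1)]
    conv_lhs => rw [Ideal.sup_mul]
    refine sup_le le_sup_left ?_
    refine (Ideal.mul_mono_right ih).trans ?_
    rw [Ideal.mul_sup, ← pow_succ']
    refine sup_le_sup_right ?_ _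
    rw [mul_left_comm]
    refine Ideal.mul_mono_right ?_
    rw [pow_succ']
    exact Ideal.mul_mono_left le_sup_right

lemma prod_diff {I J : Ideal A} {n : ℕ} (u v : Fin n → A) (hu : ∀ i, u i ∈ I) (hv : ∀ i, v i ∈ I)
    (huv : ∀ i, u i - v i ∈ J) (M : Multiset (Fin n)) : ∀ y ∈ I, y * ((M.map u).prod - (M.map v).prod) ∈ J * I^(Multiset.card M) := by
  induction M using Multiset.induction with
  | empty => intro y _; simp
  | cons i M ih =>
    intro y hy
    have hQ : ∀ M : Multiset (Fin n), (M.map v).prod ∈ I^(Multiset.card M) := by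
      intro M
      induction M using Multiset.induction with
      | empty => simp
      | cons i M ih => 
        rw [Multiset.map_cons, Multiset.prod_cons, Multiset.card_cons, pow_succ']
        exact Ideal.mul_mem_mul (hv i) ih
    rw [Multiset.map_cons, Multiset.prod_cons, Multiset.map_cons, Multiset.prod_cons, Multiset.card_cons]
    have e : y * (u i * (M.map u).prod - v i * (M.map v).prod) =
      u i * (y * ((M.map u).prod - (M.map v).prod)) + (u i - v i) * (y * (M.map v).prod) := by ring
    rw [e, pow_succ']
    refine add_mem ?_ (Ideal.mul_mem_mul (huv i) (Ideal.mul_mem_mul hy (hQ M)))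
    rw [mul_left_comm]
    exact Ideal.mul_mem_mul (hu i) (ih y hy)

variable {d m : ℕ} {I : Ideal A} {a : Fin (d+1) → A} {φ : Matrix (Fin (d+1)) (Fin m) A}
  {C : Fin (d+1) → Fin m → Fin d → k} {x : Fin d → A}

namespace Dat
variable (D : Dat k d m I a φ C x)
include D

lemma mI_le_red {J : Ideal A} (hJ : IsReduction J I) : maximalIdeal A * I ≤ J := by
  by_cases h : J = I
  · rw [h]; exact Ideal.mul_le_right
  · obtain ⟨l, hl, rfl, hE⟩ := D.classify hJ h
    exact (D.mI_le hl hE).trans Ideal.mul_le_right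

lemma dot_sub_mem (l : Fin (d+1) → k) {w : Fin (d+1) → A} {c : Fin (d+1) → k} (h : ∀ i, w i - cl A c i ∈ maximalIdeal A) :
    dotProduct (cl A l) w - algebraMap k A (dotProduct l c) ∈ maximalIdeal A := by
  rw [← cl_dot, ← dotProduct_sub]
  exact Ideal.sum_mem _ fun i _ => Ideal.mul_mem_left _ _ (h i)

lemma dot_mem_iff (l : Fin (d+1) → k) {w : Fin (d+1) → A} {c : Fin (d+1) → k} (h : ∀ i, w i - cl A c i ∈ maximalIdeal A) :
    dotProduct (cl A l) w ∈ maximalIdeal A ↔ dotProduct l c = 0 := by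
  have h1 := D.dot_sub_mem l h
  constructor
  · intro h2
    refine const_mem (A := A) ?_
    simpa using sub_mem h2 h1
  · intro h2
    simpa [h2] using h1

lemma Jl_min {l : Fin (d+1) → k} (hl : l ≠ 0) (hred : IsReduction (Jl a l) I) : IsMinimalReduction (Jl a l) I := by
  refine ⟨hred, fun J' hJ' hle => ?_⟩
  have hne : J' ≠ I := fun h => D.Jl_ne hl (le_antisymm (D.Jl_le l) (h ▸ hle))
  obtain ⟨l', hl', rfl, hE⟩ := D.classify hJ' hne
  refine le_antisymm hle ?_
  have hk : ∀ c : Fin (d+1) → k, dotProduct l' c = 0 → dotProduct l c = 0 := by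
    intro c hc
    have h1 : dotProduct (cl A c) a ∈ Jl a l := hle ⟨_, by rw [cl_dot, hc, map_zero], rfl⟩
    have h2 := D.El_le l (D.dot_mem_Jl.1 h1)
    rw [cl_dot] at h2
    exact const_mem h2
  -- reverse
  obtain ⟨i, hi⟩ := Function.ne_iff.1 hl'
  have hi' : l' i ≠ 0 := hi
  have hprop : ∀ j, l j = l i * (l' i)⁻¹ * l' j := by
    intro j
    have := hk (Pi.single j 1 - Pi.single i ((l' i)⁻¹ * l' j)) (by
      simp only [dotProduct_sub, dotProduct_single, mul_one]
      rw [mul_inv_cancel_left₀ hi', sub_self])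
    simp only [dotProduct_sub, dotProduct_single, mul_one] at this
    rw [sub_eq_zero] at this
    rw [this]; ring
  have hli : l i * (l' i)⁻¹ ≠ 0 := by
    intro h
    apply hl
    ext j
    rw [hprop j, h, zero_mul]; rfl
  rintro _ ⟨w, hw, rfl⟩
  refine ⟨w, ?_, rfl⟩
  have e : cl A l = algebraMap k A (l i * (l' i)⁻¹) • cl A l' := by
    rw [← cl_smul]; congr 1; ext j; rw [hprop j]; rfl
  rw [e, smul_dotProduct, smul_eq_mul] at hw
  have hu : IsUnit (algebraMap k A (l i * (l' i)⁻¹)) := (isUnit_iff_ne_zero.2 hli).map _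
  exact hu.mul_right_eq_zero.1 hw

lemma a_mem (i) : a i ∈ I := D.hI ▸ Ideal.subset_span ⟨i, rfl⟩

/-- A2 -/
lemma red_of_eval {F : MvPolynomial (Fin (d+1)) k} {s : ℕ} (hF : F.IsHomogeneous s)
    (hFa : MvPolynomial.aeval a F ∈ maximalIdeal A * I^s) {l : Fin (d+1) → k} (hl : l ≠ 0)
    (hFl : MvPolynomial.eval l F ≠ 0) : IsReduction (Jl a l) I := by
  classical
  obtain ⟨i0, hi⟩ := Function.ne_iff.1 hl
  have hi' : l i0 ≠ 0 := hi
  set b : A := algebraMap k A (l i0)⁻¹ * a i0 with hb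
  have hbI : b ∈ I := Ideal.mul_mem_left _ _ (D.a_mem i0)
  have h1 : ∀ i, a i - algebraMap k A (l i) * b ∈ Jl a l := by
    intro i
    refine ⟨Pi.single i 1 - Pi.single i0 (algebraMap k A (l i * (l i0)⁻¹)), ?_, ?_⟩
    · simp only [dotProduct_sub, dotProduct_single, cl, mul_one]
      rw [← map_mul, mul_comm (l i), mul_inv_cancel_left₀ hi', sub_self]
    · simp [sub_dotProduct, single_dotProduct, hb, mul_assoc]
  have hIsup : I = Jl a l ⊔ Ideal.span {b} := by
    refine le_antisymm ?_ (sup_le (D.Jl_le l) ((Ideal.span_singleton_le_iff_mem _).2 hbI))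
    conv_lhs => rw [D.hI]
    rw [Ideal.span_le]
    rintro _ ⟨i, rfl⟩
    have := add_mem (Ideal.mem_sup_left (h1 i) : _ ∈ Jl a l ⊔ Ideal.span {b})
      (Ideal.mem_sup_right (Ideal.mul_mem_left _ (algebraMap k A (l i)) (Ideal.mem_span_singleton_self b)))
    simpa using this
  have hmon : ∀ (v : Fin (d+1) → A), MvPolynomial.aeval v F =
      ∑ e ∈ F.support, algebraMap k A (F.coeff e) * ((Finsupp.toMultiset e).map v).prod := by
    intro v
    rw [MvPolynomial.aeval_def, MvPolynomial.eval₂_eq]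
    refine Finset.sum_congr rfl fun e _ => ?_
    rw [Finsupp.toMultiset_map, Finsupp.prod_toMultiset, Finsupp.prod_mapDomain_index (by simp) (by intros; rw [pow_add])]
    rfl
  have h2 : b * (MvPolynomial.aeval a F - MvPolynomial.aeval (fun i => algebraMap k A (l i) * b) F) ∈ Jl a l * I^s := by
    rw [hmon, hmon, ← Finset.sum_sub_distrib, Finset.mul_sum]
    refine Ideal.sum_mem _ fun e he => ?_
    rw [← mul_sub, mul_left_comm]
    refine Ideal.mul_mem_left _ _ ?_
    have h3 := prod_diff a (fun i => algebraMap k A (l i) * b) D.a_mem (fun i => Ideal.mul_mem_left _ _ hbI) h1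
      (Finsupp.toMultiset e) b hbI
    have h4 : Multiset.card (Finsupp.toMultiset e) = s := by
      rw [Finsupp.card_toMultiset, ← hF (MvPolynomial.mem_support_iff.1 he)]
      simp [Finsupp.weight_apply, Finsupp.sum]
    rwa [h4] at h3
  have h5 : MvPolynomial.aeval (fun i => algebraMap k A (l i) * b) F = algebraMap k A (MvPolynomial.eval l F) * b^s := by
    rw [MvPolynomial.aeval_def, MvPolynomial.eval₂_eq, MvPolynomial.eval_eq, map_sum, Finset.sum_mul]
    refine Finset.sum_congr rfl fun e he => ?_
    have h4 : ∑ i ∈ e.support, e i = s := by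
      rw [← hF (MvPolynomial.mem_support_iff.1 he)]
      simp [Finsupp.weight_apply, Finsupp.sum]
    simp only [mul_pow, Finset.prod_mul_distrib, Finset.prod_pow_eq_pow_sum, h4, map_mul, map_prod, map_pow]
    ring
  have hu : IsUnit (algebraMap k A (MvPolynomial.eval l F)) := (isUnit_iff_ne_zero.2 hFl).map _
  have h6 : b^(s+1) ∈ Jl a l * I^s ⊔ maximalIdeal A * I^(s+1) := by
    rw [h5, mul_sub] at h2
    have h7 : b * MvPolynomial.aeval a F ∈ maximalIdeal A * I^(s+1) := by
      rw [pow_succ', mul_left_comm]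
      exact Ideal.mul_mem_mul hbI hFa
    have h8 := sub_mem (Ideal.mem_sup_right h7 : _ ∈ Jl a l * I^s ⊔ maximalIdeal A * I^(s+1)) (Ideal.mem_sup_left h2)
    rw [sub_sub_cancel, mul_left_comm, ← pow_succ'] at h8
    exact ((Ideal.unit_mul_mem_iff_mem _ hu).1 h8)
  refine red_of_le (D.Jl_le l) s ?_
  conv_lhs => rw [hIsup]
  refine (sup_pow_le' _ _ _).trans ?_
  rw [← hIsup, Ideal.span_singleton_pow]
  exact sup_le le_sup_left ((Ideal.span_singleton_le_iff_mem _).2 h6)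

lemma core_eq [Infinite k] {F : MvPolynomial (Fin (d+1)) k} {s : ℕ} (hF0 : F ≠ 0) (hF : F.IsHomogeneous s)
    (hFa : MvPolynomial.aeval a F ∈ maximalIdeal A * I^s) : core I = maximalIdeal A * I := by
  have key : ∀ c : Fin (d+1) → k, c ≠ 0 → ∃ l : Fin (d+1) → k, dotProduct l c ≠ 0 ∧ IsMinimalReduction (Jl a l) I := by
    intro c hc
    let G : MvPolynomial (Fin (d+1)) k := ∑ i, MvPolynomial.C (c i) * MvPolynomial.X i
    have hGe : ∀ l, MvPolynomial.eval l G = dotProduct l c := by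
      intro l; simp [G, dotProduct, mul_comm]
    have hG : G ≠ 0 := by
      obtain ⟨i, hi⟩ := Function.ne_iff.1 hc
      intro h
      have := hGe (Pi.single i 1)
      rw [h] at this
      simp at this
      exact hi this.symm
    have hFG : F * G ≠ 0 := mul_ne_zero hF0 hG
    obtain ⟨l, hl⟩ : ∃ l, MvPolynomial.eval l (F * G) ≠ 0 := by
      by_contra h
      push Not at h
      exact hFG (MvPolynomial.funext fun l => by rw [h l, map_zero])
    rw [map_mul, hGe] at hl
    have hlc := right_ne_zero_of_mul hl
    have hl0 : l ≠ 0 := by rintro rfl; simp at hlc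
    exact ⟨l, hlc, D.Jl_min hl0 (D.red_of_eval hF hFa hl0 (left_ne_zero_of_mul hl))⟩
  refine le_antisymm ?_ (le_sInf fun J hJ => D.mI_le_red hJ.1)
  intro z hz
  rw [core, Submodule.mem_sInf] at hz
  obtain ⟨l0, -, h0⟩ := key (fun _ => 1) (fun h => one_ne_zero (congrFun h 0))
  have hzI := D.Jl_le _ (hz _ h0)
  obtain ⟨w, rfl⟩ := D.mem_I.1 hzI
  obtain ⟨c, hc', hc⟩ := D.res_dot w
  by_cases hc0 : c = 0
  · subst hc0
    simpa [cl_zero] using hc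
  · exfalso
    obtain ⟨l, hlc, h1⟩ := key c hc0
    have h2 := D.El_le l (D.dot_mem_Jl.1 (hz _ h1))
    exact hlc ((D.dot_mem_iff l hc').1 h2)

lemma intClosed (HS : ∀ c : Fin (d+1) → k, c ≠ 0 → ∃ l : Fin (d+1) → k, dotProduct l c ≠ 0 ∧
    Submodule.span k (Set.range fun j => (fun t => ∑ i, l i * C i j t : Fin d → k)) ≠ ⊤)
    (hI : IsIntClosedIdeal I) : IsIntClosedIdeal (maximalIdeal A * I) := by
  rintro L ⟨hmL, r, hr⟩
  have hLI : L ≤ I := by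
    have h1 : IsReduction I (I ⊔ L) := by
      refine ⟨le_sup_left, r, le_antisymm ?_ (by rw [pow_succ']; exact Ideal.mul_mono_left le_sup_left)⟩
      refine (sup_pow_le' I L r).trans (sup_le le_rfl ?_)
      rw [hr]
      exact Ideal.mul_mono Ideal.mul_le_right (Ideal.pow_right_mono le_sup_right r)
    rw [← hI _ h1]; exact le_sup_right
  refine le_antisymm ?_ hmL
  intro z hz
  by_contra hzm
  obtain ⟨w, rfl⟩ := D.mem_I.1 (hLI hz)
  obtain ⟨c, hc', hc⟩ := D.res_dot w
  have hc0 : c ≠ 0 := by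
    rintro rfl
    exact hzm (by simpa [cl_zero] using hc)
  obtain ⟨l, hlc, hV⟩ := HS c hc0
  have hl0 : l ≠ 0 := by rintro rfl; simp at hlc
  refine hV (D.spanV hl0 ?_)
  have hu : IsUnit (dotProduct (cl A l) w) := by
    by_contra h
    exact hlc ((D.dot_mem_iff l hc').1 ((mem_maximalIdeal _).2 h))
  obtain ⟨v, hv⟩ := hu.exists_right_inv
  have hIsup : I = Jl a l ⊔ L := by
    refine le_antisymm ?_ (sup_le (D.Jl_le l) hLI)
    intro y hy
    obtain ⟨w', rfl⟩ := D.mem_I.1 hy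
    have h1 : dotProduct (w' - (dotProduct (cl A l) w' * v) • w) a ∈ Jl a l := by
      refine ⟨_, ?_, rfl⟩
      rw [dotProduct_sub, dotProduct_smul, smul_eq_mul]
      linear_combination (- dotProduct (cl A l) w') * hv
    have := add_mem (Ideal.mem_sup_left h1 : _ ∈ Jl a l ⊔ L) (Ideal.mem_sup_right (Ideal.mul_mem_left _ (dotProduct (cl A l) w' * v) hz))
    rw [sub_dotProduct, smul_dotProduct, smul_eq_mul, sub_add_cancel] at this
    exact this
  refine red_of_le (D.Jl_le l) r ?_
  conv_lhs => rw [hIsup]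
  refine (sup_pow_le' _ _ _).trans ?_
  rw [← hIsup, hr]
  refine sup_le_sup_left ?_ _
  rw [pow_succ', ← mul_assoc]
  exact Ideal.mul_mono_right (Ideal.pow_right_mono hLI r)

end Dat
end P3


section P4
set_option linter.unusedSectionVars false

lemma coeff_homog {k : Type u} [Field k] {S : Type u} [CommRing S] [Algebra k S] {n : ℕ} (B : Fin n → S)
    (G : MvPolynomial (Fin n) k) (s : ℕ) :
    (MvPolynomial.aeval (fun i => Polynomial.C (B i) * Polynomial.X) G).coeff s =
      MvPolynomial.aeval B (MvPolynomial.homogeneousComponent s G) := by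
  induction G using MvPolynomial.induction_on' with
  | monomial e c =>
    rw [MvPolynomial.homogeneousComponent_of_mem (MvPolynomial.isHomogeneous_monomial c (rfl : e.degree = e.degree))]
    rw [MvPolynomial.aeval_monomial]
    have : (e.prod fun i k ↦ (Polynomial.C (B i) * Polynomial.X) ^ k) =
       Polynomial.C (e.prod fun i k => (B i)^k) * Polynomial.X ^ e.degree := by
      simp only [Finsupp.prod, mul_pow, Finset.prod_mul_distrib, Finset.prod_pow_eq_pow_sum, map_prod, map_pow]
      rfl
    rw [this, Polynomial.algebraMap_apply, ← mul_assoc, ← Polynomial.C_mul, Polynomial.coeff_C_mul_X_pow]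
    split_ifs
    · rw [MvPolynomial.aeval_monomial]
    · simp
  | add p q hp hq => rw [map_add, Polynomial.coeff_add, hp, hq, map_add, map_add]

lemma exists_F {k : Type u} [Field k] {d : ℕ} (B : Fin (d+1) → MvPolynomial (Fin d) k) (i0 : Fin d) :
    ∃ (F : MvPolynomial (Fin (d+1)) k) (s : ℕ) (H : MvPolynomial (Fin d) k), F ≠ 0 ∧ F.IsHomogeneous s ∧
      H ∈ (Ideal.span (Set.range B))^s ∧ MvPolynomial.aeval B F = MvPolynomial.X i0 * H := by
  classical
  let S := MvPolynomial (Fin d) k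
  let y : Option (Fin (d+1)) → Polynomial S := fun o => o.elim (Polynomial.C (MvPolynomial.X i0)) (fun i => Polynomial.C (B i) * Polynomial.X)
  have hnot : ¬ AlgebraicIndependent k y := by
    intro h
    have h1 := (h.map' (f := (MvPolynomial.optionEquivLeft k (Fin d)).symm.toAlgHom) (MvPolynomial.optionEquivLeft k (Fin d)).symm.injective).lift_cardinalMk_le_trdeg
    rw [MvPolynomial.trdeg_of_isDomain] at h1
    simp at h1
  rw [AlgebraicIndependent, injective_iff_map_eq_zero] at hnot
  push Not at hnot
  obtain ⟨P', hP', hP'0⟩ := hnot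
  let h' : Polynomial (MvPolynomial (Fin (d+1)) k) →+* Polynomial S :=
    Polynomial.eval₂RingHom (MvPolynomial.aeval (R := k) (fun i => Polynomial.C (B i) * Polynomial.X)).toRingHom (Polynomial.C (MvPolynomial.X i0))
  have hcomp : h'.comp (MvPolynomial.optionEquivLeft k (Fin (d+1)) : _ →+* _) = (MvPolynomial.aeval (R := k) y).toRingHom := by
    apply MvPolynomial.ringHom_ext
    · intro r
      simp [h', MvPolynomial.algebraMap_eq]
    · rintro (_ | i) <;> simp [h', y]
  have hinj : ∀ P, P ≠ 0 → MvPolynomial.optionEquivLeft k (Fin (d+1)) P ≠ 0 := fun P hP h =>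
    hP ((MvPolynomial.optionEquivLeft k (Fin (d+1))).injective (h.trans (map_zero _).symm))
  obtain ⟨P, hP0, hP⟩ : ∃ P, P ≠ 0 ∧ h' P = 0 :=
    ⟨MvPolynomial.optionEquivLeft k (Fin (d+1)) P', hinj _ hP'0, (RingHom.congr_fun hcomp P').trans hP'⟩
  have hX : h' Polynomial.X = Polynomial.C (MvPolynomial.X i0) := by simp [h']
  obtain ⟨Q, hQ, hQ'⟩ := Polynomial.exists_eq_pow_rootMultiplicity_mul_and_not_dvd P hP0 0
  rw [map_zero, sub_zero] at hQ hQ'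
  rw [Polynomial.X_dvd_iff] at hQ'
  have hQ0 : h' Q = 0 := by
    rw [hQ, map_mul, map_pow, hX] at hP
    refine (mul_eq_zero.1 hP).resolve_left (pow_ne_zero _ ?_)
    rw [Ne, Polynomial.C_eq_zero]
    exact MvPolynomial.X_ne_zero i0
  have hrees : ∀ Q, h' Q ∈ reesAlgebra (Ideal.span (Set.range B)) := by
    have hC : ∀ G : MvPolynomial (Fin (d+1)) k, h' (Polynomial.C G) ∈ reesAlgebra (Ideal.span (Set.range B)) := by
      intro G
      have e : h' (Polynomial.C G) = MvPolynomial.aeval (R := k) (fun i => Polynomial.C (B i) * Polynomial.X) G := by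
        simp [h']
      rw [e]
      induction G using MvPolynomial.induction_on with
      | C r =>
        rw [MvPolynomial.aeval_C, Polynomial.algebraMap_apply]
        exact Subalgebra.algebraMap_mem _ _
      | add p q hp hq =>
        rw [map_add]; exact add_mem (hp (by simp [h'])) (hq (by simp [h']))
      | mul_X p i hp =>
        rw [map_mul]
        refine mul_mem (hp (by simp [h'])) ?_
        rw [MvPolynomial.aeval_X, mem_reesAlgebra_iff]
        intro j
        rw [Polynomial.coeff_C_mul_X]
        split_ifs with h
        · rw [h, pow_one]; exact Ideal.subset_span ⟨i, rfl⟩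
        · exact zero_mem _
    have hX' : h' Polynomial.X ∈ reesAlgebra (Ideal.span (Set.range B)) := by
      rw [hX]; exact Subalgebra.algebraMap_mem _ _
    intro Q
    induction Q using Polynomial.induction_on with
    | C r => exact hC r
    | add p q hp hq => rw [map_add]; exact add_mem hp hq
    | monomial n r h =>
      rw [map_mul, map_pow]; exact mul_mem (hC r) (pow_mem hX' _)
  obtain ⟨s, hs⟩ : ∃ s, MvPolynomial.homogeneousComponent s (Q.coeff 0) ≠ 0 := by
    by_contra h
    push Not at h
    apply hQ'
    rw [← MvPolynomial.sum_homogeneousComponent (Q.coeff 0)]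
    exact Finset.sum_eq_zero fun i _ => h i
  refine ⟨MvPolynomial.homogeneousComponent s (Q.coeff 0), s, -(h' Q.divX).coeff s, hs,
    MvPolynomial.homogeneousComponent_isHomogeneous _ _, neg_mem ((mem_reesAlgebra_iff _ _).1 (hrees _) s), ?_⟩
  rw [← Polynomial.divX_mul_X_add Q, map_add, map_mul, hX] at hQ0
  have h3 := congrArg (fun f => Polynomial.coeff f s) hQ0
  have e : h' (Polynomial.C (Q.coeff 0)) = MvPolynomial.aeval (R := k) (fun i => Polynomial.C (B i) * Polynomial.X) (Q.coeff 0) := by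
    simp [h']
  simp only [Polynomial.coeff_add, Polynomial.coeff_mul_C, Polynomial.coeff_zero, e] at h3
  rw [coeff_homog] at h3
  linear_combination h3

variable {k : Type u} [Field k] {A : Type u} [CommRing A] [IsLocalRing A] [IsNoetherianRing A] [Algebra k A]
variable {d m : ℕ} {I : Ideal A} {a : Fin (d+1) → A} {φ : Matrix (Fin (d+1)) (Fin m) A}
  {C : Fin (d+1) → Fin m → Fin d → k} {x : Fin d → A}

theorem Dat.final [Infinite k] (D : Dat k d m I a φ C x) (ψ : MvPolynomial (Fin d) k →ₐ[k] A)
    (hψ : Function.Injective ψ) (hx : ∀ i, x i = ψ (MvPolynomial.X i)) (B : Fin (d+1) → MvPolynomial (Fin d) k)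
    (hB : ∀ i, a i = ψ (B i)) : core I = maximalIdeal A * I ∧ (IsIntClosedIdeal I → IsIntClosedIdeal (core I)) := by
  classical
  have hd1 := D.hd1
  let i0 : Fin d := ⟨0, by omega⟩
  have hcore : core I = maximalIdeal A * I := by
    obtain ⟨F, s, H, hF0, hF, hH, e⟩ := exists_F B i0
    refine D.core_eq hF0 hF ?_
    have h1 : MvPolynomial.aeval a F = ψ (MvPolynomial.aeval B F) := by
      rw [show a = fun i => ψ (B i) from funext hB, MvPolynomial.comp_aeval_apply]
    rw [h1, e, map_mul]
    refine Ideal.mul_mem_mul ?_ ?_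
    · rw [← hx, ← D.hx]; exact Ideal.subset_span ⟨_, rfl⟩
    · have h2 := Ideal.mem_map_of_mem ψ hH
      rw [Ideal.map_pow, Ideal.map_span, ← Set.range_comp] at h2
      rw [D.hI]
      rwa [show (a : Fin (d+1) → A) = ψ ∘ B from funext hB]
  refine ⟨hcore, fun h => ?_⟩
  rw [hcore]
  refine D.intClosed (fun c hc => ?_) h
  let G : MvPolynomial (Fin d) k := ∑ i, MvPolynomial.C (c i) * B i
  have hψC : ∀ r, ψ (MvPolynomial.C r) = algebraMap k A r := fun r => ψ.commutes r
  have hG : G ≠ 0 := by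
    intro hG
    have h1 : dotProduct (cl A c) a = 0 := by
      rw [← map_zero ψ, ← hG]
      simp [G, dotProduct, cl, hB, hψC]
    obtain ⟨z, hz⟩ := (D.hker _).1 h1
    apply hc
    ext i
    refine const_mem (A := A) ?_
    have := D.mulVec_mem z i
    rwa [hz] at this
  obtain ⟨x0, hx0⟩ : ∃ l, MvPolynomial.eval l (MvPolynomial.X i0 * G) ≠ 0 := by
    by_contra h
    push Not at h
    exact mul_ne_zero (MvPolynomial.X_ne_zero i0) hG (MvPolynomial.funext fun l => by rw [h l, map_zero])
  rw [map_mul, MvPolynomial.eval_X] at hx0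
  refine ⟨fun i => MvPolynomial.eval x0 (B i), ?_, fun hV => ?_⟩
  · have := right_ne_zero_of_mul hx0
    simpa [G, dotProduct, mul_comm] using this
  · have hrel : ∀ j, ∑ i, B i * ∑ t, MvPolynomial.C (C i j t) * MvPolynomial.X t = 0 := by
      intro j
      apply hψ
      have h1 : dotProduct (Matrix.mulVec φ (Pi.single j 1)) a = 0 := (D.hker _).2 ⟨_, rfl⟩
      rw [map_zero, ← h1]
      simp [dotProduct, hB, D.hφ, cl, hψC, hx, mul_comm]
    have hle : (⊤ : Submodule k (Fin d → k)) ≤ LinearMap.ker (dotProductBilin k k x0) := by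
      rw [← hV, Submodule.span_le]
      rintro _ ⟨j, rfl⟩
      have := congrArg (MvPolynomial.eval x0) (hrel j)
      simp only [map_sum, map_mul, MvPolynomial.eval_C, MvPolynomial.eval_X, map_zero] at this
      simp only [SetLike.mem_coe, LinearMap.mem_ker, dotProductBilin_apply_apply, dotProduct, Finset.mul_sum] at this ⊢
      rw [Finset.sum_comm, ← this]
      exact Finset.sum_congr rfl fun i _ => Finset.sum_congr rfl fun t _ => by ring
    have := hle (Submodule.mem_top (x := Pi.single i0 1))
    simp at this
    exact left_ne_zero_of_mul hx0 this

end P4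


section P5
set_option linter.unusedSectionVars false

lemma sub_const_mem {k : Type u} [Field k] {d : ℕ} (p : MvPolynomial (Fin d) k) :
    p - MvPolynomial.C (MvPolynomial.constantCoeff p) ∈ Ideal.span (Set.range (MvPolynomial.X (R := k) (σ := Fin d))) := by
  induction p using MvPolynomial.induction_on with
  | C r => simp
  | add p q hp hq =>
    have := add_mem hp hq
    rwa [sub_add_sub_comm, ← map_add, ← map_add] at this
  | mul_X p i hp =>
    simp only [map_mul, MvPolynomial.constantCoeff_X, mul_zero, map_zero, sub_zero]
    exact Ideal.mul_mem_left _ _ (Ideal.subset_span ⟨i, rfl⟩)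

lemma height_vars {k : Type u} [Field k] {d : ℕ} :
    (Ideal.span (Set.range (MvPolynomial.X (R := k) (σ := Fin d)))).height = d := by
  classical
  let f : ℕ → MvPolynomial (Fin d) k →ₐ[k] MvPolynomial (Fin d) k := fun j =>
    MvPolynomial.aeval (fun i => if i.val < j then 0 else MvPolynomial.X i)
  have hpr : ∀ j, (RingHom.ker (f j)).IsPrime := fun j => RingHom.ker_isPrime _
  have hfX : ∀ j i, f j (MvPolynomial.X i) = if i.val < j then 0 else MvPolynomial.X i := fun j i => MvPolynomial.aeval_X _ _
  have hff : ∀ j p, f (j+1) (f j p) = f (j+1) p := by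
    intro j p
    have : (f (j+1)).comp (f j) = f (j+1) := by
      apply MvPolynomial.algHom_ext
      intro i
      rw [AlgHom.comp_apply, hfX j]
      split_ifs with h
      · rw [map_zero, hfX, if_pos (by omega)]
      · rfl
    exact DFunLike.congr_fun this p
  have hlt : ∀ j, j < d → RingHom.ker (f j) < RingHom.ker (f (j+1)) := by
    intro j hj
    refine lt_of_le_of_ne (fun p hp => ?_) (fun h => ?_)
    · rw [RingHom.mem_ker] at hp ⊢
      rw [← hff, hp, map_zero]
    · have h1 : (MvPolynomial.X ⟨j, hj⟩ : MvPolynomial (Fin d) k) ∈ RingHom.ker (f (j+1)) := by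
        rw [RingHom.mem_ker, hfX, if_pos (by simp)]
      rw [← h, RingHom.mem_ker, hfX, if_neg (by simp)] at h1
      exact MvPolynomial.X_ne_zero _ h1
  have hh : ∀ j, j ≤ d → (j : ℕ∞) ≤ (RingHom.ker (f j)).height := by
    intro j
    induction j with
    | zero => intro _; simp
    | succ j ih =>
      intro hj
      have := hpr j
      have := hpr (j+1)
      refine le_trans ?_ (Ideal.height_add_one_le_of_lt_of_isPrime (hlt j (by omega)))
      push_cast
      exact add_le_add_left (ih (by omega)) 1
  have hker : RingHom.ker (f d) = Ideal.span (Set.range (MvPolynomial.X (R := k) (σ := Fin d))) := by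
    refine le_antisymm (fun p hp => ?_) ?_
    · have h1 := sub_const_mem p
      have h2 : f d p = MvPolynomial.C (MvPolynomial.constantCoeff p) := by
        have : f d (p - MvPolynomial.C (MvPolynomial.constantCoeff p)) = 0 := by
          have hle : Ideal.span (Set.range (MvPolynomial.X (R := k) (σ := Fin d))) ≤ RingHom.ker (f d) := by
            rw [Ideal.span_le]
            rintro _ ⟨i, rfl⟩
            rw [SetLike.mem_coe, RingHom.mem_ker, hfX, if_pos i.2]
          exact hle h1
        rw [map_sub, sub_eq_zero] at this
        rw [this]
        exact (f d).commutes _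
      rw [RingHom.mem_ker, h2] at hp
      rwa [hp, sub_zero] at h1
    · rw [Ideal.span_le]
      rintro _ ⟨i, rfl⟩
      rw [SetLike.mem_coe, RingHom.mem_ker, hfX, if_pos i.2]
  refine le_antisymm ?_ (hker ▸ hh d le_rfl)
  have hne : Ideal.span (Set.range (MvPolynomial.X (R := k) (σ := Fin d))) ≠ ⊤ := by
    rw [← hker]; exact (hpr d).ne_top
  refine (Ideal.height_le_spanFinrank _ hne).trans ?_
  have := Submodule.spanFinrank_span_le_ncard_of_finite (R := MvPolynomial (Fin d) k) (Set.finite_range (MvPolynomial.X (R := k) (σ := Fin d)))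
  have h2 : (Set.range (MvPolynomial.X (R := k) (σ := Fin d))).ncard ≤ d := by
    have := Set.ncard_image_le (f := MvPolynomial.X (R := k) (σ := Fin d)) (s := Set.univ)
    simpa using this
  exact_mod_cast this.trans h2

theorem main_loc {k : Type u} [Field k] [Infinite k] (d : ℕ) (hd : 1 ≤ d)
    (P : Ideal (MvPolynomial (Fin d) k)) [hP : P.IsPrime] (hPe : P = Ideal.span
      (Set.range (MvPolynomial.X (R := k) (σ := Fin d))))
    (I : Ideal (Localization.AtPrime P)) (g : ℕ)
    (hht : ht I = (g : WithBot ℕ∞)) (hmu : muE I = ((d + 1 : ℕ) : ℕ∞)) (hG : Gcond I d)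
    (hdepth : ∀ j : ℕ, 1 ≤ j → j ≤ d - g → rDim ((Localization.AtPrime P) ⧸ I) + 1 ≤
          (qDepth (Localization.AtPrime P) (I ^ j) : WithBot ℕ∞) + (j : WithBot ℕ∞))
    (hφ : ∃ (m : ℕ) (φ : Matrix (Fin (d + 1)) (Fin m) (Localization.AtPrime P)),
        Presents φ I ∧ ∀ i j, ∃ p : MvPolynomial (Fin d) k, p.IsHomogeneous 1 ∧
          φ i j = algebraMap (MvPolynomial (Fin d) k) (Localization.AtPrime P) p) :
      core I = maximalIdeal (Localization.AtPrime P) * I ∧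
        (IsIntClosedIdeal I → IsIntClosedIdeal (core I)) := by
  classical
  have : IsRegularRing (Localization.AtPrime P) := by
    rw [isRegularRing_iff]
    intro p hp
    exact IsRegularLocalRing.of_ringEquiv (IsLocalization.localizationLocalizationAtPrimeIsoLocalization P.primeCompl p).toRingEquiv
  have : IsDomain (Localization.AtPrime P) := IsLocalization.isDomain_localization P.primeCompl_le_nonZeroDivisors
  let ψ : MvPolynomial (Fin d) k →ₐ[k] Localization.AtPrime P := IsScalarTower.toAlgHom _ _ _
  have hψ : ∀ p, ψ p = algebraMap _ _ p := fun p => rfl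
  have hinj : Function.Injective ψ := IsLocalization.injective _ P.primeCompl_le_nonZeroDivisors
  have hmap : P.map (algebraMap _ (Localization.AtPrime P)) = maximalIdeal _ := IsLocalization.AtPrime.map_eq_maximalIdeal _ _
  have hheight : (maximalIdeal (Localization.AtPrime P)).height = d := by
    have h1 := IsLocalization.AtPrime.ringKrullDim_eq_height P (Localization.AtPrime P)
    rw [← IsLocalRing.maximalIdeal_height_eq_ringKrullDim] at h1
    have h2 : P.height = d := by rw [hPe]; exact height_vars
    rw [h2] at h1
    exact_mod_cast h1
  have hI0 : I ≠ ⊥ := by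
    rintro rfl
    have : muE (⊥ : Ideal (Localization.AtPrime P)) ≤ (0 : ℕ) := (muE_le_iff _ _).2 ⟨∅, by simp, by simp⟩
    rw [hmu] at this
    norm_cast at this
  have hcmem : ∀ p, ψ p - algebraMap k _ (MvPolynomial.constantCoeff p) ∈ maximalIdeal (Localization.AtPrime P) := by
    intro p
    have h1 := Ideal.mem_map_of_mem (algebraMap _ (Localization.AtPrime P)) (hPe ▸ sub_const_mem p : _ ∈ P)
    rw [hmap, map_sub] at h1
    exact h1
  have hres : ∀ y : Localization.AtPrime P, ∃ c : k, y - algebraMap k _ c ∈ maximalIdeal (Localization.AtPrime P) := by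
    intro y
    obtain ⟨p, s, rfl⟩ := IsLocalization.exists_mk'_eq P.primeCompl y
    have hs : IsUnit (ψ s) := IsLocalization.map_units _ s
    have hs0 : MvPolynomial.constantCoeff (s : MvPolynomial (Fin d) k) ≠ 0 := by
      intro h
      have := hcmem s
      rw [h, map_zero, sub_zero] at this
      exact (mem_maximalIdeal _).1 this hs
    refine ⟨MvPolynomial.constantCoeff p / MvPolynomial.constantCoeff (s : MvPolynomial (Fin d) k), ?_⟩
    rw [← Ideal.unit_mul_mem_iff_mem _ hs]
    have e1 : ψ s * IsLocalization.mk' (Localization.AtPrime P) p s = ψ p := IsLocalization.mk'_spec' _ _ _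
    have e2 : algebraMap k (Localization.AtPrime P) (MvPolynomial.constantCoeff (s : MvPolynomial (Fin d) k)) *
       algebraMap k (Localization.AtPrime P) (MvPolynomial.constantCoeff p / MvPolynomial.constantCoeff (s : MvPolynomial (Fin d) k))
        = algebraMap k (Localization.AtPrime P) (MvPolynomial.constantCoeff p) := by
      rw [← map_mul, mul_div_cancel₀ _ hs0]
    have := sub_mem (hcmem p) (Ideal.mul_mem_right (algebraMap k (Localization.AtPrime P) (MvPolynomial.constantCoeff p / MvPolynomial.constantCoeff (s : MvPolynomial (Fin d) k))) _ (hcmem s))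
    convert this using 1
    linear_combination e1 - e2
  obtain ⟨m, φ, ⟨-, π, hrange, hkerπ⟩, hlin⟩ := hφ
  choose p hp1 hp2 using hlin
  obtain ⟨b, hb⟩ := IsLocalization.exist_integer_multiples_of_finite P.primeCompl (fun i : Fin (d+1) => π (Pi.single i 1))
  choose B hB using hb
  have hbu : IsUnit (algebraMap _ (Localization.AtPrime P) (b : MvPolynomial (Fin d) k)) := IsLocalization.map_units _ b
  let a : Fin (d+1) → Localization.AtPrime P := fun i => ψ (B i)
  have ha : ∀ i, a i = algebraMap _ (Localization.AtPrime P) (b : MvPolynomial (Fin d) k) * π (Pi.single i 1) := by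
    intro i
    change algebraMap _ _ (B i) = _
    rw [hB, ← Algebra.smul_def]
  have hdot : ∀ w, dotProduct w a = algebraMap _ (Localization.AtPrime P) (b : MvPolynomial (Fin d) k) * π w := by
    intro w
    have e : w = ∑ i, w i • (Pi.single i 1 : Fin (d+1) → Localization.AtPrime P) := pi_eq_sum_univ' w
    conv_rhs => rw [e, map_sum, Finset.mul_sum]
    simp only [dotProduct, ha, map_smul, smul_eq_mul]
    exact Finset.sum_congr rfl fun i _ => by ring
  obtain ⟨H1, H2⟩ := Key k hd hheight hI0 hht hG hdepth
  have D : Dat k d m I a φ (fun i j t => (p i j).coeff (Finsupp.single t 1)) (fun t => ψ (MvPolynomial.X t)) := by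
    refine ⟨hres, ?_, ?_, ?_, ?_, hheight, hd, H1, H2⟩
    · have h0 := congrArg (Ideal.map (algebraMap _ (Localization.AtPrime P))) hPe
      rw [← hmap, h0, Ideal.map_span, ← Set.range_comp]; rfl
    · intro i j
      have hpe : p i j = ∑ t, MvPolynomial.C ((p i j).coeff (Finsupp.single t 1)) * MvPolynomial.X t := by
        ext e
        rw [MvPolynomial.coeff_sum]
        simp only [MvPolynomial.coeff_C_mul, MvPolynomial.coeff_X]
        by_cases he : e.degree = 1
        · obtain ⟨t, rfl⟩ : ∃ t, e = Finsupp.single t 1 := by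
            simpa [eq_comm] using (Finsupp.sum_eq_one_iff e).1 he
          rw [Finset.sum_eq_single t]
          · simp
          · intro t' _ ht'
            rw [if_neg, mul_zero]
            intro h
            exact ht' (Finsupp.single_left_injective one_ne_zero h)
          · simp
        · rw [(hp1 i j).coeff_eq_zero he]
          symm
          refine Finset.sum_eq_zero fun t _ => ?_
          rw [if_neg, mul_zero]
          rintro rfl
          simp at he
      rw [hp2]
      conv_lhs => rw [hpe, ← hψ, map_sum]
      simp only [map_mul, dotProduct, cl]
      rfl
    · ext y
      rw [mem_span_range_dot]
      simp only [dotProduct_comm a, hdot]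
      rw [← hrange]
      constructor
      · rintro ⟨w, rfl⟩
        obtain ⟨v, hv⟩ := hbu.exists_right_inv
        refine ⟨v • w, ?_⟩
        rw [map_smul, smul_eq_mul, ← mul_assoc, hv, one_mul]
      · rintro ⟨w, rfl⟩
        exact Ideal.mul_mem_left _ _ ⟨w, rfl⟩
    · intro w
      rw [hdot, hbu.mul_right_eq_zero, ← LinearMap.mem_ker, ← hkerπ]
      rfl
  exact D.final ψ hinj (fun i => rfl) B (fun i => rfl)

end P5

/-- Example 3.9: for an ideal of the localized polynomial ring presented by a matrix
of linear forms, with `μ(I) = d + 1`, `G_d` and the depth conditions,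
`core I = 𝔪·I`, and if `I` is integrally closed then so is `core I`. -/
theorem statement14 {k : Type u} [Field k] [Infinite k] (d : ℕ) (hd : 1 ≤ d)
    (hP : (Ideal.span
      (Set.range (MvPolynomial.X (R := k) (σ := Fin d)))).IsPrime) :
    letI := hP
    ∀ (I : Ideal (Localization.AtPrime
        (Ideal.span (Set.range (MvPolynomial.X (R := k) (σ := Fin d)))))) (g : ℕ),
      ht I = (g : WithBot ℕ∞) →
      muE I = ((d + 1 : ℕ) : ℕ∞) →
      Gcond I d →
      (∀ j : ℕ, 1 ≤ j → j ≤ d - g →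
        rDim ((Localization.AtPrime
            (Ideal.span (Set.range (MvPolynomial.X (R := k) (σ := Fin d))))) ⧸ I) + 1 ≤
          (qDepth (Localization.AtPrime
              (Ideal.span (Set.range (MvPolynomial.X (R := k) (σ := Fin d)))))
            (I ^ j) : WithBot ℕ∞) + (j : WithBot ℕ∞)) →
      (∃ (m : ℕ) (φ : Matrix (Fin (d + 1)) (Fin m) (Localization.AtPrime
          (Ideal.span (Set.range (MvPolynomial.X (R := k) (σ := Fin d)))))),
        Presents φ I ∧ ∀ i j, ∃ p : MvPolynomial (Fin d) k, p.IsHomogeneous 1 ∧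
          φ i j = algebraMap (MvPolynomial (Fin d) k)
            (Localization.AtPrime
              (Ideal.span (Set.range (MvPolynomial.X (R := k) (σ := Fin d))))) p) →
      core I = maximalIdeal (Localization.AtPrime
          (Ideal.span (Set.range (MvPolynomial.X (R := k) (σ := Fin d))))) * I ∧
        (IsIntClosedIdeal I → IsIntClosedIdeal (core I)) := by
  intro I g h1 h2 h3 h4 h5
  exact main_loc d hd _ rfl I g h1 h2 h3 h4 h5

end CPU
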